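/- arXiv:1612.04790 — 2 statements merged into one kernel-verified Lean document; each statement's English description precedes it below -/
import Mathlib

section
/- Every 2-vertex-connected simple graph G with minimum degree at least 3 has an open ear-decomposition with exactly φ(G) even ears in which every short ear is pendant. -/
open SimpleGraph

variable {V : Type*}

/-- An *ear* of a graph `G`: a walk of length at least `1` whose two endpoints may
coincide, but all of whose other vertices are distinct (from each other and from the
endpoints); i.e. the walk is an (open) path, or a cycle when the endpoints coincide. -/
structure Ear (G : SimpleGraph V) where
  a : V
  b : V
  walk : G.Walk a b
  length_pos : 1 ≤ walk.length
  ear : (a ≠ b ∧ walk.IsPath) ∨ (∃ h : a = b, (walk.copy rfl h.symm).IsCycle)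

namespace Ear

variable {G : SimpleGraph V}

/-- The set of vertices of an ear. -/
def vertices (P : Ear G) : Set V := {v | v ∈ P.walk.support}

/-- The (set of) endpoints of an ear. -/
def endpoints (P : Ear G) : Set V := {P.a, P.b}

/-- The set `in(P)` of internal vertices of an ear. -/
def internal (P : Ear G) : Set V := P.vertices \ P.endpoints

/-- The internal vertices of an ear, as a `Finset`. -/
def internalFinset [DecidableEq V] (P : Ear G) : Finset V :=
  P.walk.support.toFinset \ {P.a, P.b}

/-- The list of edges of an ear. -/
def edges (P : Ear G) : List (Sym2 V) := P.walk.edges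

/-- A *trivial* ear has a single edge. -/
def IsTrivial (P : Ear G) : Prop := P.walk.length = 1

/-- A *short* ear has `2` or `3` edges. -/
def IsShort (P : Ear G) : Prop := P.walk.length = 2 ∨ P.walk.length = 3

/-- A *long* ear has at least `4` edges. -/
def IsLong (P : Ear G) : Prop := 4 ≤ P.walk.length

/-- An *open* ear has distinct endpoints. -/
def IsOpen (P : Ear G) : Prop := P.a ≠ P.b

end Ear

/-- The trivial ear corresponding to a single edge `wy` of `G`. -/
def trivialEar (G : SimpleGraph V) {w y : V} (h : G.Adj w y) : Ear G where
  a := w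
  b := y
  walk := SimpleGraph.Walk.cons h SimpleGraph.Walk.nil
  length_pos := by simp
  ear := Or.inl ⟨h.ne, by simp [h.ne]⟩

/-- The set of vertices appearing in the root or in the first `i` ears (those with
index `< i`) of a putative ear-decomposition. -/
def priorVerts {G : SimpleGraph V} (root : V) (ears : List (Ear G)) (i : ℕ) : Set V :=
  insert root {v | ∃ j : Fin ears.length, (j : ℕ) < i ∧ v ∈ (ears.get j).vertices}

/-- An *ear-decomposition* of `G`: a root vertex `P₀` together with a sequence of ears
`P₁, …, P_k` such that each ear shares exactly its endpoints with the set of vertices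
appearing earlier, and every edge of `G` lies in exactly one ear. -/
structure EarDecomp (G : SimpleGraph V) where
  root : V
  ears : List (Ear G)
  endpoints_sub : ∀ i : Fin ears.length,
    (ears.get i).endpoints ⊆ priorVerts root ears (i : ℕ)
  internal_new : ∀ i : Fin ears.length,
    (ears.get i).internal ∩ priorVerts root ears (i : ℕ) = ∅
  edge_cover : ∀ e ∈ G.edgeSet, ∃! i : Fin ears.length, e ∈ (ears.get i).edges

namespace EarDecomp

variable {G : SimpleGraph V}

/-- An ear-decomposition is *open* if every ear except the first one is open. -/
def IsOpen (D : EarDecomp G) : Prop :=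
  ∀ i : Fin D.ears.length, 1 ≤ (i : ℕ) → (D.ears.get i).IsOpen

/-- The number of even ears of an ear-decomposition. -/
def evenEars (D : EarDecomp G) : ℕ :=
  D.ears.countP fun P => decide (Even P.walk.length)

/-- The ear with index `i` is *pendant*: it is nontrivial, and no other nontrivial ear
has an endpoint among its internal vertices. -/
def IsPendant (D : EarDecomp G) (i : Fin D.ears.length) : Prop :=
  ¬ (D.ears.get i).IsTrivial ∧
  ∀ j : Fin D.ears.length, j ≠ i → ¬ (D.ears.get j).IsTrivial →
    (D.ears.get j).a ∉ (D.ears.get i).internal ∧ (D.ears.get j).b ∉ (D.ears.get i).internal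

/-- A *nice* ear-decomposition: open, all short ears are pendant, and no edge of `G`
connects internal vertices of two different short ears. -/
def IsNice (D : EarDecomp G) : Prop :=
  D.IsOpen ∧
  (∀ i : Fin D.ears.length, (D.ears.get i).IsShort → D.IsPendant i) ∧
  (∀ i j : Fin D.ears.length, i ≠ j → (D.ears.get i).IsShort → (D.ears.get j).IsShort →
    ∀ u ∈ (D.ears.get i).internal, ∀ v ∈ (D.ears.get j).internal, ¬ G.Adj u v)

/-- The number `π` of pendant ears of an ear-decomposition. -/
noncomputable def numPendant (D : EarDecomp G) : ℕ :=
  letI := Classical.decPred fun i : Fin D.ears.length => D.IsPendant i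
  (Finset.univ.filter fun i : Fin D.ears.length => D.IsPendant i).card

/-- The set `E'` of edges lying in nontrivial ears of an ear-decomposition. -/
noncomputable def nontrivialEdges [DecidableEq V] (D : EarDecomp G) : Finset (Sym2 V) :=
  letI := Classical.decPred fun i : Fin D.ears.length => ¬ (D.ears.get i).IsTrivial
  (Finset.univ.filter fun i : Fin D.ears.length => ¬ (D.ears.get i).IsTrivial).biUnion
    fun i => (D.ears.get i).edges.toFinset

/-- The eardrum `M` arising from the pendant short ears of an ear-decomposition: for each
pendant `2`-ear its internal vertex, and for each pendant `3`-ear the pair of its internal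
vertices (joined by an edge). -/
noncomputable def eardrum [DecidableEq V] (D : EarDecomp G) : Finset (Finset V) :=
  letI := Classical.decPred fun i : Fin D.ears.length =>
    (D.ears.get i).IsShort ∧ D.IsPendant i
  ((Finset.univ.filter fun i : Fin D.ears.length =>
      (D.ears.get i).IsShort ∧ D.IsPendant i).image
    fun i => (D.ears.get i).internalFinset)

/-- The set `V_I` of internal vertices of the non-pendant ears (including the root). -/
noncomputable def VI [DecidableEq V] (D : EarDecomp G) : Finset V :=
  letI := Classical.decPred fun i : Fin D.ears.length => D.IsPendant i
  insert D.root ((Finset.univ.filter fun i : Fin D.ears.length => ¬ D.IsPendant i).biUnion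
    fun i => (D.ears.get i).internalFinset)

end EarDecomp

/-- `φ(G)`: the minimum number of even ears over all ear-decompositions of `G`. -/
noncomputable def phi (G : SimpleGraph V) : ℕ :=
  sInf {n | ∃ D : EarDecomp G, D.evenEars = n}

/-- A graph is 2-vertex-connected if it has at least `3` vertices and deleting any single
vertex leaves a connected graph. -/
def TwoVertexConnected {W : Type*} (G : SimpleGraph W) : Prop :=
  3 ≤ Nat.card W ∧ ∀ v : W, (G.induce ({v}ᶜ : Set W)).Connected

/-- `OPT_2VC(G)`: the minimum number of edges of a 2-vertex-connected spanning subgraph. -/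
noncomputable def OPT2VC {W : Type*} (G : SimpleGraph W) : ℕ :=
  sInf {n | ∃ H : SimpleGraph W, H ≤ G ∧ TwoVertexConnected H ∧ H.edgeSet.ncard = n}

/-- An *eardrum* in `G`: a set of pairwise vertex-disjoint subgraphs, each consisting of a
single vertex or a single edge (encoded by their vertex sets). -/
def IsEardrum [DecidableEq V] (G : SimpleGraph V) (M : Finset (Finset V)) : Prop :=
  (∀ f ∈ M, (∃ v, f = {v}) ∨ (∃ u v, G.Adj u v ∧ f = {u, v})) ∧
  ∀ f ∈ M, ∀ g ∈ M, f ≠ g → Disjoint f g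

/-- `V(M)`: the set of vertices of the members of an eardrum. -/
def eardrumVerts (M : Finset (Finset V)) : Set V := {v | ∃ f ∈ M, v ∈ f}

/-- An *earmuff* for the eardrum `M`: a collection of paths `P_f`, for `f` in a subset
`F ⊆ M` (here given as a duplicate-free list of pairs `(f, P_f)`), such that each `P_f` is
a path whose set of internal vertices is exactly the vertex set of `f` (containing the
edge of `f` when `f` is an edge), whose two distinct endpoints lie outside `V(M)`, and
such that the union of all the paths is a forest. -/
structure Earmuff (G : SimpleGraph V) (M : Finset (Finset V)) where
  pairs : List (Finset V × Ear G)
  nodup_fst : (pairs.map Prod.fst).Nodup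
  mem_M : ∀ pr ∈ pairs, pr.1 ∈ M
  is_path : ∀ pr ∈ pairs, pr.2.a ≠ pr.2.b ∧ pr.2.walk.IsPath
  internal_eq : ∀ pr ∈ pairs, pr.2.internal = ↑pr.1
  edge_mem : ∀ pr ∈ pairs, ∀ u v : V, u ∈ pr.1 → v ∈ pr.1 → u ≠ v → s(u, v) ∈ pr.2.edges
  ends_outside : ∀ pr ∈ pairs, pr.2.a ∉ eardrumVerts M ∧ pr.2.b ∉ eardrumVerts M
  forest : (SimpleGraph.fromEdgeSet {e : Sym2 V | ∃ pr ∈ pairs, e ∈ pr.2.edges}).IsAcyclic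

/-- `µ(G, M)`: the maximum size of an earmuff for `M` in `G`. -/
noncomputable def mu (G : SimpleGraph V) (M : Finset (Finset V)) : ℕ :=
  sSup {n | ∃ em : Earmuff G M, em.pairs.length = n}

structure PE (V : Type*) where
  a : V
  l : List V
  b : V

namespace PE

def rev {V : Type*} (P : PE V) : PE V := ⟨P.b, P.l.reverse, P.a⟩

def inn {V : Type*} (L : List (PE V)) : Set V := {v | ∃ P ∈ L, v ∈ P.l}

@[simp] lemma inn_nil {V : Type*} : inn ([] : List (PE V)) = ∅ := by simp [inn]
@[simp] lemma mem_inn_cons {V : Type*} (P : PE V) (L : List (PE V)) (v : V) :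
    v ∈ inn (P :: L) ↔ v ∈ P.l ∨ v ∈ inn L := by simp [inn]
@[simp] lemma mem_inn_append {V : Type*} (L M : List (PE V)) (v : V) :
    v ∈ inn (L ++ M) ↔ v ∈ inn L ∨ v ∈ inn M := by
  simp only [inn, Set.mem_ofPred_eq, List.mem_append]; grind

/-- an ear attached to `S`, with interior avoiding `F`. -/
structure Fits {V : Type*} (G : SimpleGraph V) (S F : Set V) (P : PE V) : Prop where
  ha : P.a ∈ S
  hb : P.b ∈ S
  av : ∀ v ∈ P.l, v ∉ F
  nd : P.l.Nodup
  ch : List.IsChain G.Adj (P.a :: P.l ++ [P.b])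
  cl : P.a = P.b → 2 ≤ P.l.length

def Valid {V : Type*} (G : SimpleGraph V) : Set V → Set V → List (PE V) → Prop
  | _, _, [] => True
  | S, F, P :: L => Fits G S F P ∧ Valid G (S ∪ {v | v ∈ P.l}) (F ∪ {v | v ∈ P.l}) L

def evs {V : Type*} (L : List (PE V)) : ℕ := (L.map fun P => P.l.length % 2).sum
open Classical in
noncomputable def cls {V : Type*} (L : List (PE V)) : ℕ :=
  (L.map fun P => if P.a = P.b then 1 else 0).sum
def cts {V : Type*} (L : List (PE V)) : ℕ := (L.map fun P => min P.l.length 1).sum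

section
variable {V : Type*} {G : SimpleGraph V}

@[simp] lemma evs_nil : evs ([] : List (PE V)) = 0 := rfl
@[simp] lemma evs_cons (P : PE V) (L) : evs (P :: L) = P.l.length % 2 + evs L := by simp [evs]
@[simp] lemma evs_append (L M : List (PE V)) : evs (L ++ M) = evs L + evs M := by simp [evs]
@[simp] lemma cts_nil : cts ([] : List (PE V)) = 0 := rfl
@[simp] lemma cts_cons (P : PE V) (L) : cts (P :: L) = min P.l.length 1 + cts L := by simp [cts]
@[simp] lemma cts_append (L M : List (PE V)) : cts (L ++ M) = cts L + cts M := by simp [cts]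
@[simp] lemma cls_nil : cls ([] : List (PE V)) = 0 := rfl
open Classical in
@[simp] lemma cls_cons (P : PE V) (L) : cls (P :: L) = (if P.a = P.b then 1 else 0) + cls L := by
  simp [cls]
@[simp] lemma cls_append (L M : List (PE V)) : cls (L ++ M) = cls L + cls M := by simp [cls]

lemma Fits.mono {S F S' F' : Set V} {P : PE V} (h : Fits G S F P) (hS : S ⊆ S') (hF : F' ⊆ F) :
    Fits G S' F' P :=
  ⟨hS h.ha, hS h.hb, fun v hv hf => h.av v hv (hF hf), h.nd, h.ch, h.cl⟩

lemma Valid.mono {L : List (PE V)} : ∀ {S F S' F' : Set V}, Valid G S F L → S ⊆ S' → F' ⊆ F →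
    Valid G S' F' L := by
  induction L with
  | nil => intros; trivial
  | cons P L ih =>
    intro S F S' F' h hS hF
    exact ⟨h.1.mono hS hF, ih h.2 (Set.union_subset_union_left _ hS)
      (Set.union_subset_union_left _ hF)⟩

lemma valid_append {L M : List (PE V)} : ∀ {S F : Set V}, Valid G S F (L ++ M) ↔
    Valid G S F L ∧ Valid G (S ∪ inn L) (F ∪ inn L) M := by
  induction L with
  | nil => intro S F; simp [Valid]
  | cons P L ih =>
    intro S F
    have e : ∀ X : Set V, X ∪ {v | v ∈ P.l} ∪ inn L = X ∪ inn (P :: L) := by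
      intro X; ext v; simp; tauto
    simp only [List.cons_append, Valid, ih, e, and_assoc]

lemma chain_rev {p q : V} {m : List V} (h : List.IsChain G.Adj (p :: m ++ [q])) :
    List.IsChain G.Adj (q :: m.reverse ++ [p]) := by
  have e : (fun a b => G.Adj b a) = G.Adj := by
    funext a b; exact propext (G.adj_comm b a)
  have := (List.isChain_reverse (R := G.Adj) (l := (p :: m ++ [q]))).2 (by rw [e]; exact h)
  simpa using this

lemma Fits.rev {S F : Set V} {P : PE V} (h : Fits G S F P) : Fits G S F P.rev := by
  refine ⟨h.hb, h.ha, ?_, ?_, ?_, ?_⟩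
  · simpa [PE.rev] using h.av
  · simpa [PE.rev] using h.nd
  · exact chain_rev h.ch
  · intro e; simpa [PE.rev] using h.cl e.symm

/-- interiors avoid everything in F -/
lemma Valid.avoid {L : List (PE V)} : ∀ {S F : Set V}, Valid G S F L → ∀ v ∈ inn L, v ∉ F := by
  induction L with
  | nil => intro S F h v hv; simp at hv
  | cons P L ih =>
    intro S F h v hv
    rcases (mem_inn_cons _ _ _).1 hv with hv | hv
    · exact h.1.av v hv
    · exact fun hf => ih h.2 v hv (Or.inl hf)

lemma Valid.ends {L : List (PE V)} : ∀ {S F : Set V}, Valid G S F L → ∀ Q ∈ L,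
    (Q.a ∈ S ∨ Q.a ∈ inn L) ∧ (Q.b ∈ S ∨ Q.b ∈ inn L) := by
  induction L with
  | nil => intro S F h Q hQ; simp at hQ
  | cons P L ih =>
    intro S F h Q hQ
    rcases List.mem_cons.1 hQ with rfl | hQ
    · exact ⟨Or.inl h.1.ha, Or.inl h.1.hb⟩
    · have := ih h.2 Q hQ
      simp only [mem_inn_cons, Set.mem_union, Set.mem_ofPred_eq] at this ⊢
      tauto

lemma Valid.enlarge {L : List (PE V)} : ∀ {S F X : Set V}, Valid G S F L → (∀ v ∈ inn L, v ∉ X) →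
    Valid G S (F ∪ X) L := by
  induction L with
  | nil => intros; trivial
  | cons P L ih =>
    intro S F X h hX
    refine ⟨⟨h.1.ha, h.1.hb, ?_, h.1.nd, h.1.ch, h.1.cl⟩, ?_⟩
    · intro v hv hf
      rcases hf with hf | hf
      · exact h.1.av v hv hf
      · exact hX v (by simp [hv]) hf
    · refine (ih h.2 (X := X) fun v hv => hX v (by simp [hv])).mono subset_rfl ?_
      intro v; simp; tauto

lemma Valid.restrict {L : List (PE V)} : ∀ {S F X : Set V}, Valid G (S ∪ X) F L →
    (∀ Q ∈ L, Q.a ∉ X ∧ Q.b ∉ X) → Valid G S F L := by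
  induction L with
  | nil => intros; trivial
  | cons P L ih =>
    intro S F X h hX
    have h0 := hX P (by simp)
    refine ⟨⟨?_, ?_, h.1.av, h.1.nd, h.1.ch, h.1.cl⟩, ?_⟩
    · have := h.1.ha; simp only [Set.mem_union] at this; tauto
    · have := h.1.hb; simp only [Set.mem_union] at this; tauto
    · refine ih (X := X) (h.2.mono ?_ subset_rfl) fun Q hQ => hX Q (by simp [hQ])
      intro v; simp; tauto

/-- path predicate: the chain/nodup part -/
lemma chain_join {p z q : V} {m l : List V} (h1 : List.IsChain G.Adj (p :: m ++ [z]))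
    (h2 : List.IsChain G.Adj (z :: l ++ [q])) :
    List.IsChain G.Adj (p :: (m ++ z :: l) ++ [q]) := by
  have : (p :: (m ++ z :: l) ++ [q]) = (p :: m) ++ z :: (l ++ [q]) := by simp
  rw [this, List.isChain_split]
  exact ⟨by simpa using h1, by simpa using h2⟩

lemma chain_split {p z q : V} {m l : List V}
    (h : List.IsChain G.Adj (p :: (m ++ z :: l) ++ [q])) :
    List.IsChain G.Adj (p :: m ++ [z]) ∧ List.IsChain G.Adj (z :: l ++ [q]) := by
  have : (p :: (m ++ z :: l) ++ [q]) = (p :: m) ++ z :: (l ++ [q]) := by simp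
  rw [this, List.isChain_split] at h
  exact ⟨by simpa using h.1, by simpa using h.2⟩

/-- split an ear at an interior vertex `z`, choosing a parity-good half. -/
lemma Fits.split {S F : Set V} {Q : PE V} (h : Fits G S F Q) {z : V} (hz : z ∈ Q.l) (m : ℕ) :
    ∃ p1 l1 l2 p2, Fits G S F ⟨p1, l1 ++ z :: l2, p2⟩ ∧
      ((p1 = Q.a ∧ p2 = Q.b) ∨ (p1 = Q.b ∧ p2 = Q.a)) ∧
      (∀ w, w ∈ Q.l ↔ (w ∈ l1 ∨ w = z ∨ w ∈ l2)) ∧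
      Q.l.length = l1.length + 1 + l2.length ∧
      (m + 1 + l2.length) % 2 + l1.length % 2 ≤ Q.l.length % 2 + m % 2 := by
  obtain ⟨s, t, e⟩ := List.append_of_mem hz
  by_cases hc : (m + 1 + t.length) % 2 + s.length % 2 ≤ Q.l.length % 2 + m % 2
  · refine ⟨Q.a, s, t, Q.b, ?_, by simp, by simp [e], by simp [e]; omega, hc⟩
    rw [← e]; exact h
  · have hr := h.rev
    refine ⟨Q.b, t.reverse, s.reverse, Q.a, ?_, by simp, ?_, by simp [e]; omega, ?_⟩
    · have : t.reverse ++ z :: s.reverse = Q.l.reverse := by simp [e]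
      rw [this]; exact hr
    · intro w; simp [e]; tauto
    · have e2 : Q.l.length = s.length + 1 + t.length := by simp [e]; omega
      rw [List.length_reverse, List.length_reverse]
      omega
end
end PE

namespace PE
section
variable {V : Type*} {G : SimpleGraph V}

lemma Fits.reroute {S F : Set V} {Q : PE V} (h : Fits G S F Q) {p z : V} {m : List V}
    (hz : z ∈ Q.l) (hm : m.Nodup) (hch : List.IsChain G.Adj (p :: m ++ [z]))
    (hav : ∀ w ∈ m, w ∉ F ∧ w ∉ Q.l) :
    ∃ p1 l1 m' p2, ((p1 = Q.a ∧ p2 = Q.b) ∨ (p1 = Q.b ∧ p2 = Q.a)) ∧ p1 ∈ S ∧ p2 ∈ S ∧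
      m'.Nodup ∧ List.IsChain G.Adj (p :: m' ++ [p2]) ∧ (∀ w ∈ m', w ∉ F) ∧
      l1.Nodup ∧ List.IsChain G.Adj (p1 :: l1 ++ [z]) ∧ (∀ w ∈ l1, w ∉ F ∧ w ∉ m') ∧
      (∀ w, (w ∈ Q.l ∨ w ∈ m) ↔ (w ∈ l1 ∨ w ∈ m')) ∧ z ∈ m' ∧
      m'.length % 2 + l1.length % 2 ≤ Q.l.length % 2 + m.length % 2 ∧ m.length + 1 ≤ m'.length := by
  obtain ⟨p1, l1, l2, p2, hf, hp, hw, hl, hpar⟩ := h.split hz m.length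
  have hnd := hf.nd
  have hc := chain_split hf.ch
  have hmem : ∀ w, w ∈ l1 ∨ w = z ∨ w ∈ l2 → w ∉ F := fun w hw' => h.av w ((hw w).2 hw')
  simp only [List.nodup_append, List.nodup_cons, List.mem_cons] at hnd
  refine ⟨p1, l1, m ++ z :: l2, p2, hp, hf.ha, hf.hb, ?_, chain_join hch hc.2, ?_, hnd.1, hc.1, ?_, ?_,
    by simp, ?_, by simp⟩
  · simp only [List.nodup_append, List.nodup_cons, List.mem_cons]
    grind
  · intro w hw'; simp only [List.mem_append, List.mem_cons] at hw'
    rcases hw' with h1 | h1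
    · exact (hav w h1).1
    · exact hmem w (by grind)
  · intro w hw'
    refine ⟨hmem w (Or.inl hw'), ?_⟩
    simp only [List.mem_append, List.mem_cons]
    grind
  · intro w; simp only [List.mem_append, List.mem_cons, hw]; grind
  · simp only [List.length_append, List.length_cons]
    have : m.length + (l2.length + 1) = m.length + 1 + l2.length := by ring
    rw [this]; exact hpar

lemma valid_snoc {L : List (PE V)} {Q : PE V} {S F : Set V} :
    Valid G S F (L ++ [Q]) ↔ Valid G S F L ∧ Fits G (S ∪ inn L) (F ∪ inn L) Q := by
  rw [valid_append]; simp [Valid]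

set_option maxHeartbeats 1000000 in
lemma claimA {v : V} {C : PE V} (hCa : C.a = v) (hCb : C.b = v) (D : List (PE V)) :
    ∀ {S F : Set V} {p z : V} {m : List V}, S ⊆ F → Valid G S F (C :: D) →
    (∀ Q ∈ D, (Q.a ∈ S → Q.a = v) ∧ (Q.b ∈ S → Q.b = v)) → p ∈ S → p ≠ v →
    z ∈ inn (C :: D) → m.Nodup → List.IsChain G.Adj (p :: m ++ [z]) →
    (∀ w ∈ m, w ∉ F ∧ w ∉ inn (C :: D)) →
    ∃ L', Valid G S F L' ∧ (∀ w, w ∈ inn L' ↔ w ∈ inn (C :: D) ∨ w ∈ m) ∧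
      evs L' ≤ evs (C :: D) + m.length % 2 ∧ cls L' < cls (C :: D) := by
  induction D using List.reverseRecOn with
  | nil =>
    intro S F p z m hSF hV hD hp hpv hz hm hch hav
    have hz' : z ∈ C.l := by simpa using hz
    obtain ⟨p1, l1, m', p2, hpp, -, -, hm', hch', hav', hl1, hc1, ha1, hmem, hzm, hpar, -⟩ :=
      hV.1.reroute hz' hm hch (by simpa using hav)
    have e1 : p1 = v := by rcases hpp with h | h <;> simp [h, hCa, hCb]
    have e2 : p2 = v := by rcases hpp with h | h <;> simp [h, hCa, hCb]
    subst e1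
    have hvS : p1 ∈ S := hCa ▸ hV.1.ha
    have hzv : p1 ≠ z := fun e => hav' z hzm (hSF (e ▸ hvS))
    refine ⟨[⟨p, m', p2⟩, ⟨p1, l1, z⟩], ⟨⟨hp, e2 ▸ hvS, hav', hm', hch', ?_⟩, ⟨?_, ?_, ?_, hl1, hc1, ?_⟩,
      trivial⟩, ?_, ?_, ?_⟩
    · intro e; exact absurd (e.trans e2) hpv
    · exact Or.inl hvS
    · exact Or.inr hzm
    · intro w hw hf
      rcases hf with hf | hf
      · exact (ha1 w hw).1 hf
      · exact (ha1 w hw).2 hf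
    · intro e; exact absurd e hzv
    · intro w; have := hmem w; simp only [mem_inn_cons, inn_nil, Set.mem_empty_iff_false]; grind
    · simp; omega
    · simp [hCa, hCb, hzv, e2, hpv]
  | append_singleton D Q ih =>
    intro S F p z m hSF hV hD hp hpv hz hm hch hav
    have hV' : Valid G S F ((C :: D) ++ [Q]) := hV
    rw [valid_snoc] at hV'
    obtain ⟨hV1, hQ⟩ := hV'
    have hvS : v ∈ S := hCa ▸ hV.1.ha
    have hD1 : ∀ Q ∈ D, (Q.a ∈ S → Q.a = v) ∧ (Q.b ∈ S → Q.b = v) :=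
      fun Q hQ => hD Q (by simp [hQ])
    have hcons : ∀ w, w ∈ inn (C :: (D ++ [Q])) ↔ w ∈ inn (C :: D) ∨ w ∈ Q.l := by
      intro w; simp; grind
    have hev : evs (C :: (D ++ [Q])) = evs (C :: D) + Q.l.length % 2 := by simp; omega
    have hcl : cls (C :: D) ≤ cls (C :: (D ++ [Q])) := by simp
    simp only [hcons] at hz hav ⊢
    by_cases hzQ : z ∈ Q.l
    · obtain ⟨p1, l1, m', p2, hpp, hp1, hp2, hm', hch', hav', hl1, hc1, ha1, hmem, hzm, hpar, -⟩ :=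
        hQ.reroute hzQ hm hch (fun w hw => by
          have := hav w hw
          simp only [Set.mem_union]; grind)
      have hzF : z ∉ F := fun h => hav' z hzm (Or.inl h)
      have hzT : z ∉ inn (C :: D) := fun h => hav' z hzm (Or.inr h)
      have hp1z : p1 ≠ z := by
        rintro rfl
        rcases hp1 with h | h
        · exact hzF (hSF h)
        · exact hzT h
      have hDQ := hD Q (by simp)
      have hp1v : p1 ∈ S → p1 = v := by rcases hpp with h | h <;> rw [h.1] <;> grind
      have hp2v : p2 ∈ S → p2 = v := by rcases hpp with h | h <;> rw [h.2] <;> grind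
      by_cases hp2T : p2 ∈ inn (C :: D)
      · obtain ⟨L, hL, hLm, hLe, hLc⟩ := ih (S := S) (F := F) (p := p) (z := p2) (m := m') hSF hV1 hD1 hp hpv
          hp2T hm' hch' (fun w hw => ⟨fun h => hav' w hw (Or.inl h), fun h => hav' w hw (Or.inr h)⟩)
        refine ⟨L ++ [⟨p1, l1, z⟩], valid_snoc.2 ⟨hL, ?_, ?_, ?_, hl1, hc1, fun e => absurd e hp1z⟩, ?_, ?_, ?_⟩
        · rcases hp1 with h | h
          · exact Or.inl h
          · exact Or.inr ((hLm _).2 (Or.inl h))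
        · exact Or.inr ((hLm _).2 (Or.inr hzm))
        · intro w hw hf
          have := ha1 w hw
          simp only [Set.mem_union, hLm] at this hf
          grind
        · intro w; have := hmem w; simp [hLm]; grind
        · rw [hev]; simp at hLe ⊢; omega
        · simp [hp1z] at hLc ⊢; omega
      · have e2 : p2 = v := by
          rcases hp2 with h | h
          · exact hp2v h
          · exact absurd h hp2T
        have hpp2 : p ≠ p2 := fun e => hpv (e.trans e2)
        by_cases hp1T : p1 ∈ inn (C :: D)
        · -- use the other half
          have hV2 : Valid G (S ∪ {w | w ∈ m'}) (F ∪ {w | w ∈ m'}) (C :: D) :=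
            (hV1.mono Set.subset_union_left subset_rfl).enlarge
              (fun w hw hw' => hav' w hw' (Or.inr hw))
          obtain ⟨L, hL, hLm, hLe, hLc⟩ := ih (S := S ∪ {w | w ∈ m'}) (F := F ∪ {w | w ∈ m'}) (p := z)
            (z := p1) (m := l1.reverse)
            (Set.union_subset_union_left _ hSF) hV2 (by
              intro Q' hQ'
              have h1 := hD1 Q' hQ'
              have h2 := hV1.ends Q' (by simp [hQ'])
              have h3 : ∀ w, w ∈ m' → w ∉ inn (C :: D) := fun w hw h => hav' w hw (Or.inr h)
              have h4 : ∀ w, w ∈ m' → w ∉ S := fun w hw h => hav' w hw (Or.inl (hSF h))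
              have a1 := h3 Q'.a
              have a2 := h3 Q'.b
              have a3 := h4 Q'.a
              have a4 := h4 Q'.b
              simp only [Set.mem_union, Set.mem_ofPred_eq]
              constructor <;> rintro (h | h) <;> grind)
            (Or.inr hzm) (fun e => hzF (hSF (e ▸ hvS))) hp1T (List.nodup_reverse.2 hl1) (chain_rev hc1)
            (by
              intro w hw
              have := ha1 w (List.mem_reverse.1 hw)
              simp only [Set.mem_union, Set.mem_ofPred_eq] at this ⊢
              grind)
          refine ⟨⟨p, m', p2⟩ :: L, ⟨⟨hp, e2 ▸ hvS, fun w hw h => hav' w hw (Or.inl h), hm', hch',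
            fun e => absurd e hpp2⟩, hL⟩, ?_, ?_, ?_⟩
          · intro w; have := hmem w; simp only [mem_inn_cons] at hLm; simp [hLm]; grind
          · rw [hev]; simp at hLe ⊢; omega
          · simp [hpp2] at hLc ⊢; omega
        · have e1 : p1 = v := by
            rcases hp1 with h | h
            · exact hp1v h
            · exact absurd h hp1T
          have hQc : Q.a = Q.b := by
            rcases hpp with h | h
            · rw [← h.1, ← h.2, e1, e2]
            · rw [← h.1, ← h.2, e1, e2]
          refine ⟨(C :: D) ++ [⟨p, m', p2⟩, ⟨p1, l1, z⟩], valid_append.2 ⟨hV1, ⟨Or.inl hp, hp2, hav', hm',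
            hch', fun e => absurd e hpp2⟩, ⟨Or.inl hp1, ?_, ?_, hl1, hc1, fun e => absurd e hp1z⟩,
            trivial⟩, ?_, ?_, ?_⟩
          · exact Or.inr hzm
          · intro w hw hf
            rcases hf with hf | hf
            · exact (ha1 w hw).1 hf
            · exact (ha1 w hw).2 hf
          · intro w; have := hmem w; simp; grind
          · rw [hev]; simp; omega
          · simp [hp1z, hpp2, hQc]
    · have hzT : z ∈ inn (C :: D) := by grind
      obtain ⟨L, hL, hLm, hLe, hLc⟩ := ih (S := S) (F := F) (p := p) (z := z) (m := m) hSF hV1 hD1 hp hpv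
          hzT hm hch (fun w hw => ⟨(hav w hw).1, fun h => (hav w hw).2 (Or.inl h)⟩)
      refine ⟨L ++ [Q], valid_snoc.2 ⟨hL, ?_⟩, ?_, ?_, ?_⟩
      · refine ⟨?_, ?_, ?_, hQ.nd, hQ.ch, hQ.cl⟩
        · have := hQ.ha; simp only [Set.mem_union, hLm] at this ⊢; grind
        · have := hQ.hb; simp only [Set.mem_union, hLm] at this ⊢; grind
        · intro w hw
          have := hQ.av w hw
          have := hav w
          simp only [Set.mem_union, hLm] at *; grind
      · intro w; simp [hLm]; grind
      · rw [hev]; simp at hLe ⊢; omega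
      · simp at hLc ⊢; omega

end
end PE

namespace PE
section
variable {V : Type*} {G : SimpleGraph V}

lemma exists_cross {X : Set V} {v : V} (hc : (G.induce ({v}ᶜ : Set V)).Connected) {a b : V}
    (ha : a ≠ v) (hb : b ≠ v) (haX : a ∈ X) (hbX : b ∉ X) :
    ∃ s t, s ≠ v ∧ t ≠ v ∧ s ∈ X ∧ t ∉ X ∧ G.Adj s t := by
  obtain ⟨w⟩ := hc.preconnected ⟨a, by simpa using ha⟩ ⟨b, by simpa using hb⟩
  obtain ⟨d, hd, h1, h2⟩ := w.exists_boundary_dart {x | x.1 ∈ X} haX hbX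
  exact ⟨d.fst.1, d.snd.1, Set.mem_compl_singleton_iff.1 d.fst.2, Set.mem_compl_singleton_iff.1 d.snd.2, h1, h2, d.adj⟩

lemma localA (hG : ∀ v : V, (G.induce ({v}ᶜ : Set V)).Connected) {v : V} {C : PE V}
    (hCa : C.a = v) (hCb : C.b = v) (B : List (PE V)) :
    ∀ {S : Set V} {D : List (PE V)}, Valid G S S (C :: D ++ B) →
    (∀ Q ∈ D, (Q.a ∈ S → Q.a = v) ∧ (Q.b ∈ S → Q.b = v)) →
    (∃ s ∈ S, s ≠ v) → (∀ w, w ∈ S ∨ w ∈ inn (C :: D ++ B)) →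
    ∃ L', Valid G S S L' ∧ (∀ w, w ∈ inn L' ↔ w ∈ inn (C :: D ++ B)) ∧
      evs L' ≤ evs (C :: D ++ B) ∧ cls L' < cls (C :: D ++ B) := by
  induction B with
  | nil =>
    intro S D hV hD hs hcov
    rw [List.append_nil] at *
    obtain ⟨s, hs, hsv⟩ := hs
    have hvS : v ∈ S := hCa ▸ hV.1.ha
    have hne : 2 ≤ C.l.length := hV.1.cl (hCa.trans hCb.symm)
    obtain ⟨c, hc⟩ : ∃ c, c ∈ C.l := by
      cases h : C.l with
      | nil => simp [h] at hne
      | cons x y => exact ⟨x, by simp⟩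
    have hcS := hV.1.av c hc
    obtain ⟨p, z, hpv, hzv, hp, hz, hadj⟩ := exists_cross (hG v) (X := S) (b := c) hsv
      (fun e => hcS (e ▸ hvS)) hs hcS
    obtain ⟨L, h1, h2, h3, h4⟩ := claimA hCa hCb D (p := p) (z := z) (m := []) subset_rfl hV hD hp hpv
      ((hcov z).resolve_left hz) (by simp) (by simpa using hadj) (by simp)
    exact ⟨L, h1, by simpa using h2, by simpa using h3, h4⟩
  | cons Q B ih =>
    intro S D hV hD hs hcov
    have hvS : v ∈ S := hCa ▸ hV.1.ha
    have hV' := hV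
    rw [valid_append] at hV'
    obtain ⟨hV1, hQ, hB⟩ := hV'
    have key : ∀ Q' : PE V, Fits G (S ∪ inn (C :: D)) (S ∪ inn (C :: D)) Q' → (∀ w, w ∈ Q'.l ↔ w ∈ Q.l) →
        Q'.l.length = Q.l.length → Q'.a ∈ S → Q'.a ≠ v → Q'.b ∉ S →
        ∃ L', Valid G S S L' ∧ (∀ w, w ∈ inn L' ↔ w ∈ inn (C :: D ++ Q :: B)) ∧
          evs L' ≤ evs (C :: D ++ Q :: B) ∧ cls L' < cls (C :: D ++ Q :: B) := by
      intro Q' hQ' hmem hlen ha hav hb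
      obtain ⟨L, h1, h2, h3, h4⟩ := claimA hCa hCb D (p := Q'.a) (z := Q'.b) (m := Q'.l) subset_rfl
        hV1 hD ha hav (hQ'.hb.resolve_left hb) hQ'.nd hQ'.ch
        (fun w hw => ⟨fun h => hQ'.av w hw (Or.inl h), fun h => hQ'.av w hw (Or.inr h)⟩)
      refine ⟨L ++ B, valid_append.2 ⟨h1, hB.mono ?_ ?_⟩, ?_, ?_, ?_⟩
      · intro w; simp only [Set.mem_union, h2, hmem, Set.mem_ofPred_eq]; tauto
      · intro w; simp only [Set.mem_union, h2, hmem, Set.mem_ofPred_eq]; tauto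
      · intro w; simp only [mem_inn_append, h2, hmem, mem_inn_cons]; tauto
      · rw [hlen] at h3; simp at h3 ⊢; omega
      · simp at h4 ⊢; omega
    have step1 : (Q.a ∈ S → Q.a = v) → (Q.b ∈ S → Q.b = v) →
        ∃ L', Valid G S S L' ∧ (∀ w, w ∈ inn L' ↔ w ∈ inn (C :: D ++ Q :: B)) ∧
          evs L' ≤ evs (C :: D ++ Q :: B) ∧ cls L' < cls (C :: D ++ Q :: B) := by
      intro ha hb
      have e : C :: D ++ Q :: B = C :: (D ++ [Q]) ++ B := by simp
      rw [e] at hV hcov ⊢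
      apply ih hV _ hs hcov
      intro Q' hQ'
      rcases List.mem_append.1 hQ' with h | h
      · exact hD _ h
      · obtain rfl : Q' = Q := by simpa using h
        exact ⟨ha, hb⟩
    by_cases ha : Q.a ∈ S <;> by_cases hb : Q.b ∈ S
    · -- move Q to the front
      have hfit : Fits G S S Q := ⟨ha, hb, fun w hw h => hQ.av w hw (Or.inl h), hQ.nd, hQ.ch, hQ.cl⟩
      have hCD : Valid G (S ∪ {w | w ∈ Q.l}) (S ∪ {w | w ∈ Q.l}) (C :: D) :=
        (hV1.mono Set.subset_union_left subset_rfl).enlarge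
          (fun w hw hw' => hQ.av w hw' (Or.inr hw))
      obtain ⟨L, h1, h2, h3, h4⟩ := ih (S := S ∪ {w | w ∈ Q.l}) (D := D)
        (valid_append.2 ⟨hCD, hB.mono
          (by intro w; simp only [Set.mem_union]; tauto) (by intro w; simp only [Set.mem_union]; tauto)⟩)
        (by
          intro Q' hQ'
          have a1 := hD _ hQ'
          have a2 := hV1.ends Q' (by simp [hQ'])
          have a3 : ∀ w ∈ Q.l, w ∉ S ∧ w ∉ inn (C :: D) := fun w hw =>
            ⟨fun h => hQ.av w hw (Or.inl h), fun h => hQ.av w hw (Or.inr h)⟩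
          have a4 := a3 Q'.a
          have a5 := a3 Q'.b
          simp only [Set.mem_union, Set.mem_ofPred_eq]
          constructor <;> rintro (h | h) <;> tauto)
        (by obtain ⟨s, h, h'⟩ := hs; exact ⟨s, Or.inl h, h'⟩)
        (by
          intro w
          have := hcov w
          simp only [mem_inn_append, mem_inn_cons, Set.mem_union, Set.mem_ofPred_eq] at this ⊢
          tauto)
      refine ⟨Q :: L, ⟨hfit, h1⟩, ?_, ?_, ?_⟩
      · intro w
        simp only [mem_inn_append, mem_inn_cons, h2]; tauto
      · simp at h3 ⊢; omega
      · simp at h4 ⊢; omega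
    · by_cases hav : Q.a = v
      · exact step1 (fun _ => hav) (fun h => absurd h hb)
      · exact key Q hQ (by simp) rfl ha hav hb
    · by_cases hbv : Q.b = v
      · exact step1 (fun h => absurd h ha) (fun _ => hbv)
      · exact key Q.rev hQ.rev (by simp [PE.rev]) (by simp [PE.rev]) hb hbv ha
    · exact step1 (fun h => absurd h ha) (fun h => absurd h hb)

lemma openA (hG : ∀ v : V, (G.induce ({v}ᶜ : Set V)).Connected) :
    ∀ (c n : ℕ) (L : List (PE V)) (S : Set V), cls L = c → L.length = n → Valid G S S L →
    (∃ s ∈ S, ∃ t ∈ S, s ≠ t) → (∀ w, w ∈ S ∨ w ∈ inn L) →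
    ∃ L', Valid G S S L' ∧ (∀ w, w ∈ S ∨ w ∈ inn L') ∧ evs L' ≤ evs L ∧ ∀ Q ∈ L', Q.a ≠ Q.b := by
  intro c
  induction c using Nat.strong_induction_on with
  | _ c ihc =>
  intro n
  induction n with
  | zero =>
    intro L S hc hn hV hs hcov
    obtain rfl := List.length_eq_zero_iff.1 hn
    exact ⟨[], trivial, hcov, le_rfl, by simp⟩
  | succ n ihn =>
    intro L S hc hn hV hs hcov
    obtain ⟨P, B, rfl⟩ := List.exists_cons_of_length_eq_add_one hn
    by_cases hP : P.a = P.b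
    · obtain ⟨L, h1, h2, h3, h4⟩ := localA hG (C := P) rfl hP.symm B (S := S) (D := []) hV (by simp)
        (by
          obtain ⟨s, hs, t, ht, hst⟩ := hs
          by_cases h : s = P.a
          · exact ⟨t, ht, fun e => hst (h.trans e.symm)⟩
          · exact ⟨s, hs, h⟩) hcov
      obtain ⟨L', g1, g2, g3, g4⟩ := ihc (cls L) (by rw [← hc]; exact h4) _ L S rfl rfl h1 hs
        (fun w => by rw [h2]; exact hcov w)
      exact ⟨L', g1, g2, g3.trans h3, g4⟩
    · obtain ⟨L', g1, g2, g3, g4⟩ := ihn B (S ∪ {w | w ∈ P.l}) (by simpa [hP] using hc)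
        (by simpa using hn) hV.2
        (by obtain ⟨s, hs, t, ht, hst⟩ := hs; exact ⟨s, Or.inl hs, t, Or.inl ht, hst⟩)
        (by
          intro w; have := hcov w
          simp only [mem_inn_cons, Set.mem_union, Set.mem_ofPred_eq] at this ⊢; tauto)
      refine ⟨P :: L', ⟨hV.1, g1⟩, ?_, by simpa using g3, ?_⟩
      · intro w; have := g2 w
        simp only [mem_inn_cons, Set.mem_union, Set.mem_ofPred_eq] at this ⊢; tauto
      · intro Q hQ
        rcases List.mem_cons.1 hQ with rfl | h
        · exact hP
        · exact g4 _ h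

end
end PE

namespace PE
section
variable {V : Type*} {G : SimpleGraph V}

set_option maxHeartbeats 1000000 in
lemma claimB1 {x u v y : V} (hxy : x ≠ y) (D : List (PE V)) :
    ∀ {S F : Set V} {p z : V} {m : List V}, S ⊆ F → Valid G S F (⟨x, [u, v], y⟩ :: D) →
    (∀ Q ∈ D, (Q.a ∈ S → Q.a = x) ∧ (Q.b ∈ S → Q.b = x) ∧ Q.a ≠ u ∧ Q.b ≠ u ∧ Q.a ≠ Q.b) →
    p ∈ S → p ≠ x →
    z = v ∨ z ∈ inn D → m.Nodup → List.IsChain G.Adj (p :: m ++ [z]) →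
    (∀ w ∈ m, w ∉ F ∧ w ≠ u ∧ w ≠ v ∧ w ∉ inn D) →
    ∃ L', Valid G S F L' ∧ (∀ w, w ∈ inn L' ↔ w = u ∨ w = v ∨ w ∈ inn D ∨ w ∈ m) ∧
      evs L' ≤ evs D + m.length % 2 ∧ cts L' ≤ 1 + cts D ∧ ∀ Q ∈ L', Q.a ≠ Q.b := by
  induction D using List.reverseRecOn with
  | nil =>
    intro S F p z m hSF hV hD hp hpx hz hm hch hav
    obtain rfl : z = v := by simpa using hz
    have hf := hV.1
    have hnd : u ≠ z := by simpa using hf.nd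
    have hc := hf.ch
    have huF := hf.av u (by simp)
    have hvF := hf.av z (by simp)
    refine ⟨[⟨p, m ++ [z, u], x⟩], ⟨⟨hp, hf.ha, ?_, ?_, ?_, fun e => absurd e hpx⟩, trivial⟩, ?_, ?_, ?_, ?_⟩
    · intro w hw; simp only [List.mem_append, List.mem_cons, List.not_mem_nil, or_false] at hw
      rcases hw with h | rfl | rfl
      · exact (hav w h).1
      · exact hvF
      · exact huF
    · simp only [List.nodup_append, hm]; grind
    · refine chain_join (l := [u]) hch ?_
      simp at hc ⊢
      exact ⟨hc.2.1.symm, hc.1.symm⟩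
    · intro w; simp; grind
    · simp
    · simp
    · simpa using hpx
  | append_singleton D Q ih =>
    intro S F p z m hSF hV hD hp hpx hz hm hch hav
    have hV' : Valid G S F ((⟨x, [u, v], y⟩ :: D) ++ [Q]) := hV
    rw [valid_snoc] at hV'
    obtain ⟨hV1, hQ⟩ := hV'
    have hxS : x ∈ S := hV.1.ha
    have hD1 : ∀ Q ∈ D, (Q.a ∈ S → Q.a = x) ∧ (Q.b ∈ S → Q.b = x) ∧ Q.a ≠ u ∧ Q.b ≠ u ∧ Q.a ≠ Q.b :=
      fun Q hQ => hD Q (by simp [hQ])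
    have hcons : ∀ w, w ∈ inn (D ++ [Q]) ↔ w ∈ inn D ∨ w ∈ Q.l := by
      intro w; simp
    have hiP : ∀ w, w ∈ inn (⟨x, [u, v], y⟩ :: D) ↔ w = u ∨ w = v ∨ w ∈ inn D := by
      intro w; simp; grind
    have hev : evs (D ++ [Q]) = evs D + Q.l.length % 2 := by simp
    simp only [hcons] at hz hav ⊢
    by_cases hzQ : z ∈ Q.l
    · have hct : cts (D ++ [Q]) = cts D + 1 := by
        have := List.length_pos_of_mem hzQ
        simp; omega
      obtain ⟨p1, l1, m', p2, hpp, hp1, hp2, hm', hch', hav', hl1, hc1, ha1, hmem, hzm, hpar, -⟩ :=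
        hQ.reroute hzQ hm hch (fun w hw => by
          have := hav w hw
          simp only [Set.mem_union, hiP]; grind)
      simp only [Set.mem_union, hiP] at hp1 hp2 hav' ha1
      have hDQ := hD Q (by simp)
      have hzx : z ≠ x := by
        rintro rfl; exact hav' _ hzm (Or.inl (hSF hxS))
      have hp1z : p1 ≠ z := by
        rintro rfl
        have := hav' _ hzm
        have := hSF (a := p1)
        grind
      have hp12 : p1 ≠ p2 := by rcases hpp with ⟨rfl, rfl⟩ | ⟨rfl, rfl⟩ <;> grind
      have hp1u : p1 ≠ u := by rcases hpp with ⟨rfl, rfl⟩ | ⟨rfl, rfl⟩ <;> grind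
      have hp2u : p2 ≠ u := by rcases hpp with ⟨rfl, rfl⟩ | ⟨rfl, rfl⟩ <;> grind
      have hp1v : p1 ∈ S → p1 = x := by rcases hpp with h | h <;> grind
      have hp2v : p2 ∈ S → p2 = x := by rcases hpp with h | h <;> grind
      by_cases hp2T : p2 = v ∨ p2 ∈ inn D
      · obtain ⟨L, hL, hLm, hLe, hLc, hLo⟩ := ih (S := S) (F := F) (p := p) (z := p2) (m := m') hSF hV1 hD1 hp hpx
          hp2T hm' hch' (fun w hw => by have := hav' w hw; grind)
        refine ⟨L ++ [⟨p1, l1, z⟩], valid_snoc.2 ⟨hL, ?_, ?_, ?_, hl1, hc1, fun e => absurd e hp1z⟩, ?_, ?_, ?_, ?_⟩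
        · simp only [Set.mem_union, hLm]; grind
        · exact Or.inr ((hLm _).2 (by grind))
        · intro w hw hf
          have := ha1 w hw
          simp only [Set.mem_union, hLm] at this hf
          grind
        · intro w; have := hmem w; simp [hLm]; grind
        · rw [hev]; simp at hLe ⊢; omega
        · rw [hct]; simp at hLc ⊢; omega
        · intro Q' hQ'
          rcases List.mem_append.1 hQ' with h | h
          · exact hLo _ h
          · obtain rfl : Q' = _ := by simpa using h
            exact hp1z
      · have e2 : p2 = x := by grind
        have hpp2 : p ≠ p2 := fun e => hpx (e.trans e2)
        have hp1T : p1 = v ∨ p1 ∈ inn D := by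
          have : p1 ∉ S := fun h => hp12 ((hp1v h).trans e2.symm)
          grind
        have hV2 : Valid G (S ∪ {w | w ∈ m'}) (F ∪ {w | w ∈ m'}) (⟨x, [u, v], y⟩ :: D) :=
            (hV1.mono Set.subset_union_left subset_rfl).enlarge
              (fun w hw hw' => by have := hav' w hw'; rw [hiP] at hw; grind)
        obtain ⟨L, hL, hLm, hLe, hLc, hLo⟩ := ih (S := S ∪ {w | w ∈ m'}) (F := F ∪ {w | w ∈ m'}) (p := z)
            (z := p1) (m := l1.reverse)
            (Set.union_subset_union_left _ hSF) hV2 (by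
              intro Q' hQ'
              have h1 := hD1 Q' hQ'
              have h2 := hV1.ends Q' (by simp [hQ'])
              have a1 := hav' Q'.a
              have a2 := hav' Q'.b
              have a3 := hSF (a := Q'.a)
              have a4 := hSF (a := Q'.b)
              simp only [hiP] at h2
              refine ⟨?_, ?_, h1.2.2⟩
              · rintro (h | h)
                · exact h1.1 h
                · exact absurd h (by simp only [Set.mem_ofPred_eq]; intro h; have := a1 h; grind)
              · rintro (h | h)
                · exact h1.2.1 h
                · exact absurd h (by simp only [Set.mem_ofPred_eq]; intro h; have := a2 h; grind))
            (Or.inr hzm) hzx hp1T (List.nodup_reverse.2 hl1) (chain_rev hc1)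
            (by
              intro w hw
              have := ha1 w (List.mem_reverse.1 hw)
              simp only [Set.mem_union, Set.mem_ofPred_eq] at this ⊢
              grind)
        refine ⟨⟨p, m', p2⟩ :: L, ⟨⟨hp, e2 ▸ hxS, fun w hw h => hav' w hw (Or.inl h), hm', hch',
            fun e => absurd e hpp2⟩, hL⟩, ?_, ?_, ?_, ?_⟩
        · intro w; have := hmem w; simp [hLm]; grind
        · rw [hev]; simp at hLe ⊢; omega
        · rw [hct]; simp at hLc ⊢; omega
        · intro Q' hQ'
          rcases List.mem_cons.1 hQ' with rfl | h
          · exact hpp2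
          · exact hLo _ h
    · have hzT : z = v ∨ z ∈ inn D := by grind
      obtain ⟨L, hL, hLm, hLe, hLc, hLo⟩ := ih (S := S) (F := F) (p := p) (z := z) (m := m) hSF hV1 hD1 hp hpx
          hzT hm hch (fun w hw => by have := hav w hw; grind)
      refine ⟨L ++ [Q], valid_snoc.2 ⟨hL, ?_⟩, ?_, ?_, ?_, ?_⟩
      · refine ⟨?_, ?_, ?_, hQ.nd, hQ.ch, hQ.cl⟩
        · have := hQ.ha; simp only [Set.mem_union, hLm, hiP] at this ⊢; grind
        · have := hQ.hb; simp only [Set.mem_union, hLm, hiP] at this ⊢; grind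
        · intro w hw
          have h1 := hQ.av w hw
          have h2 := hav w
          simp only [Set.mem_union, hLm, hiP] at h1 h2 ⊢; grind
      · intro w; simp [hLm]; grind
      · rw [hev]; simp at hLe ⊢; omega
      · simp at hLc ⊢; omega
      · intro Q' hQ'
        rcases List.mem_append.1 hQ' with h | h
        · exact hLo _ h
        · obtain rfl : Q' = Q := by simpa using h
          exact (hD Q' (by simp)).2.2.2.2

set_option maxHeartbeats 1000000 in
lemma claimB2 {x u v y : V} (hxy : x ≠ y) (D : List (PE V)) :
    ∀ {S F : Set V} {z : V} {m : List V}, S ⊆ F → Valid G S F (⟨x, [u, v], y⟩ :: D) →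
    (∀ Q ∈ D, (Q.a ∈ S → Q.a = x) ∧ (Q.b ∈ S → Q.b = x) ∧ Q.a ≠ u ∧ Q.b ≠ u ∧ Q.a ≠ Q.b) →
    z = x ∨ z = v ∨ z ∈ inn D → m.Nodup → List.IsChain G.Adj (u :: m ++ [z]) →
    (∀ w ∈ m, w ∉ F ∧ w ≠ u ∧ w ≠ v ∧ w ∉ inn D) →
    ∃ P' D', Valid G S F (P' :: D') ∧ (∀ w, w ∈ inn (P' :: D') ↔ w = u ∨ w = v ∨ w ∈ inn D ∨ w ∈ m) ∧
      evs (P' :: D') ≤ evs D + m.length % 2 ∧ cts (P' :: D') ≤ 1 + cts D ∧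
      (∀ Q ∈ P' :: D', Q.a ≠ Q.b) ∧ ((m ≠ [] ∨ z ∈ inn D) → 3 ≤ P'.l.length) := by
  induction D using List.reverseRecOn with
  | nil =>
    intro S F z m hSF hV hD hz hm hch hav
    have hf := hV.1
    have hnd : u ≠ v := by simpa using hf.nd
    have hc := hf.ch
    have huF := hf.av u (by simp)
    have hvF := hf.av v (by simp)
    simp at hc
    have hz : z = x ∨ z = v := by simpa using hz
    rcases hz with rfl | rfl
    · refine ⟨⟨y, v :: u :: m, z⟩, [], ⟨⟨hf.hb, hf.ha, ?_, ?_, ?_, fun e => absurd e.symm hxy⟩, trivial⟩,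
        ?_, ?_, ?_, ?_, ?_⟩
      · intro w hw; simp only [List.mem_cons] at hw
        rcases hw with rfl | rfl | h
        · exact hvF
        · exact huF
        · exact (hav w h).1
      · simp only [List.nodup_cons, List.mem_cons, hm]; grind
      · refine chain_join (m := [v]) (z := u) ?_ hch
        simp
        exact ⟨hc.2.2.symm, hc.2.1.symm⟩
      · intro w; simp; grind
      · simp; omega
      · simp
      · simpa using hxy.symm
      · intro h
        have : 0 < m.length := List.length_pos_iff.2 (by simpa using h)
        simp; omega
    · refine ⟨⟨x, u :: m ++ [z], y⟩, [], ⟨⟨hf.ha, hf.hb, ?_, ?_, ?_, fun e => absurd e hxy⟩, trivial⟩,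
        ?_, ?_, ?_, ?_, ?_⟩
      · intro w hw
        simp only [List.cons_append, List.mem_cons, List.mem_append, List.not_mem_nil, or_false] at hw
        rcases hw with rfl | h | rfl
        · exact huF
        · exact (hav w h).1
        · exact hvF
      · simp only [List.cons_append, List.nodup_cons, List.nodup_append, hm]; grind
      · have h1 : List.IsChain G.Adj (x :: (u :: m) ++ [z]) :=
          chain_join (m := []) (z := u) (by simpa using hc.1) hch
        exact chain_join (m := u :: m) (z := z) (l := []) h1 (by simpa using hc.2.2)
      · intro w; simp; grind
      · simp; omega
      · simp
      · simpa using hxy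
      · intro h
        have : 0 < m.length := List.length_pos_iff.2 (by simpa using h)
        simp; omega
  | append_singleton D Q ih =>
    intro S F z m hSF hV hD hz hm hch hav
    have hV' : Valid G S F ((⟨x, [u, v], y⟩ :: D) ++ [Q]) := hV
    rw [valid_snoc] at hV'
    obtain ⟨hV1, hQ⟩ := hV'
    have hxS : x ∈ S := hV.1.ha
    have hD1 : ∀ Q ∈ D, (Q.a ∈ S → Q.a = x) ∧ (Q.b ∈ S → Q.b = x) ∧ Q.a ≠ u ∧ Q.b ≠ u ∧ Q.a ≠ Q.b :=
      fun Q hQ => hD Q (by simp [hQ])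
    have hcons : ∀ w, w ∈ inn (D ++ [Q]) ↔ w ∈ inn D ∨ w ∈ Q.l := by
      intro w; simp
    have hiP : ∀ w, w ∈ inn (⟨x, [u, v], y⟩ :: D) ↔ w = u ∨ w = v ∨ w ∈ inn D := by
      intro w; simp; grind
    have hev : evs (D ++ [Q]) = evs D + Q.l.length % 2 := by simp
    simp only [hcons] at hz hav ⊢
    by_cases hzQ : z ∈ Q.l
    · have hct : cts (D ++ [Q]) = cts D + 1 := by
        have := List.length_pos_of_mem hzQ
        simp; omega
      obtain ⟨p1, l1, m', p2, hpp, hp1, hp2, hm', hch', hav', hl1, hc1, ha1, hmem, hzm, hpar, -⟩ :=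
        hQ.reroute hzQ hm hch (fun w hw => by
          have := hav w hw
          simp only [Set.mem_union, hiP]; grind)
      simp only [Set.mem_union, hiP] at hp1 hp2 hav' ha1
      have hDQ := hD Q (by simp)
      have hp1z : p1 ≠ z := by
        rintro rfl
        have := hav' _ hzm
        have := hSF (a := p1)
        grind
      have hp2u : p2 ≠ u := by rcases hpp with ⟨rfl, rfl⟩ | ⟨rfl, rfl⟩ <;> grind
      have hp2v : p2 ∈ S → p2 = x := by rcases hpp with h | h <;> grind
      obtain ⟨P', L, hL, hLm, hLe, hLc, hLo, hL3⟩ := ih (S := S) (F := F) (z := p2) (m := m') hSF hV1 hD1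
          (by grind) hm' hch' (fun w hw => by have := hav' w hw; grind)
      refine ⟨P', L ++ [⟨p1, l1, z⟩], ?_, ?_, ?_, ?_, ?_, ?_⟩
      · rw [← List.cons_append]
        refine valid_snoc.2 ⟨hL, ?_, ?_, ?_, hl1, hc1, fun e => absurd e hp1z⟩
        · simp only [Set.mem_union, hLm]; grind
        · exact Or.inr ((hLm _).2 (by grind))
        · intro w hw hf
          have := ha1 w hw
          simp only [Set.mem_union, hLm] at this hf
          grind
      · intro w; have := hmem w; rw [← List.cons_append, mem_inn_append, hLm]; simp; grind
      · rw [hev]; simp at hLe ⊢; omega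
      · rw [hct]; simp at hLc ⊢; omega
      · intro Q' hQ'
        rw [← List.cons_append] at hQ'
        rcases List.mem_append.1 hQ' with h | h
        · exact hLo _ h
        · obtain rfl : Q' = _ := by simpa using h
          exact hp1z
      · intro _; exact hL3 (Or.inl (List.ne_nil_of_mem hzm))
    · obtain ⟨P', L, hL, hLm, hLe, hLc, hLo, hL3⟩ := ih (S := S) (F := F) (z := z) (m := m) hSF hV1 hD1
          (by grind) hm hch (fun w hw => by have := hav w hw; grind)
      refine ⟨P', L ++ [Q], ?_, ?_, ?_, ?_, ?_, ?_⟩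
      · rw [← List.cons_append]
        refine valid_snoc.2 ⟨hL, ?_, ?_, ?_, hQ.nd, hQ.ch, hQ.cl⟩
        · have := hQ.ha; simp only [Set.mem_union, hLm, hiP] at this ⊢; grind
        · have := hQ.hb; simp only [Set.mem_union, hLm, hiP] at this ⊢; grind
        · intro w hw
          have h1 := hQ.av w hw
          have h2 := hav w
          simp only [Set.mem_union, hLm, hiP] at h1 h2 ⊢; grind
      · intro w; rw [← List.cons_append, mem_inn_append, hLm]; simp; grind
      · rw [hev]; simp at hLe ⊢; omega
      · simp at hLc ⊢; omega
      · intro Q' hQ'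
        rw [← List.cons_append] at hQ'
        rcases List.mem_append.1 hQ' with h | h
        · exact hLo _ h
        · obtain rfl : Q' = Q := by simpa using h
          exact (hD Q' (by simp)).2.2.2.2
      · intro h; exact hL3 (by grind)

/-- merging the three-ear with `Q = (v, l, x)` and an ear from `u` to `z ∈ S`, `z ≠ x`. -/
lemma claimB3 {x u v y : V} {l : List V} {D : List (PE V)} {S F : Set V} {z : V} {m : List V}
    (hV : Valid G S F (⟨x, [u, v], y⟩ :: ⟨v, l, x⟩ :: D))
    (hD : ∀ Q ∈ D, Q.a ≠ Q.b) (hz : z ∈ S) (hzx : z ≠ x) (hm : m.Nodup)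
    (hch : List.IsChain G.Adj (u :: m ++ [z]))
    (hav : ∀ w ∈ m, w ∉ F ∧ w ≠ u ∧ w ≠ v ∧ w ∉ l ∧ w ∉ inn D) :
    ∃ L', Valid G S F L' ∧ (∀ w, w ∈ inn L' ↔ w = u ∨ w = v ∨ w ∈ l ∨ w ∈ inn D ∨ w ∈ m) ∧
      evs L' ≤ evs (⟨v, l, x⟩ :: D) + m.length % 2 ∧ cts L' ≤ 1 + cts D ∧ ∀ Q ∈ L', Q.a ≠ Q.b := by
  obtain ⟨hf, hq, hVD⟩ := hV
  have hnd : u ≠ v := by simpa using hf.nd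
  have hc := hf.ch
  simp at hc
  have huF := hf.av u (by simp)
  have hvF := hf.av v (by simp)
  have hql : ∀ w ∈ l, w ∉ F ∧ w ≠ u ∧ w ≠ v := fun w hw => by
    have := hq.av w hw; simp at this; grind
  refine ⟨⟨z, m.reverse ++ u :: v :: l, x⟩ :: D, ⟨⟨hz, hf.ha, ?_, ?_, ?_, fun e => absurd e hzx⟩,
    (hVD.enlarge (X := {w | w ∈ m}) ?_).mono ?_ ?_⟩, ?_, ?_, ?_, ?_⟩
  · intro w hw
    simp only [List.mem_append, List.mem_reverse, List.mem_cons] at hw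
    grind
  · have := hq.nd
    simp only [List.nodup_append, List.nodup_reverse, List.nodup_cons, List.mem_reverse, List.mem_cons] at this ⊢
    grind
  · refine chain_join (z := u) (chain_rev hch) ?_
    exact chain_join (m := []) (z := v) (by simpa using hc.2.1) hq.ch
  · intro w hw hw'; exact (hav w hw').2.2.2.2 hw
  · intro w; simp; grind
  · intro w; simp; grind
  · intro w; simp; grind
  · simp; omega
  · simp
  · intro Q hQ
    rcases List.mem_cons.1 hQ with rfl | h
    · exact hzx
    · exact hD _ h
end
end PE

namespace PE
section
variable {V : Type*} {G : SimpleGraph V}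

def Improve (G : SimpleGraph V) (S F : Set V) (L : List (PE V)) : Prop :=
  (∃ L', Valid G F F L' ∧ (∀ w, w ∈ inn L' ↔ w ∈ inn L) ∧ evs L' ≤ evs L ∧ cts L' < cts L ∧
    ∀ Q ∈ L', Q.a ≠ Q.b) ∨
  (∃ P' B', Valid G S F (P' :: B') ∧ (∀ w, w ∈ inn (P' :: B') ↔ w ∈ inn L) ∧ evs (P' :: B') ≤ evs L ∧
    cts (P' :: B') ≤ cts L ∧ (∀ Q ∈ P' :: B', Q.a ≠ Q.b) ∧ 3 ≤ P'.l.length)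

lemma Improve.congr {S F : Set V} {L M : List (PE V)} (h : Improve G S F L)
    (h1 : ∀ w, w ∈ inn L ↔ w ∈ inn M) (h2 : evs L = evs M) (h3 : cts L = cts M) :
    Improve G S F M := by
  unfold Improve at *
  simp only [h1, h2, h3] at h
  exact h

lemma three (hdeg : ∀ u x v : V, ∃ z, G.Adj u z ∧ z ≠ x ∧ z ≠ v) {S F : Set V} (hSF : S ⊆ F)
    {x u v y : V} (hxy : x ≠ y) (hx : x ∈ S) (hy : y ∈ S) {lq : List V} (B2 : List (PE V)) :
    ∀ (B1 D1 : List (PE V)), Valid G S F B1 →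
    Valid G {x, y} (F ∪ inn B1) (⟨x, [u, v], y⟩ :: ⟨v, lq, x⟩ :: D1) →
    Valid G (S ∪ inn B1 ∪ inn (⟨x, [u, v], y⟩ :: ⟨v, lq, x⟩ :: D1))
      (F ∪ inn B1 ∪ inn (⟨x, [u, v], y⟩ :: ⟨v, lq, x⟩ :: D1)) B2 →
    lq ≠ [] →
    (∀ Q ∈ (⟨v, lq, x⟩ :: D1 : List (PE V)), Q.a ≠ y ∧ Q.b ≠ y ∧ Q.a ≠ u ∧ Q.b ≠ u ∧ Q.a ≠ Q.b) →
    (∀ Q ∈ B1, Q.a ≠ Q.b) → (∀ Q ∈ B2, Q.a ≠ Q.b ∧ Q.l ≠ []) →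
    (∀ w, w ∈ F ∨ w ∈ inn B1 ∨ w ∈ inn (⟨x, [u, v], y⟩ :: ⟨v, lq, x⟩ :: D1) ∨ w ∈ inn B2) →
    Improve G S F (B1 ++ (⟨x, [u, v], y⟩ :: ⟨v, lq, x⟩ :: D1) ++ B2) := by
  induction B2 with
  | nil =>
    intro B1 D1 hB1 hP _ hlq hD ho1 _ hcov
    obtain ⟨z, hadj, hzx, hzv⟩ := hdeg u x v
    have hlq1 : min lq.length 1 = 1 := by have := List.length_pos_iff.2 hlq; omega
    have hxyF : ({x, y} : Set V) ⊆ F ∪ inn B1 := by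
      intro w hw
      rcases hw with rfl | rfl
      · exact Or.inl (hSF hx)
      · exact Or.inl (hSF hy)
    have hiP : ∀ w, w ∈ inn (⟨x, [u, v], y⟩ :: ⟨v, lq, x⟩ :: D1) ↔
        w = u ∨ w = v ∨ w ∈ inn (⟨v, lq, x⟩ :: D1) := by intro w; simp; grind
    by_cases hzF : z ∈ F ∪ inn B1
    · left
      obtain ⟨L, hL, hLm, hLe, hLc, hLo⟩ := claimB3 (S := F ∪ inn B1) (m := [])
        (hP.mono hxyF subset_rfl) (fun Q hQ => (hD Q (by simp [hQ])).2.2.2.2) hzF hzx (by simp)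
        (by simpa using hadj) (by simp)
      refine ⟨B1 ++ L, valid_append.2 ⟨hB1.mono hSF subset_rfl, hL⟩, ?_, ?_, ?_, ?_⟩
      · intro w; simp [hLm]; grind
      · simp at hLe ⊢; omega
      · simp at hLc ⊢; omega
      · intro Q hQ
        rcases List.mem_append.1 hQ with h | h
        · exact ho1 _ h
        · exact hLo _ h
    · right
      have hzD : z ∈ inn (⟨v, lq, x⟩ :: D1) := by
        have h1 := hcov z
        have h2 := (hiP z).1
        have h3 := hadj.ne
        simp only [inn_nil, Set.mem_empty_iff_false, Set.mem_union] at h1 hzF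
        grind
      obtain ⟨P', D', hL, hLm, hLe, hLc, hLo, hL3⟩ := claimB2 (S := {x, y}) (m := []) hxy
        (⟨v, lq, x⟩ :: D1) hxyF hP (by
          intro Q hQ
          have := hD Q hQ
          refine ⟨?_, ?_, this.2.2⟩ <;> (rintro (h | h) <;> grind))
        (Or.inr (Or.inr hzD)) (by simp) (by simpa using hadj) (by simp)
      refine ⟨P', D' ++ B1, ?_, ?_, ?_, ?_, ?_, hL3 (Or.inr hzD)⟩
      · rw [← List.cons_append]
        refine valid_append.2 ⟨hL.mono ?_ Set.subset_union_left, (hB1.enlarge ?_).mono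
          Set.subset_union_left subset_rfl⟩
        · intro w hw
          rcases hw with rfl | rfl <;> assumption
        · intro w hw hw'
          exact hL.avoid w hw' (Or.inr hw)
      · intro w; rw [← List.cons_append, mem_inn_append, hLm]; simp; grind
      · rw [← List.cons_append, evs_append]; simp at hLe ⊢; omega
      · rw [← List.cons_append, cts_append]; simp at hLc ⊢; omega
      · intro Q hQ
        rw [← List.cons_append] at hQ
        rcases List.mem_append.1 hQ with h | h
        · exact hLo _ h
        · exact ho1 _ h
  | cons R B2 ih =>
    intro B1 D1 hB1 hP hB2 hlq hD ho1 ho2 hcov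
    obtain ⟨hR, hB2⟩ := hB2
    have hlq1 : min lq.length 1 = 1 := by have := List.length_pos_iff.2 hlq; omega
    have hR1 : min R.l.length 1 = 1 := by
      have := List.length_pos_iff.2 (ho2 R (by simp)).2; omega
    have hRo := (ho2 R (by simp)).1
    have hxyF : ({x, y} : Set V) ⊆ F ∪ inn B1 := by
      intro w hw
      rcases hw with rfl | rfl
      · exact Or.inl (hSF hx)
      · exact Or.inl (hSF hy)
    have hPF : Valid G (F ∪ inn B1) (F ∪ inn B1) (⟨x, [u, v], y⟩ :: ⟨v, lq, x⟩ :: D1) :=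
      hP.mono hxyF subset_rfl
    have hiP : ∀ w, w ∈ inn (⟨x, [u, v], y⟩ :: ⟨v, lq, x⟩ :: D1) ↔
        w = u ∨ w = v ∨ w ∈ inn (⟨v, lq, x⟩ :: D1) := by intro w; simp; grind
    have hDF : ∀ Q ∈ (⟨v, lq, x⟩ :: D1 : List (PE V)), (Q.a ∈ F ∪ inn B1 → Q.a = x) ∧
        (Q.b ∈ F ∪ inn B1 → Q.b = x) ∧ Q.a ≠ u ∧ Q.b ≠ u ∧ Q.a ≠ Q.b := by
      intro Q hQ
      have h1 := hD Q hQ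
      have h2 := hP.ends Q (by simp only [List.mem_cons] at hQ ⊢; grind)
      have h3 := hP.avoid Q.a
      have h4 := hP.avoid Q.b
      simp only [Set.mem_insert_iff, Set.mem_singleton_iff] at h2
      grind
    -- closing with a decrease of the count
    have fin : ∀ L', Valid G (F ∪ inn B1) (F ∪ inn B1) L' →
        (∀ w, w ∈ inn L' ↔ w ∈ inn (⟨x, [u, v], y⟩ :: ⟨v, lq, x⟩ :: D1) ∨ w ∈ R.l) →
        evs L' ≤ evs (⟨v, lq, x⟩ :: D1) + R.l.length % 2 → cts L' ≤ 2 + cts D1 →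
        (∀ Q ∈ L', Q.a ≠ Q.b) →
        Improve G S F (B1 ++ (⟨x, [u, v], y⟩ :: ⟨v, lq, x⟩ :: D1) ++ R :: B2) := by
      intro L hL hLm hLe hLc hLo
      left
      refine ⟨B1 ++ (L ++ B2), valid_append.2 ⟨hB1.mono hSF subset_rfl, valid_append.2 ⟨hL, hB2.mono ?_ ?_⟩⟩,
        ?_, ?_, ?_, ?_⟩
      · intro w; have := hSF (a := w)
        simp only [Set.mem_union, hLm, Set.mem_ofPred_eq]; grind
      · intro w; simp only [Set.mem_union, hLm, Set.mem_ofPred_eq]; grind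
      · intro w; simp only [mem_inn_append, hLm, mem_inn_cons]; grind
      · simp at hLe ⊢; omega
      · simp [hlq1, hR1] at hLc ⊢; omega
      · intro Q hQ
        simp only [List.mem_append] at hQ
        rcases hQ with h | h | h
        · exact ho1 _ h
        · exact hLo _ h
        · exact (ho2 _ (by simp [h])).1
    -- an ear at u
    have hu : ∀ R' : PE V, Fits G (S ∪ inn B1 ∪ inn (⟨x, [u, v], y⟩ :: ⟨v, lq, x⟩ :: D1))
        (F ∪ inn B1 ∪ inn (⟨x, [u, v], y⟩ :: ⟨v, lq, x⟩ :: D1)) R' → (∀ w, w ∈ R'.l ↔ w ∈ R.l) →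
        R'.l.length = R.l.length → R'.a ≠ R'.b → R'.a = u →
        Improve G S F (B1 ++ (⟨x, [u, v], y⟩ :: ⟨v, lq, x⟩ :: D1) ++ R :: B2) := by
      intro R' hR' hmem hlen hab hau
      have hch := hR'.ch
      rw [hau] at hch
      have hav : ∀ w ∈ R'.l, w ∉ F ∪ inn B1 ∧ w ≠ u ∧ w ≠ v ∧ w ∉ inn (⟨v, lq, x⟩ :: D1) := by
        intro w hw
        have := hR'.av w hw
        simp only [Set.mem_union, hiP] at this ⊢
        grind
      by_cases hz : R'.b ∈ F ∪ inn B1 ∧ R'.b ≠ x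
      · obtain ⟨L, hL, hLm, hLe, hLc, hLo⟩ := claimB3 (z := R'.b) (m := R'.l) hPF
          (fun Q hQ => (hD Q (by simp [hQ])).2.2.2.2) hz.1 hz.2 hR'.nd hch (fun w hw => by
            have := hav w hw; simp only [mem_inn_cons] at this; grind)
        refine fin L hL ?_ (by rw [← hlen]; exact hLe) (by omega) hLo
        intro w; rw [hLm, hiP, hmem]; simp; grind
      · have hb := hR'.hb
        simp only [Set.mem_union, hiP] at hb hz
        have hS := hSF (a := R'.b)
        obtain ⟨P', D', hL, hLm, hLe, hLc, hLo, -⟩ := claimB2 (z := R'.b) (m := R'.l) hxy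
          (⟨v, lq, x⟩ :: D1) subset_rfl hPF hDF (by grind) hR'.nd hch hav
        refine fin _ hL ?_ (by rw [← hlen]; exact hLe) ?_ hLo
        · intro w; rw [hLm, hiP, hmem]; grind
        · simp [hlq1] at hLc ⊢; omega
    -- an ear from S \ x to D ∪ v
    have hp : ∀ R' : PE V, Fits G (S ∪ inn B1 ∪ inn (⟨x, [u, v], y⟩ :: ⟨v, lq, x⟩ :: D1))
        (F ∪ inn B1 ∪ inn (⟨x, [u, v], y⟩ :: ⟨v, lq, x⟩ :: D1)) R' → (∀ w, w ∈ R'.l ↔ w ∈ R.l) →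
        R'.l.length = R.l.length → R'.a ∈ S ∪ inn B1 → R'.a ≠ x → 
        R'.b = v ∨ R'.b ∈ inn (⟨v, lq, x⟩ :: D1) →
        Improve G S F (B1 ++ (⟨x, [u, v], y⟩ :: ⟨v, lq, x⟩ :: D1) ++ R :: B2) := by
      intro R' hR' hmem hlen ha hax hb
      have hav : ∀ w ∈ R'.l, w ∉ F ∪ inn B1 ∧ w ≠ u ∧ w ≠ v ∧ w ∉ inn (⟨v, lq, x⟩ :: D1) := by
        intro w hw
        have := hR'.av w hw
        simp only [Set.mem_union, hiP] at this ⊢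
        grind
      obtain ⟨L, hL, hLm, hLe, hLc, hLo⟩ := claimB1 (p := R'.a) (z := R'.b) (m := R'.l) hxy
          (⟨v, lq, x⟩ :: D1) subset_rfl hPF hDF (Set.union_subset_union_left _ hSF ha) hax hb
          hR'.nd hR'.ch hav
      refine fin _ hL ?_ (by rw [← hlen]; exact hLe) ?_ hLo
      · intro w; rw [hLm, hiP, hmem]; grind
      · simp [hlq1] at hLc ⊢; omega
    by_cases hau : R.a = u
    · exact hu R hR (by simp) rfl hRo hau
    by_cases hbu : R.b = u
    · exact hu R.rev hR.rev (by simp [PE.rev]) (by simp [PE.rev]) hRo.symm hbu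
    have ha := hR.ha
    have hb := hR.hb
    simp only [Set.mem_union, hiP] at ha hb
    have step : (R.a = x ∨ R.a = v ∨ R.a ∈ inn (⟨v, lq, x⟩ :: D1)) →
        (R.b = x ∨ R.b = v ∨ R.b ∈ inn (⟨v, lq, x⟩ :: D1)) →
        Improve G S F (B1 ++ (⟨x, [u, v], y⟩ :: ⟨v, lq, x⟩ :: D1) ++ R :: B2) := by
      intro ha' hb'
      have hm : ∀ w, w ∈ inn (⟨x, [u, v], y⟩ :: ⟨v, lq, x⟩ :: (D1 ++ [R])) ↔
          w ∈ inn (⟨x, [u, v], y⟩ :: ⟨v, lq, x⟩ :: D1) ∨ w ∈ R.l := by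
        intro w; simp only [mem_inn_cons, mem_inn_append, inn_nil, Set.mem_empty_iff_false]; grind
      have hny : ∀ w, (w = x ∨ w = v ∨ w ∈ inn (⟨v, lq, x⟩ :: D1)) → w ≠ y := by
        rintro w hw rfl
        have h1 := hP.avoid w
        have h2 := hxyF (show w ∈ ({x, w} : Set V) by simp)
        rw [hiP] at h1
        grind
      have hP2 : Valid G {x, y} (F ∪ inn B1) ((⟨x, [u, v], y⟩ :: ⟨v, lq, x⟩ :: D1) ++ [R]) := by
        refine valid_snoc.2 ⟨hP, ?_, ?_, ?_, hR.nd, hR.ch, hR.cl⟩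
        · simp only [Set.mem_union, hiP, Set.mem_insert_iff]; grind
        · simp only [Set.mem_union, hiP, Set.mem_insert_iff]; grind
        · exact hR.av
      have := ih B1 (D1 ++ [R]) hB1 (by simpa using hP2)
        (hB2.mono (by intro w; simp only [Set.mem_union, hm, Set.mem_ofPred_eq]; grind)
          (by intro w; simp only [Set.mem_union, hm, Set.mem_ofPred_eq]; grind))
        hlq (by
          intro Q hQ
          rw [← List.cons_append] at hQ
          rcases List.mem_append.1 hQ with h | h
          · exact hD _ h
          · obtain rfl : Q = R := by simpa using h
            exact ⟨hny _ ha', hny _ hb', hau, hbu, hRo⟩)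
        ho1 (fun Q hQ => ho2 Q (by simp [hQ]))
        (by intro w; have := hcov w; rw [hm]; rw [mem_inn_cons R] at this; grind)
      refine this.congr ?_ ?_ ?_
      · intro w; simp
      · simp
      · simp
    by_cases haS : R.a ∈ S ∪ inn B1 <;> by_cases hbS : R.b ∈ S ∪ inn B1
    · -- move to B1
      have hdis : ∀ w ∈ R.l, w ∉ F ∪ inn B1 ∧ w ∉ inn (⟨x, [u, v], y⟩ :: ⟨v, lq, x⟩ :: D1) := by
        intro w hw
        have := hR.av w hw
        simp only [Set.mem_union] at this ⊢
        grind
      have hm : ∀ w, w ∈ inn (B1 ++ [R]) ↔ w ∈ inn B1 ∨ w ∈ R.l := by intro w; simp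
      have := ih (B1 ++ [R]) D1 (valid_snoc.2 ⟨hB1, haS, hbS, fun w hw => (hdis w hw).1, hR.nd, hR.ch, hR.cl⟩)
        ((hP.enlarge (X := {w | w ∈ R.l}) (fun w hw hw' => (hdis w hw').2 hw)).mono subset_rfl
          (by intro w; simp only [Set.mem_union, hm, Set.mem_ofPred_eq]; grind))
        (hB2.mono (by intro w; simp only [Set.mem_union, hm, Set.mem_ofPred_eq]; grind)
          (by intro w; simp only [Set.mem_union, hm, Set.mem_ofPred_eq]; grind))
        hlq hD (by
          intro Q hQ
          rcases List.mem_append.1 hQ with h | h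
          · exact ho1 _ h
          · obtain rfl : Q = R := by simpa using h
            exact hRo)
        (fun Q hQ => ho2 Q (by simp [hQ]))
        (by intro w; have := hcov w; simp only [hm, mem_inn_cons] at this ⊢; grind)
      refine this.congr ?_ ?_ ?_
      · intro w; simp; grind
      · simp; omega
      · simp; omega
    · by_cases hax : R.a = x
      · exact step (by simp only [Set.mem_union] at haS hbS; grind) (by simp only [Set.mem_union] at haS hbS; grind)
      · exact hp R hR (by simp) rfl haS hax (by simp only [Set.mem_union] at hbS; grind)
    · by_cases hbx : R.b = x
      · exact step (by simp only [Set.mem_union] at haS hbS; grind) (by simp only [Set.mem_union] at haS hbS; grind)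
      · exact hp R.rev hR.rev (by simp [PE.rev]) (by simp [PE.rev]) hbS hbx
          (by simp only [Set.mem_union, PE.rev] at haS ⊢; grind)
    · exact step (by simp only [Set.mem_union] at haS hbS; grind) (by simp only [Set.mem_union] at haS hbS; grind)
end
end PE

namespace PE
section
variable {V : Type*} {G : SimpleGraph V}

lemma first_touch {P : PE V} (B : List (PE V)) : ∀ {S F : Set V}, Valid G S F (P :: B) →
    P.a ∈ S → P.b ∈ S →
    (∃ Q ∈ B, Q.a ∈ P.l ∨ Q.b ∈ P.l) → ∃ B1 Q B2, B = B1 ++ Q :: B2 ∧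
    Valid G S F (B1 ++ P :: Q :: B2) ∧ (Q.a ∈ P.l ∨ Q.b ∈ P.l) := by
  induction B with
  | nil => rintro S F h _ _ ⟨Q, hQ, _⟩; simp at hQ
  | cons R B ih =>
    intro S F h ha hb hex
    by_cases hR : R.a ∈ P.l ∨ R.b ∈ P.l
    · exact ⟨[], R, B, rfl, h, hR⟩
    · obtain ⟨hP, hF, hB⟩ := h
      have e : ∀ X : Set V, X ∪ {v | v ∈ P.l} ∪ {v | v ∈ R.l} ⊆ X ∪ {v | v ∈ R.l} ∪ {v | v ∈ P.l} := by
        intro X w; simp only [Set.mem_union, Set.mem_ofPred_eq]; grind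
      have e' : ∀ X : Set V, X ∪ {v | v ∈ R.l} ∪ {v | v ∈ P.l} ⊆ X ∪ {v | v ∈ P.l} ∪ {v | v ∈ R.l} := by
        intro X w; simp only [Set.mem_union, Set.mem_ofPred_eq]; grind
      have hav := hF.av
      simp only [Set.mem_union, Set.mem_ofPred_eq] at hav
      have hP' : Fits G (S ∪ {v | v ∈ R.l}) (F ∪ {v | v ∈ R.l}) P := by
        refine ⟨Or.inl ha, Or.inl hb, ?_, hP.nd, hP.ch, hP.cl⟩
        intro w hw
        have h1 := hP.av w hw
        simp only [Set.mem_union, Set.mem_ofPred_eq]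
        grind
      obtain ⟨B1, Q, B2, rfl, hv, hQ⟩ := ih (S := S ∪ {v | v ∈ R.l}) (F := F ∪ {v | v ∈ R.l})
        ⟨hP', hB.mono (e _) (e' _)⟩ (Or.inl ha) (Or.inl hb) (by
          obtain ⟨Q, hQ, h⟩ := hex
          rcases List.mem_cons.1 hQ with rfl | hQ
          · exact absurd h hR
          · exact ⟨Q, hQ, h⟩)
      refine ⟨R :: B1, Q, B2, rfl, ⟨⟨?_, ?_, ?_, hF.nd, hF.ch, hF.cl⟩, hv⟩, hQ⟩
      · have := hF.ha; simp only [Set.mem_union, Set.mem_ofPred_eq] at this; grind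
      · have := hF.hb; simp only [Set.mem_union, Set.mem_ofPred_eq] at this; grind
      · intro w hw; have := hav w hw; grind

lemma Improve.fin {S F : Set V} (hSF : S ⊆ F) {B1 B2 : List (PE V)} {P Q N : PE V}
    (hB1 : Valid G S F B1)
    (hB2 : Valid G (S ∪ inn B1 ∪ {v | v ∈ P.l} ∪ {v | v ∈ Q.l})
      (F ∪ inn B1 ∪ {v | v ∈ P.l} ∪ {v | v ∈ Q.l}) B2)
    (ho1 : ∀ Q ∈ B1, Q.a ≠ Q.b) (ho2 : ∀ Q ∈ B2, Q.a ≠ Q.b ∧ Q.l ≠ [])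
    (hP0 : P.l ≠ []) (hQ0 : Q.l ≠ [])
    (hN : Fits G (F ∪ inn B1) (F ∪ inn B1) N) (hm : ∀ w, w ∈ N.l ↔ w ∈ P.l ∨ w ∈ Q.l)
    (he : N.l.length % 2 ≤ P.l.length % 2 + Q.l.length % 2) (hNo : N.a ≠ N.b) :
    Improve G S F (B1 ++ P :: Q :: B2) := by
  left
  have h1 := List.length_pos_iff.2 hP0
  have h2 := List.length_pos_iff.2 hQ0
  refine ⟨B1 ++ N :: B2, valid_append.2 ⟨hB1.mono hSF subset_rfl, hN, hB2.mono ?_ ?_⟩, ?_, ?_, ?_, ?_⟩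
  · intro w; have := hSF (a := w); simp only [Set.mem_union, Set.mem_ofPred_eq, hm]; grind
  · intro w; simp only [Set.mem_union, Set.mem_ofPred_eq, hm]; grind
  · intro w; simp only [mem_inn_append, mem_inn_cons, hm]; grind
  · simp; omega
  · simp; omega
  · intro R hR
    simp only [List.mem_append, List.mem_cons] at hR
    rcases hR with h | rfl | h
    · exact ho1 _ h
    · exact hNo
    · exact (ho2 _ h).1

lemma np3 (hdeg : ∀ u x v : V, ∃ z, G.Adj u z ∧ z ≠ x ∧ z ≠ v) {S F : Set V} (hSF : S ⊆ F)
    {B1 B2 : List (PE V)} {x u v y a : V} {l : List V} (hxy : x ≠ y) (hx : x ∈ S) (hy : y ∈ S)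
    (hB1 : Valid G S F B1)
    (hP : Fits G (S ∪ inn B1) (F ∪ inn B1) ⟨x, [u, v], y⟩)
    (hQ : Fits G (S ∪ inn B1 ∪ {w | w ∈ [u, v]}) (F ∪ inn B1 ∪ {w | w ∈ [u, v]}) ⟨a, l, v⟩)
    (hB2 : Valid G (S ∪ inn B1 ∪ {w | w ∈ [u, v]} ∪ {w | w ∈ l})
      (F ∪ inn B1 ∪ {w | w ∈ [u, v]} ∪ {w | w ∈ l}) B2)
    (ho1 : ∀ Q ∈ B1, Q.a ≠ Q.b) (ho2 : ∀ Q ∈ B2, Q.a ≠ Q.b ∧ Q.l ≠ [])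
    (hl : l ≠ []) (hav : a ≠ v)
    (hcov : ∀ w, w ∈ F ∨ w ∈ inn B1 ∨ w = u ∨ w = v ∨ w ∈ l ∨ w ∈ inn B2) :
    Improve G S F (B1 ++ ⟨x, [u, v], y⟩ :: ⟨a, l, v⟩ :: B2) := by
  have hPav := hP.av
  have hPnd := hP.nd
  have hQav := hQ.av
  have hQnd := hQ.nd
  have hQch := hQ.ch
  simp only [Set.mem_union, Set.mem_ofPred_eq, List.mem_cons, List.not_mem_nil, or_false, 
    List.nodup_cons, not_false_eq_true, List.nodup_nil, and_true] at hPav hPnd hQav hQnd hQch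
  have hch := hP.ch
  simp at hch
  have hQa := hQ.ha
  simp only [Set.mem_union, Set.mem_ofPred_eq, List.mem_cons, List.not_mem_nil, or_false] at hQa
  have hSFa := hSF (a := a)
  by_cases hau : a = u
  · subst hau
    refine Improve.fin hSF hB1 hB2 ho1 ho2 (by simp) hl (N := ⟨x, [] ++ a :: (l ++ v :: []), y⟩)
      ⟨Or.inl (hSF hx), Or.inl (hSF hy), ?_, ?_, ?_, fun h => absurd h hxy⟩ ?_ ?_ hxy
    · intro w; have := hPav w; have := hQav w; simp; grind
    · simp [List.nodup_append]; grind
    · exact chain_join (by simp [hch.1]) (chain_join hQch (by simp [hch]))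
    · intro w; simp; grind
    · simp; omega
  by_cases hax : a = x
  · subst hax
    have := three hdeg hSF hxy hx hy (lq := l.reverse) (u := u) (v := v) B2 B1 [] hB1
      ⟨⟨by simp, by simp, hP.av, hP.nd, hP.ch, hP.cl⟩, ⟨by simp, by simp, by
        intro w; have := hQav w; simp; grind, by simpa using hQnd, chain_rev hQch, fun h => absurd h hav.symm⟩, trivial⟩
      (hB2.mono (by intro w; simp; grind) (by intro w; simp; grind)) (by simpa using hl)
      (by
        have h1 := hPav u
        have h2 := hPav v
        have := hSF hx
        have := hSF hy
        simp
        grind) ho1 ho2 (by intro w; have := hcov w; simp; grind)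
    refine this.congr ?_ ?_ ?_
    · intro w; simp
    · simp
    · simp
  · refine Improve.fin hSF hB1 hB2 ho1 ho2 (by simp) hl (N := ⟨a, l ++ v :: [u], x⟩)
      ⟨by simp; grind, Or.inl (hSF hx), ?_, ?_, ?_, fun h => absurd h hax⟩ ?_ ?_ hax
    · intro w; have := hPav w; have := hQav w; simp; grind
    · simp [List.nodup_append]; grind
    · exact chain_join hQch (by simp [hch.1.symm, hch.2.1.symm])
    · intro w; simp; grind
    · simp

set_option maxHeartbeats 1000000 in
lemma nonpendant (hdeg : ∀ u x v : V, ∃ z, G.Adj u z ∧ z ≠ x ∧ z ≠ v) {S F : Set V} (hSF : S ⊆ F)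
    {P : PE V} {B : List (PE V)} (hv : Valid G S F (P :: B)) (hPo : P.a ≠ P.b) (hPl : P.l ≠ [])
    (hP3 : P.l.length < 3)
    (ho : ∀ Q ∈ B, Q.a ≠ Q.b ∧ Q.l ≠ []) (hcov : ∀ w, w ∈ F ∨ w ∈ inn (P :: B))
    (hex : ∃ Q ∈ B, Q.a ∈ P.l ∨ Q.b ∈ P.l) : Improve G S F (P :: B) := by
  obtain ⟨B1, Q, B2, rfl, hV, hQ⟩ := first_touch B hv hv.1.ha hv.1.hb hex
  have hPa := hv.1.ha
  have hPb := hv.1.hb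
  obtain ⟨hB1, hP, hQf, hB2⟩ := valid_append.1 hV
  suffices key : ∀ Q' : PE V, Fits G (S ∪ inn B1 ∪ {v | v ∈ P.l}) (F ∪ inn B1 ∪ {v | v ∈ P.l}) Q' →
      (∀ w, w ∈ Q'.l ↔ w ∈ Q.l) → Q'.l.length = Q.l.length → Q'.a ≠ Q'.b → Q'.b ∈ P.l →
      Improve G S F (B1 ++ P :: Q' :: B2) by
    have hQo := (ho Q (by simp)).1
    rcases hQ with h | h
    · refine (key Q.rev hQf.rev (by simp [PE.rev]) (by simp [PE.rev]) hQo.symm h).congr ?_ ?_ ?_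
      · intro w; simp [PE.rev]; grind
      · simp [PE.rev]; omega
      · simp [PE.rev]; omega
    · refine (key Q hQf (by simp) rfl hQo h).congr ?_ ?_ ?_
      · intro w; simp; grind
      · simp; omega
      · simp; omega
  intro Q' hQ' hmem hlen hQo hQb
  have ho1 : ∀ R ∈ B1, R.a ≠ R.b := fun R hR => (ho R (by simp [hR])).1
  have ho2 : ∀ R ∈ B2, R.a ≠ R.b ∧ R.l ≠ [] := fun R hR => ho R (by simp [hR])
  have hQ0 : Q'.l ≠ [] := by
    have := (ho Q (by simp)).2
    rw [← List.length_pos_iff] at *; omega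
  have hB2' : Valid G (S ∪ inn B1 ∪ {v | v ∈ P.l} ∪ {v | v ∈ Q'.l})
      (F ∪ inn B1 ∪ {v | v ∈ P.l} ∪ {v | v ∈ Q'.l}) B2 := by simpa only [hmem] using hB2
  have hcov' : ∀ w, w ∈ F ∨ w ∈ inn B1 ∨ w ∈ P.l ∨ w ∈ Q'.l ∨ w ∈ inn B2 := by
    intro w; have := hcov w; simp at this; rw [hmem]; grind
  obtain ⟨x, l, y⟩ := P
  obtain ⟨a, lq, b⟩ := Q'
  dsimp only at *
  have hl : (∃ v, l = [v]) ∨ ∃ u v, l = [u, v] := by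
    have := List.length_pos_iff.2 hPl
    have h : l.length = 1 ∨ l.length = 2 := by omega
    rcases h with h | h
    · exact Or.inl (List.length_eq_one_iff.1 h)
    · exact Or.inr (List.length_eq_two.1 h)
  rcases hl with ⟨v, rfl⟩ | ⟨u, v, rfl⟩
  · obtain rfl : b = v := by simpa using hQb
    have hQa := hQ'.ha
    have hSFa := hSF (a := a)
    have hQav := hQ'.av
    have hPav := hP.av
    have hch := hP.ch
    simp at hch
    simp only [Set.mem_union, Set.mem_ofPred_eq, List.mem_cons, List.not_mem_nil, or_false] at hQa hQav hPav
    have main : ∀ t, t ∈ S → a ≠ t → G.Adj b t → Improve G S F (B1 ++ ⟨x, [b], y⟩ :: ⟨a, lq, b⟩ :: B2) := by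
      intro t ht hat hadj
      refine Improve.fin hSF hB1 hB2' ho1 ho2 (by simp) hQ0 (N := ⟨a, lq ++ b :: [], t⟩)
        ⟨by simp; grind, Or.inl (hSF ht), ?_, ?_, ?_, fun h => absurd h hat⟩ ?_ ?_ hat
      · intro w; have := hPav w; have := hQav w; simp; grind
      · have := hQ'.nd; simp [List.nodup_append]; grind
      · exact chain_join hQ'.ch (by simp [hadj])
      · intro w; simp; grind
      · simp; omega
    by_cases hax : a = x
    · exact main y hPb (by grind) hch.2
    · exact main x hPa hax hch.1.symm
  · have : b = u ∨ b = v := by simpa using hQb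
    rcases this with rfl | rfl
    · have e : ∀ X : Set V, X ∪ {w | w ∈ [b, v]} = X ∪ {w | w ∈ [v, b]} := by
        intro X; ext w; simp; grind
      rw [e, e] at hQ' hB2'
      refine (np3 hdeg hSF hPo.symm hPb hPa hB1 (by simpa [PE.rev] using hP.rev) hQ' hB2' ho1 ho2 hQ0 hQo ?_).congr ?_ ?_ ?_
      · intro w; have := hcov' w; simp at this; grind
      · intro w; simp; grind
      · simp
      · simp
    · refine np3 hdeg hSF hPo hPa hPb hB1 hP hQ' hB2' ho1 ho2 hQ0 hQo ?_
      intro w; have := hcov' w; simp at this; grind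
end
end PE

namespace PE
section
variable {V : Type*} {G : SimpleGraph V}

lemma filt (L : List (PE V)) : ∀ {S F : Set V}, Valid G S F L → ∃ L', Valid G S F L' ∧
    (∀ w, w ∈ inn L' ↔ w ∈ inn L) ∧ evs L' = evs L ∧ cts L' = cts L ∧
    ∀ Q ∈ L', Q ∈ L ∧ Q.l ≠ [] := by
  induction L with
  | nil => intro S F h; exact ⟨[], h, by simp, rfl, rfl, by simp⟩
  | cons P L ih =>
    intro S F h
    obtain ⟨L', h1, h2, h3, h4, h5⟩ := ih h.2
    by_cases hl : P.l = []
    · refine ⟨L', by simpa [hl] using h1, by simp [hl, h2], by simp [hl, h3], by simp [hl, h4], ?_⟩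
      intro Q hQ; have := h5 Q hQ; simp [this]
    · refine ⟨P :: L', ⟨h.1, h1⟩, by simp [h2], by simp [h3], by simp [h4], ?_⟩
      intro Q hQ
      rcases List.mem_cons.1 hQ with rfl | hQ
      · simp [hl]
      · have := h5 Q hQ; simp [this]

lemma mainM (hdeg : ∀ u x v : V, ∃ z, G.Adj u z ∧ z ≠ x ∧ z ≠ v) (n : ℕ) :
    ∀ (L C : List (PE V)) (S : Set V), cts (C ++ L) = n → Valid G S S C →
    (∀ c ∈ C, c.a ∈ S ∧ c.b ∈ S ∧ c.a ≠ c.b ∧ c.l ≠ [] ∧ c.l.length < 3) →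
    Valid G S (S ∪ inn C) L → (∀ Q ∈ L, Q.a ≠ Q.b ∧ Q.l ≠ []) →
    (∀ w, w ∈ S ∨ w ∈ inn C ∨ w ∈ inn L) →
    ∃ A C', Valid G S S (A ++ C') ∧ (∀ Q ∈ A, Q.a ≠ Q.b ∧ 3 ≤ Q.l.length) ∧
      (∀ c ∈ C', (c.a ∈ S ∨ c.a ∈ inn A) ∧ (c.b ∈ S ∨ c.b ∈ inn A) ∧ c.a ≠ c.b ∧ c.l ≠ [] ∧
        c.l.length < 3) ∧ evs (A ++ C') ≤ evs (C ++ L) ∧ ∀ w, w ∈ S ∨ w ∈ inn (A ++ C') := by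
  induction n using Nat.strong_induction_on with
  | _ n ih =>
  intro L
  induction L with
  | nil =>
    intro C S hn hC hCs hL hLo hcov
    exact ⟨[], C, hC, by simp, fun c hc => by have := hCs c hc; grind, by simp, by simpa using hcov⟩
  | cons P B ihL =>
    intro C S hn hC hCs hL hLo hcov
    -- moving a long ear
    have move : ∀ P' B', Valid G S (S ∪ inn C) (P' :: B') → cts (C ++ P' :: B') ≤ n →
        (∀ Q ∈ P' :: B', Q.a ≠ Q.b) → 3 ≤ P'.l.length →
        (∀ w, w ∈ S ∨ w ∈ inn C ∨ w ∈ inn (P' :: B')) → evs (P' :: B') ≤ evs (P :: B) → 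
        ∃ A C', Valid G S S (A ++ C') ∧ (∀ Q ∈ A, Q.a ≠ Q.b ∧ 3 ≤ Q.l.length) ∧
      (∀ c ∈ C', (c.a ∈ S ∨ c.a ∈ inn A) ∧ (c.b ∈ S ∨ c.b ∈ inn A) ∧ c.a ≠ c.b ∧ c.l ≠ [] ∧
        c.l.length < 3) ∧ evs (A ++ C') ≤ evs (C ++ P :: B) ∧ ∀ w, w ∈ S ∨ w ∈ inn (A ++ C') := by
      intro P' B' hV hc ho h3 hcv he
      obtain ⟨B0, f1, f2, f3, f4, f5⟩ := filt B' hV.2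
      have hav := hV.1.av
      obtain ⟨A, C', h1, h2, h4, h5, h6⟩ := ih (cts (C ++ B0)) (by simp at hc ⊢; omega) B0 C
        (S ∪ {w | w ∈ P'.l}) rfl
        ((hC.enlarge (X := {w | w ∈ P'.l}) (fun w hw hw' => hav w hw' (Or.inr hw))).mono
          Set.subset_union_left subset_rfl)
        (fun c hc => ⟨Or.inl (hCs c hc).1, Or.inl (hCs c hc).2.1, (hCs c hc).2.2⟩)
        (f1.mono subset_rfl (by intro w; simp only [Set.mem_union]; grind))
        (fun Q hQ => ⟨ho Q (by simp [(f5 Q hQ).1]), (f5 Q hQ).2⟩)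
        (by intro w; have := hcv w; rw [f2]; simp only [mem_inn_cons] at this; simp only [Set.mem_union, Set.mem_ofPred_eq]; grind)
      refine ⟨P' :: A, C', ⟨hV.1.mono subset_rfl Set.subset_union_left, h1⟩, ?_, ?_, ?_, ?_⟩
      · intro Q hQ
        rcases List.mem_cons.1 hQ with rfl | hQ
        · exact ⟨ho Q (by simp), h3⟩
        · exact h2 Q hQ
      · intro c hc
        have := h4 c hc
        simp only [Set.mem_union, Set.mem_ofPred_eq, mem_inn_cons] at this ⊢
        grind
      · simp at h5 he ⊢; omega
      · intro w; have := h6 w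
        simp only [Set.mem_union, Set.mem_ofPred_eq, List.cons_append, mem_inn_cons] at this ⊢
        grind
    by_cases h3 : 3 ≤ P.l.length
    · exact move P B hL hn.le (fun Q hQ => (hLo Q hQ).1) h3 hcov le_rfl
    by_cases hex : ∃ Q ∈ B, Q.a ∈ P.l ∨ Q.b ∈ P.l
    · rcases nonpendant hdeg (Set.subset_union_left (t := inn C)) hL (hLo P (by simp)).1 (hLo P (by simp)).2
        (by omega) (fun Q hQ => hLo Q (by simp [hQ])) (by intro w; have := hcov w; simp only [Set.mem_union]; grind) hex with
        ⟨L', g1, g2, g3, g4, g5⟩ | ⟨P', B', g1, g2, g3, g4, g5, g6⟩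
      · obtain ⟨B0, f1, f2, f3, f4, f5⟩ := filt L' g1
        obtain ⟨A, C', h1, h2, h4, h5, h6⟩ := ih (cts ([] ++ (C ++ B0)))
          (by simp at g4 hn ⊢; omega) (C ++ B0) [] S rfl trivial (by simp)
          (by
            have := valid_append.2 ⟨hC, f1⟩
            simpa using this)
          (by
            intro Q hQ
            rcases List.mem_append.1 hQ with h | h
            · exact ⟨(hCs Q h).2.2.1, (hCs Q h).2.2.2.1⟩
            · exact ⟨g5 Q (f5 Q h).1, (f5 Q h).2⟩)
          (by intro w; have := hcov w; rw [mem_inn_append, f2, g2]; grind)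
        exact ⟨A, C', h1, h2, h4, by simp at h5 g3 ⊢; omega, h6⟩
      · exact move P' B' g1 (by simp at g4 hn ⊢; omega) g5 g6 (by intro w; rw [g2]; exact hcov w) g3
    · have hm : ∀ w, w ∈ inn (C ++ [P]) ↔ w ∈ inn C ∨ w ∈ P.l := by intro w; simp
      obtain ⟨A, C', h1, h2, h4, h5, h6⟩ := ihL (C ++ [P]) S (by simpa using hn)
        (valid_snoc.2 ⟨hC, hL.1.mono Set.subset_union_left subset_rfl⟩)
        (by
          intro Q hQ
          rcases List.mem_append.1 hQ with h | h
          · exact hCs Q h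
          · obtain rfl : Q = P := by simpa using h
            exact ⟨hL.1.ha, hL.1.hb, (hLo Q (by simp)).1, (hLo Q (by simp)).2, by omega⟩)
        ((hL.2.restrict (fun Q hQ => by
            simp only [Set.mem_ofPred_eq]
            exact not_or.1 (fun h => hex ⟨Q, hQ, h⟩))).mono subset_rfl
          (by intro w; simp only [Set.mem_union, hm, Set.mem_ofPred_eq]; grind))
        (fun Q hQ => hLo Q (by simp [hQ]))
        (by intro w; have := hcov w; rw [hm]; simp only [mem_inn_cons] at this; grind)
      exact ⟨A, C', h1, h2, h4, by simpa using h5, h6⟩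

/-- the whole improvement process for lists starting with a cycle -/
lemma process (hG : ∀ v : V, (G.induce ({v}ᶜ : Set V)).Connected)
    (hdeg : ∀ u x v : V, ∃ z, G.Adj u z ∧ z ≠ x ∧ z ≠ v) {r : V} {P : PE V} {B : List (PE V)}
    (hv : Valid G {r} {r} (P :: B)) (hcov : ∀ w, w = r ∨ w ∈ inn (P :: B)) :
    ∃ l A C', Valid G {r} {r} (⟨r, l, r⟩ :: A ++ C') ∧ 3 ≤ l.length ∧
      (∀ Q ∈ A, Q.a ≠ Q.b ∧ 3 ≤ Q.l.length) ∧
      (∀ c ∈ C', (c.a = r ∨ c.a ∈ l ∨ c.a ∈ inn A) ∧ (c.b = r ∨ c.b ∈ l ∨ c.b ∈ inn A) ∧ c.a ≠ c.b ∧ c.l ≠ [] ∧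
        c.l.length < 3) ∧ evs (⟨r, l, r⟩ :: A ++ C') ≤ evs (P :: B) ∧
      ∀ w, w = r ∨ w ∈ inn (⟨r, l, r⟩ :: A ++ C') := by
  have main : ∀ l B0, Valid G {r} {r} (⟨r, l, r⟩ :: B0) → (∀ w, w = r ∨ w ∈ inn (⟨r, l, r⟩ :: B0)) →
      3 ≤ l.length → (∀ Q ∈ B0, Q.a ≠ Q.b ∧ Q.l ≠ []) → evs (⟨r, l, r⟩ :: B0) ≤ evs (P :: B) →
      ∃ l A C', Valid G {r} {r} (⟨r, l, r⟩ :: A ++ C') ∧ 3 ≤ l.length ∧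
      (∀ Q ∈ A, Q.a ≠ Q.b ∧ 3 ≤ Q.l.length) ∧
      (∀ c ∈ C', (c.a = r ∨ c.a ∈ l ∨ c.a ∈ inn A) ∧ (c.b = r ∨ c.b ∈ l ∨ c.b ∈ inn A) ∧ c.a ≠ c.b ∧ c.l ≠ [] ∧
        c.l.length < 3) ∧ evs (⟨r, l, r⟩ :: A ++ C') ≤ evs (P :: B) ∧
      ∀ w, w = r ∨ w ∈ inn (⟨r, l, r⟩ :: A ++ C') := by
    intro l B0 h1 h2 h3 h4 h5
    obtain ⟨A, C', k1, k2, k3, k4, k5⟩ := mainM hdeg _ B0 [] ({r} ∪ {w | w ∈ l}) rfl trivial (by simp)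
      (by simpa using h1.2) h4 (by intro w; have := h2 w; simp at this ⊢; grind)
    refine ⟨l, A, C', ⟨h1.1, k1⟩, h3, k2, ?_, ?_, ?_⟩
    · intro c hc
      have := k3 c hc
      simp only [Set.mem_union, Set.mem_singleton_iff, Set.mem_ofPred_eq] at this
      grind
    · simp at k4 h5 ⊢; omega
    · intro w; have := k5 w; simp at this ⊢; grind
  obtain ⟨a, l, b⟩ := P
  obtain ⟨hP, hB⟩ := hv
  obtain rfl : a = r := hP.ha
  obtain rfl : b = a := hP.hb
  have hl2 := hP.cl rfl
  have hPav := hP.av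
  dsimp only at hl2 hPav
  obtain ⟨p, q, lt, rfl⟩ : ∃ p q lt, l = p :: q :: lt := by
    match l, hl2 with
    | p :: q :: lt, _ => exact ⟨p, q, lt, rfl⟩
  have hpb : p ≠ b := by simpa using hPav p (by simp)
  obtain ⟨B', hB', hc', he', ho'⟩ := openA hG _ _ B _ rfl rfl hB ⟨b, by simp, p, by simp, hpb.symm⟩
    (by intro w; have := hcov w; simp at this ⊢; grind)
  obtain ⟨B0, f1, f2, f3, -, f5⟩ := filt B' hB'
  have ho0 : ∀ Q ∈ B0, Q.a ≠ Q.b ∧ Q.l ≠ [] := fun Q hQ => ⟨ho' Q (f5 Q hQ).1, (f5 Q hQ).2⟩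
  have hc0 : ∀ w, w = b ∨ w ∈ p :: q :: lt ∨ w ∈ inn B0 := by
    intro w; have := hc' w; rw [f2]; simp at this ⊢; grind
  by_cases hlt : lt ≠ []
  · refine main (p :: q :: lt) B0 ⟨hP, f1⟩ ?_ ?_ ho0 ?_
    · intro w; have := hc0 w; simp at this ⊢; grind
    · have := List.length_pos_iff.2 hlt; simp; omega
    · simp; omega
  obtain rfl : lt = [] := by simpa using hlt
  have hpav : p ≠ b ∧ q ≠ b := by simpa using hPav
  have hch := hP.ch
  simp at hch
  have hnd := hP.nd
  simp at hnd
  match B0, f1, f3, ho0, hc0 with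
  | [], _, _, _, hc0 =>
    obtain ⟨z, z1, z2, z3⟩ := hdeg b p q
    have := hc0 z
    have := z1.ne
    simp at *
    grind
  | Q :: B1, f1, f3, ho0, hc0 =>
    obtain ⟨hQ, hB1⟩ := f1
    have hQl := List.length_pos_iff.2 (ho0 Q (by simp)).2
    have hQav := hQ.av
    have hQnd := hQ.nd
    have hQch := hQ.ch
    have hQr := hQ.rev.ch
    have hQo := (ho0 Q (by simp)).1
    have fin : ∀ l', l'.Nodup → (∀ w, w ∈ l' ↔ w = p ∨ w = q ∨ w ∈ Q.l) → l'.length = Q.l.length + 2 →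
        List.IsChain G.Adj (b :: l' ++ [b]) → _ := fun l' k1 k2 k3 k4 =>
      main l' B1 ⟨⟨by simp, by simp, by
          intro w; have := hQav w; have := k2 w; simp at *; grind, k1, k4, fun _ => by dsimp only; omega⟩,
        hB1.mono (by intro w; have := k2 w; simp at *; grind) (by intro w; have := k2 w; simp at *; grind)⟩
        (by intro w; have := hc0 w; have := k2 w; simp at *; grind) (by omega)
        (fun R hR => ho0 R (by simp [hR])) (by simp at *; omega)
    have ha := hQ.ha
    have hb := hQ.hb
    simp only [Set.mem_union, Set.mem_singleton_iff, Set.mem_ofPred_eq, List.mem_cons, List.not_mem_nil, or_false] at ha hb hQav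
    simp only [PE.rev] at hQr
    rcases ha with ha | ha | ha <;> rcases hb with hb | hb | hb <;> rw [ha, hb] at hQch hQr hQo
    · exact absurd rfl hQo
    · refine fin (Q.l ++ p :: [q]) ?_ ?_ ?_ (chain_join hQch (by simp [hch]))
      · simp [List.nodup_append]; grind
      · simp; grind
      · simp
    · refine fin (Q.l ++ q :: [p]) ?_ ?_ ?_ (chain_join hQch (by simp [hch.1.symm, hch.2.1.symm]))
      · simp [List.nodup_append]; grind
      · simp; grind
      · simp
    · refine fin (Q.l.reverse ++ p :: [q]) ?_ ?_ ?_ (chain_join hQr (by simp [hch]))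
      · simp [List.nodup_append]; grind
      · simp; grind
      · simp
    · exact absurd rfl hQo
    · refine fin ([] ++ p :: (Q.l ++ q :: [])) ?_ ?_ ?_ (chain_join (by simp [hch]) (chain_join hQch (by simp [hch])))
      · simp [List.nodup_append]; grind
      · simp; grind
      · simp
    · refine fin (Q.l.reverse ++ q :: [p]) ?_ ?_ ?_ (chain_join hQr (by simp [hch.1.symm, hch.2.1.symm]))
      · simp [List.nodup_append]; grind
      · simp; grind
      · simp
    · refine fin ([] ++ p :: (Q.l.reverse ++ q :: [])) ?_ ?_ ?_ (chain_join (by simp [hch]) (chain_join hQr (by simp [hch])))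
      · simp [List.nodup_append]; grind
      · simp; grind
      · simp
    · exact absurd rfl hQo
end
end PE

namespace PE
section
variable {V : Type*} {G : SimpleGraph V}

lemma exists_walk (l : List V) : ∀ (a b : V), List.IsChain G.Adj (a :: l ++ [b]) →
    ∃ w : G.Walk a b, w.support = a :: l ++ [b] := by
  induction l with
  | nil =>
    intro a b h
    have h : G.Adj a b := by simpa using h
    exact ⟨Walk.cons h Walk.nil, by simp⟩
  | cons c l ih =>
    intro a b h
    have h : G.Adj a c ∧ List.IsChain G.Adj (c :: l ++ [b]) := by simpa using h
    obtain ⟨w, hw⟩ := ih c b h.2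
    exact ⟨Walk.cons h.1 w, by simp [hw]⟩

lemma edge_mem_of_support {b : V} {a : V} (w : G.Walk a b) : ∀ (l : List V), w.support = l ++ [b] →
    ∀ e ∈ w.edges, ∃ v ∈ e, v ∈ l := by
  induction w with
  | nil => intro l _ e he; simp at he
  | @cons x y z h p ih =>
    intro l hl e he
    match l with
    | [] => simp at hl
    | c :: l' =>
      simp only [Walk.support_cons, List.cons_append, List.cons.injEq] at hl
      rw [Walk.edges_cons, List.mem_cons] at he
      rcases he with rfl | he
      · exact ⟨x, by simp, by simp [hl.1]⟩
      · obtain ⟨v, hv, hv'⟩ := ih l' hl.2 e he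
        exact ⟨v, hv, by simp [hv']⟩

def ofEar (P : Ear G) : PE V := ⟨P.a, P.walk.support.tail.dropLast, P.b⟩

lemma ofEar_support (P : Ear G) : P.walk.support = (ofEar P).a :: (ofEar P).l ++ [(ofEar P).b] := by
  obtain ⟨a, b, w, h1, h2⟩ := P
  cases w with
  | nil => simp at h1
  | cons h p =>
    simp only [ofEar, Walk.support_cons, List.tail_cons, List.cons_append, List.cons.injEq, true_and]
    have := List.dropLast_append_getLast p.support_ne_nil
    rw [Walk.getLast_support] at this
    exact this.symm

lemma ofEar_length (P : Ear G) : P.walk.length = (ofEar P).l.length + 1 := by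
  have h := congrArg List.length (ofEar_support P)
  simp at h
  omega

lemma ofEar_nd (P : Ear G) : (ofEar P).l.Nodup ∧ P.a ∉ (ofEar P).l ∧ P.b ∉ (ofEar P).l ∧
    (P.a = P.b → 2 ≤ (ofEar P).l.length) := by
  have hs := ofEar_support P
  have hlen := ofEar_length P
  have ha : (ofEar P).a = P.a := rfl
  have hb : (ofEar P).b = P.b := rfl
  rw [ha, hb] at hs
  rcases P.ear with ⟨h1, h2⟩ | ⟨h1, h2⟩
  · have := h2.support_nodup
    rw [hs] at this
    simp [List.nodup_append] at this
    refine ⟨by grind, by grind, by grind, fun h => absurd h h1⟩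
  · have h3 := h2.three_le_length
    have h4 := h2.support_nodup
    rw [Walk.support_copy, hs] at h4
    rw [Walk.length_copy] at h3
    simp [List.nodup_append] at h4
    refine ⟨h4.1, by grind, by grind, fun _ => by omega⟩

lemma ofEar_chain (P : Ear G) : List.IsChain G.Adj ((ofEar P).a :: (ofEar P).l ++ [(ofEar P).b]) := by
  rw [← ofEar_support]; exact P.walk.isChain_adj_support

lemma mem_vertices (P : Ear G) (v : V) : v ∈ P.vertices ↔ v = P.a ∨ v ∈ (ofEar P).l ∨ v = P.b := by
  have : v ∈ P.vertices ↔ v ∈ P.walk.support := Iff.rfl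
  rw [this, ofEar_support]
  simp [ofEar]

lemma mem_internal (P : Ear G) (v : V) : v ∈ P.internal ↔ v ∈ (ofEar P).l := by
  have : v ∈ P.internal ↔ v ∈ P.vertices ∧ ¬ (v = P.a ∨ v = P.b) := Iff.rfl
  rw [this, mem_vertices]
  have := ofEar_nd P
  grind

lemma exists_ear {S F : Set V} (hSF : S ⊆ F) {P : PE V} (h : Fits G S F P) :
    ∃ E : Ear G, ofEar E = P := by
  obtain ⟨a, l, b⟩ := P
  obtain ⟨w, hw⟩ := exists_walk l a b h.ch
  have hlen : w.length = l.length + 1 := by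
    have := congrArg List.length hw
    simp at this; omega
  have hal : a ∉ l := fun hh => h.av a hh (hSF h.ha)
  have hbl : b ∉ l := fun hh => h.av b hh (hSF h.hb)
  have hnd := h.nd
  have hcl := h.cl
  dsimp only at hnd hcl
  refine ⟨⟨a, b, w, by omega, ?_⟩, ?_⟩
  · by_cases hab : a = b
    · right
      subst hab
      refine ⟨rfl, ?_⟩
      have := hcl rfl
      rw [Walk.copy_rfl_rfl, Walk.isCycle_iff_isPath_tail_and_le_length]
      refine ⟨?_, by omega⟩
      rw [Walk.isPath_def, Walk.support_tail_of_not_nil _ (by rw [← Walk.length_eq_zero_iff]; omega), hw]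
      simp [List.nodup_append]; grind
    · left
      refine ⟨hab, ?_⟩
      rw [Walk.isPath_def, hw]
      simp [List.nodup_append]; grind
  · simp [ofEar, hw]

lemma validMap (L : List (Ear G)) : ∀ S : Set V, Valid G S S (L.map ofEar) ↔
    ∀ i : Fin L.length, (L.get i).endpoints ⊆ S ∪ {v | ∃ j : Fin L.length, (j : ℕ) < i ∧ v ∈ (L.get j).vertices} ∧
      (L.get i).internal ∩ (S ∪ {v | ∃ j : Fin L.length, (j : ℕ) < i ∧ v ∈ (L.get j).vertices}) = ∅ := by
  induction L with
  | nil => intro S; simp [Valid]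
  | cons P L ih =>
    intro S
    have hfit : Fits G S S (ofEar P) ↔ P.endpoints ⊆ S ∧ P.internal ∩ S = ∅ := by
      have hE : P.endpoints ⊆ S ↔ P.a ∈ S ∧ P.b ∈ S := by
        simp [Ear.endpoints, Set.insert_subset_iff]
      have hI : P.internal ∩ S = ∅ ↔ ∀ v ∈ (ofEar P).l, v ∉ S := by
        simp only [Set.eq_empty_iff_forall_notMem, Set.mem_inter_iff, mem_internal]; grind
      rw [hE, hI]
      constructor
      · intro h; exact ⟨⟨h.ha, h.hb⟩, h.av⟩
      · rintro ⟨⟨h1, h2⟩, h3⟩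
        exact ⟨h1, h2, h3, (ofEar_nd P).1, ofEar_chain P, (ofEar_nd P).2.2.2⟩
    have e0 : ∀ v, v ∈ (S ∪ {v | ∃ j : Fin (P :: L).length, (j : ℕ) < (0 : Fin (L.length + 1)) ∧
        v ∈ ((P :: L).get j).vertices}) ↔ v ∈ S := by
      intro v; simp
    have e1 : ∀ i : Fin L.length, P.endpoints ⊆ S → (S ∪ {v | ∃ j : Fin (P :: L).length, (j : ℕ) < i.succ ∧
        v ∈ ((P :: L).get j).vertices}) = (S ∪ {v | v ∈ (ofEar P).l}) ∪
        {v | ∃ j : Fin L.length, (j : ℕ) < i ∧ v ∈ (L.get j).vertices} := by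
      intro i hS
      have ha : P.a ∈ S := hS (by simp [Ear.endpoints])
      have hb : P.b ∈ S := hS (by simp [Ear.endpoints])
      ext v
      simp only [Set.mem_union, Set.mem_ofPred_eq]
      have : (∃ j : Fin (P :: L).length, (j : ℕ) < i.succ ∧ v ∈ ((P :: L).get j).vertices) ↔
        v ∈ P.vertices ∨ ∃ j : Fin L.length, (j : ℕ) < i ∧ v ∈ (L.get j).vertices := by
        simp only [List.length_cons]
        rw [Fin.exists_fin_succ]
        simp
      rw [this, mem_vertices]
      grind
    rw [List.map_cons, Valid, hfit, ih]
    simp only [List.length_cons]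
    rw [Fin.forall_fin_succ]
    have e0' := Set.ext e0
    refine ⟨fun ⟨h1, h2⟩ => ⟨?_, fun i => ?_⟩, fun ⟨h1, h2⟩ => ?_⟩
    · erw [e0']; exact h1
    · erw [e1 i h1.1]; exact h2 i
    · erw [e0'] at h1
      refine ⟨h1, fun i => ?_⟩
      have := h2 i
      erw [e1 i h1.1] at this
      exact this

lemma validEars (D : EarDecomp G) : Valid G {D.root} {D.root} (D.ears.map ofEar) := by
  rw [validMap]
  exact fun i => ⟨D.endpoints_sub i, D.internal_new i⟩

lemma evs_ofEar (L : List (Ear G)) : 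
    (L.countP fun P => decide (Even P.walk.length)) = evs (L.map ofEar) := by
  induction L with
  | nil => rfl
  | cons P L ih =>
    rw [List.countP_cons, ih, List.map_cons, evs_cons, ofEar_length]
    by_cases h : Even ((ofEar P).l.length + 1)
    · simp only [h, decide_true, if_true]
      rw [Nat.even_iff] at h; omega
    · simp only [h, decide_false, Bool.false_eq_true, if_false]
      rw [Nat.even_iff] at h; omega

lemma vertex_of_edge (P : Ear G) {e : Sym2 V} (he : e ∈ P.edges) {v : V} (hv : v ∈ e) :
    v ∈ P.vertices := by
  exact Walk.mem_support_of_mem_edges he hv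

lemma new_of_edge (P : Ear G) (hP : (ofEar P).l ≠ []) {e : Sym2 V} (he : e ∈ P.edges) :
    ∃ v ∈ e, v ∈ (ofEar P).l := by
  have hs := ofEar_support P
  obtain ⟨a, b, w, h1, h2⟩ := P
  cases w with
  | nil => simp at h1
  | @cons _ c _ h p =>
    have hs' : p.support = (ofEar ⟨a, b, Walk.cons h p, h1, h2⟩).l ++ [b] := by
      simpa [ofEar] using hs
    have he' : e = s(a, c) ∨ e ∈ p.edges := by simpa [Ear.edges] using he
    rcases he' with rfl | he'
    · refine ⟨c, by simp, ?_⟩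
      generalize (ofEar ⟨a, b, Walk.cons h p, h1, h2⟩).l = l at *
      match l with
      | [] => exact absurd rfl hP
      | d :: l' =>
        have := (Walk.cons_tail_support p).symm
        rw [hs'] at this
        simp at this
        simp [this]
    · exact edge_mem_of_support p _ hs' e he'

lemma cover (D : EarDecomp G) (hadj : ∀ w, ∃ z, G.Adj w z) :
    ∀ w, w = D.root ∨ w ∈ inn (D.ears.map ofEar) := by
  intro w
  obtain ⟨z, hz⟩ := hadj w
  obtain ⟨i, hi, -⟩ := D.edge_cover s(w, z) hz
  have h1 := vertex_of_edge _ hi (v := w) (by simp)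
  have hm : ofEar (D.ears.get i) ∈ D.ears.map ofEar := List.mem_map_of_mem (List.get_mem _ _)
  have h2 := (validEars D).ends _ hm
  rw [mem_vertices] at h1
  rcases h1 with h | h | h
  · rw [h]; exact h2.1
  · exact Or.inr ⟨_, hm, h⟩
  · rw [h]; exact h2.2

lemma edges_pairwise (L : List (Ear G)) : ∀ S : Set V, Valid G S S (L.map ofEar) →
    (∀ P ∈ L, (ofEar P).l ≠ []) → L.Pairwise (fun P Q => ∀ e ∈ P.edges, e ∉ Q.edges) := by
  induction L with
  | nil => intros; exact List.Pairwise.nil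
  | cons P L ih =>
    intro S h hl
    refine List.Pairwise.cons ?_ (ih _ h.2 fun Q hQ => hl Q (by simp [hQ]))
    intro Q hQ e he he'
    obtain ⟨v, hv, hv'⟩ := new_of_edge Q (hl Q (by simp [hQ])) he'
    have h1 := vertex_of_edge P he hv
    refine Valid.avoid h.2 v ⟨_, List.mem_map_of_mem hQ, hv'⟩ ?_
    rw [mem_vertices] at h1
    rcases h1 with rfl | h1 | rfl
    · exact Or.inl h.1.ha
    · exact Or.inr h1
    · exact Or.inl h.1.hb

lemma valid_triv (L : List (Ear G)) : (∀ P ∈ L, (ofEar P).l = []) → ∀ S : Set V, (∀ w, w ∈ S) →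
    Valid G S S (L.map ofEar) := by
  induction L with
  | nil => intros; trivial
  | cons P L ih =>
    intro h S hS
    refine ⟨⟨hS _, hS _, ?_, (ofEar_nd P).1, ofEar_chain P, (ofEar_nd P).2.2.2⟩, 
      ih (fun Q hQ => h Q (by simp [hQ])) _ fun w => Or.inl (hS w)⟩
    rw [h P (by simp)]; simp

lemma exists_ears (L : List (PE V)) : ∀ S : Set V, Valid G S S L → ∃ E : List (Ear G), E.map ofEar = L := by
  induction L with
  | nil => intros; exact ⟨[], rfl⟩
  | cons P L ih =>
    intro S h
    obtain ⟨e, he⟩ := exists_ear subset_rfl h.1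
    obtain ⟨E, hE⟩ := ih _ h.2
    exact ⟨e :: E, by simp [he, hE]⟩

open Classical in
lemma build [Fintype V] {r : V} {L : List (PE V)} (h : Valid G {r} {r} L) (hl : ∀ P ∈ L, P.l ≠ [])
    (hcov : ∀ w, w = r ∨ w ∈ inn L) : ∃ (D : EarDecomp G) (E T : List (Ear G)), D.ears = E ++ T ∧
      E.map ofEar = L ∧ ∀ P ∈ T, (ofEar P).l = [] := by
  obtain ⟨E, hE⟩ := exists_ears L _ h
  have htr : ∀ e : G.edgeSet, ∃ P : Ear G, P.edges = [e.1] ∧ (ofEar P).l = [] := by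
    rintro ⟨e, he⟩
    induction e using Sym2.ind with
    | _ x y => exact ⟨trivialEar G he, rfl, rfl⟩
  choose t ht1 ht2 using htr
  let U := (Finset.univ.filter (fun e : G.edgeSet => ∀ P ∈ E, e.1 ∉ P.edges)).toList
  have hU : ∀ e, e ∈ U ↔ ∀ P ∈ E, e.1 ∉ P.edges := by intro e; simp [U]
  have hUn : U.Nodup := Finset.nodup_toList _
  have hT : ∀ P ∈ U.map t, (ofEar P).l = [] := by
    intro P hP
    obtain ⟨e, -, rfl⟩ := List.mem_map.1 hP
    exact ht2 e
  have hV : Valid G {r} {r} ((E ++ U.map t).map ofEar) := by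
    rw [List.map_append, hE]
    exact valid_append.2 ⟨h, valid_triv _ hT _ hcov⟩
  have hV' := (validMap _ _).1 hV
  have hpw : (E ++ U.map t).Pairwise (fun P Q => ∀ e ∈ P.edges, e ∉ Q.edges) := by
    rw [List.pairwise_append]
    refine ⟨edges_pairwise E {r} (by rw [hE]; exact h) ?_, ?_, ?_⟩
    · intro P hP
      exact hl _ (by rw [← hE]; exact List.mem_map_of_mem hP)
    · rw [List.pairwise_map]
      refine hUn.imp ?_
      intro e f hef
      simp only [ht1, List.mem_singleton, forall_eq]
      exact fun h => hef (Subtype.ext h)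
    · intro P hP Q hQ e he he'
      obtain ⟨f, hf, rfl⟩ := List.mem_map.1 hQ
      rw [ht1, List.mem_singleton] at he'
      subst he'
      exact (hU f).1 hf P hP he
  rw [List.pairwise_iff_get] at hpw
  refine ⟨⟨r, E ++ U.map t, fun i => (hV' i).1, fun i => (hV' i).2, ?_⟩, E, U.map t, rfl, hE, hT⟩
  intro e he
  have hex : ∃ P ∈ E ++ U.map t, e ∈ P.edges := by
    by_cases hh : ∃ P ∈ E, e ∈ P.edges
    · obtain ⟨P, hP, hh⟩ := hh
      exact ⟨P, by simp [hP], hh⟩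
    · push Not at hh
      refine ⟨t ⟨e, he⟩, ?_, by rw [ht1]; simp⟩
      exact List.mem_append_right _ (List.mem_map_of_mem ((hU _).2 hh))
  obtain ⟨P, hP, heP⟩ := hex
  obtain ⟨i, rfl⟩ := List.get_of_mem hP
  refine ⟨i, heP, ?_⟩
  intro j hj
  rcases lt_trichotomy i j with hij | hij | hij
  · exact absurd hj (hpw i j hij e heP)
  · exact hij.symm
  · exact absurd heP (hpw j i hij e hj)
end
end PE

namespace PE
section
variable {V : Type*} {G : SimpleGraph V}

lemma first_hit {S : Set V} {t b : V} (p : G.Walk t b) : p.IsPath → b ∈ S → t ∉ S →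
    ∃ l z, z ∈ S ∧ z ∈ p.support ∧ (∀ w ∈ t :: l, w ∉ S ∧ w ∈ p.support) ∧ (t :: l).Nodup ∧
      List.IsChain G.Adj (t :: l ++ [z]) := by
  induction p with
  | nil => intro _ h1 h2; exact absurd h1 h2
  | @cons x y z h p ih =>
    intro hp hb ht
    rw [Walk.cons_isPath_iff] at hp
    by_cases hy : y ∈ S
    · exact ⟨[], y, hy, by simp, by simpa using ht, by simp, by simpa using h⟩
    · obtain ⟨l, w, h1, h2, h3, h4, h5⟩ := ih hp.1 hb hy
      refine ⟨y :: l, w, h1, by simp [h2], ?_, ?_, ?_⟩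
      · intro c hc
        rcases List.mem_cons.1 hc with rfl | hc
        · simp [ht]
        · have := h3 c hc; simp [this]
      · rw [List.nodup_cons]
        exact ⟨fun hx => hp.2 (h3 x hx).2, h4⟩
      · simpa using ⟨h, by simpa using h5⟩

lemma hit (hG : ∀ v : V, (G.induce ({v}ᶜ : Set V)).Connected) {S : Set V} {v t b : V}
    (htv : t ≠ v) (hbv : b ≠ v) (hb : b ∈ S) (ht : t ∉ S) :
    ∃ l z, z ∈ S ∧ z ≠ v ∧ (∀ w ∈ t :: l, w ∉ S ∧ w ≠ v) ∧ (t :: l).Nodup ∧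
      List.IsChain G.Adj (t :: l ++ [z]) := by
  classical
  obtain ⟨p⟩ := (hG v).preconnected ⟨t, by simpa using htv⟩ ⟨b, by simpa using hbv⟩
  let q : G.Walk t b := p.toPath.1.map (Embedding.induce ({v}ᶜ : Set V)).toHom
  have hq : q.IsPath := Walk.map_isPath_of_injective (f := (Embedding.induce (G := G) ({v}ᶜ : Set V)).toHom) Subtype.val_injective p.toPath.2
  have hs : ∀ w ∈ q.support, w ≠ v := by
    intro w hw
    have hw : w ∈ (p.toPath.1.map (Embedding.induce ({v}ᶜ : Set V)).toHom).support := hw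
    rw [Walk.support_map, List.mem_map] at hw
    obtain ⟨w', -, rfl⟩ := hw
    exact w'.2
  obtain ⟨l, z, h1, h2, h3, h4, h5⟩ := first_hit q hq hb ht
  exact ⟨l, z, h1, hs z h2, fun w hw => ⟨(h3 w hw).1, hs w (h3 w hw).2⟩, h4, h5⟩

lemma exists_list [Fintype V] (hG : ∀ v : V, (G.induce ({v}ᶜ : Set V)).Connected) (n : ℕ) :
    ∀ S : Set V, Sᶜ.ncard = n → (∃ s ∈ S, ∃ t ∈ S, s ≠ t) → ∃ L, Valid G S S L ∧ (∀ Q ∈ L, Q.l ≠ []) ∧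
      ∀ w, w ∈ S ∨ w ∈ inn L := by
  induction n using Nat.strong_induction_on with
  | _ n ih =>
  rintro S hn ⟨s0, hs0, t0, ht0, hst⟩
  by_cases hS : ∀ w, w ∈ S
  · exact ⟨[], trivial, by simp, fun w => Or.inl (hS w)⟩
  push Not at hS
  obtain ⟨w0, hw0⟩ := hS
  obtain ⟨s, t, -, -, hs, ht, hadj⟩ := exists_cross (hG t0) (X := S) hst (by rintro rfl; exact hw0 ht0) hs0 hw0
  obtain ⟨b, hb, hbs⟩ : ∃ b ∈ S, b ≠ s := by
    by_cases h : s0 = s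
    · exact ⟨t0, ht0, by rw [← h]; exact hst.symm⟩
    · exact ⟨s0, hs0, h⟩
  obtain ⟨l, z, h1, h2, h3, h4, h5⟩ := hit hG hadj.ne' hbs hb ht
  obtain ⟨L, k1, k2, k3⟩ := ih ((S ∪ {w | w ∈ t :: l})ᶜ.ncard) (by
    rw [← hn]
    refine Set.ncard_lt_ncard ?_ (Set.toFinite _)
    refine ⟨fun w hw hw' => hw (Or.inl hw'), fun h => ?_⟩
    exact h (a := t) ht (Or.inr (by simp))) (S ∪ {w | w ∈ t :: l}) rfl
    ⟨s0, Or.inl hs0, t0, Or.inl ht0, hst⟩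
  refine ⟨⟨s, t :: l, z⟩ :: L, ⟨⟨hs, h1, fun w hw => (h3 w hw).1, h4, ?_, fun h => absurd h h2.symm⟩, k1⟩, ?_, ?_⟩
  · simpa using ⟨hadj, by simpa using h5⟩
  · intro Q hQ
    rcases List.mem_cons.1 hQ with rfl | hQ
    · simp
    · exact k2 Q hQ
  · intro w; have := k3 w
    simp only [Set.mem_union, Set.mem_ofPred_eq, mem_inn_cons] at this ⊢
    grind

lemma exists_decomp [Fintype V] (hG : ∀ v : V, (G.induce ({v}ᶜ : Set V)).Connected)
    (hdeg : ∀ u x v : V, ∃ z, G.Adj u z ∧ z ≠ x ∧ z ≠ v) (r : V) : Nonempty (EarDecomp G) := by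
  obtain ⟨t, ht, -⟩ := hdeg r r r
  obtain ⟨t', ht', htt, -⟩ := hdeg r t t
  obtain ⟨l, z, h1, h2, h3, h4, h5⟩ := hit hG (S := {t'}) (v := r) ht.ne' ht'.ne' rfl htt.symm
  obtain rfl : z = t' := h1
  obtain ⟨L, k1, k2, k3⟩ := exists_list hG _ ({r} ∪ {w | w ∈ t :: l ++ [z]}) rfl
    ⟨r, by simp, t, by simp, ht.ne⟩
  have hv : Valid G {r} {r} (⟨r, t :: l ++ [z], r⟩ :: L) := by
    refine ⟨⟨rfl, rfl, ?_, ?_, ?_, fun _ => by simp⟩, k1⟩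
    · intro w hw
      rcases List.mem_append.1 hw with hw | hw
      · exact (h3 w hw).2
      · obtain rfl : w = z := by simpa using hw
        exact h2
    · show (t :: l ++ [z]).Nodup
      rw [List.nodup_append]
      refine ⟨h4, by simp, ?_⟩
      intro a ha b hb
      obtain rfl : b = z := by simpa using hb
      exact (h3 a ha).1
    · have : List.IsChain G.Adj (r :: ((t :: l) ++ z :: []) ++ [r]) :=
        chain_join (by simpa using ⟨ht, by simpa using h5⟩) (by simpa using ht'.symm)
      exact this
  obtain ⟨D, -⟩ := build hv (by
    intro Q hQ
    rcases List.mem_cons.1 hQ with rfl | hQ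
    · simp
    · exact k2 Q hQ) (by
    intro w; have := k3 w
    simp only [Set.mem_union, Set.mem_ofPred_eq, mem_inn_cons, Set.mem_singleton_iff] at this ⊢
    grind)
  exact ⟨D⟩

theorem final [Fintype V] (hG : ∀ v : V, (G.induce ({v}ᶜ : Set V)).Connected)
    (hdeg : ∀ u x v : V, ∃ z, G.Adj u z ∧ z ≠ x ∧ z ≠ v) (r0 : V) :
    ∃ D : EarDecomp G, D.IsOpen ∧ D.evenEars = phi G ∧
      ∀ i : Fin D.ears.length, (D.ears.get i).IsShort → D.IsPendant i := by
  have hne : {n | ∃ D : EarDecomp G, D.evenEars = n}.Nonempty := by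
    obtain ⟨D⟩ := exists_decomp hG hdeg r0
    exact ⟨_, D, rfl⟩
  obtain ⟨D0, hD0⟩ : ∃ D : EarDecomp G, D.evenEars = phi G := Nat.sInf_mem hne
  have hv := validEars D0
  have hc := cover D0 (fun w => by obtain ⟨z, hz, -⟩ := hdeg w w w; exact ⟨z, hz⟩)
  have he : D0.evenEars = evs (D0.ears.map ofEar) := evs_ofEar _
  obtain ⟨P, B, hPB⟩ : ∃ P B, D0.ears.map ofEar = P :: B := by
    cases hL : D0.ears.map ofEar with
    | nil =>
      rw [hL] at hc
      obtain ⟨z, hz, hz1, -⟩ := hdeg D0.root D0.root D0.root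
      have := hc z
      simp at this
      exact absurd this hz1
    | cons P B => exact ⟨P, B, rfl⟩
  rw [hPB] at hv hc he
  obtain ⟨l, A, C, h1, h2, h3, h4, h5, h6⟩ := process hG hdeg hv hc
  obtain ⟨D, E, T, hET, hE, hT⟩ := build h1 (by
    intro Q hQ
    simp only [List.cons_append, List.mem_cons, List.mem_append] at hQ
    rw [← List.length_pos_iff]
    rcases hQ with rfl | hQ | hQ
    · dsimp only; omega
    · have := h3 Q hQ; omega
    · exact List.length_pos_iff.2 (h4 Q hQ).2.2.2.1) h6
  have hmem : ∀ e ∈ D.ears, ofEar e ∈ (⟨D0.root, l, D0.root⟩ :: A ++ C : List (PE V)) ∨ (ofEar e).l = [] := by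
    intro e he
    rw [hET, List.mem_append] at he
    rcases he with he | he
    · left; rw [← hE]; exact List.mem_map_of_mem he
    · exact Or.inr (hT e he)
  have hTe : evs (T.map ofEar) = 0 := by
    clear hET hmem
    induction T with
    | nil => rfl
    | cons P T ih =>
      rw [List.map_cons, evs_cons, ih fun Q hQ => hT Q (by simp [hQ]), hT P (by simp)]; simp
  have hDe : D.evenEars ≤ phi G := by
    have : D.evenEars = evs (D.ears.map ofEar) := evs_ofEar _
    rw [this, hET, List.map_append, evs_append, hTe, hE, ← hD0, he]
    exact h5
  refine ⟨D, ?_, le_antisymm hDe (Nat.sInf_le ⟨D, rfl⟩), ?_⟩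
  · intro i hi
    match E, hE with
    | [], hE => simp at hE
    | e0 :: E', hE =>
    rw [List.map_cons, List.cons_append, List.cons.injEq] at hE
    have hm : D.ears.get i ∈ E' ++ T := by
      have h : D.ears = e0 :: (E' ++ T) := by rw [hET]; rfl
      have hlt := i.2
      have : D.ears.get i = (e0 :: (E' ++ T))[i.1]'(by rw [← h]; exact hlt) := by
        simp only [List.get_eq_getElem]
        congr 1
      rw [this, List.getElem_cons]
      rw [dif_neg (by omega)]
      exact List.getElem_mem _
    show (D.ears.get i).a ≠ (D.ears.get i).b
    rcases List.mem_append.1 hm with hm | hm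
    · have h : ofEar (D.ears.get i) ∈ A ++ C := by rw [← hE.2]; exact List.mem_map_of_mem hm
      rcases List.mem_append.1 h with h | h
      · exact (h3 _ h).1
      · exact (h4 _ h).2.2.1
    · intro hab
      have := (ofEar_nd _).2.2.2 hab
      rw [hT _ hm] at this
      simp at this
  · intro i hi
    have hlen := ofEar_length (D.ears.get i)
    have hi' : (ofEar (D.ears.get i)).l.length = 1 ∨ (ofEar (D.ears.get i)).l.length = 2 := by
      rcases hi with h | h
      · left; omega
      · right; omega
    have hiC : ofEar (D.ears.get i) ∈ C := by
      rcases hmem _ (List.get_mem _ i) with h | h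
      · simp only [List.cons_append, List.mem_cons, List.mem_append] at h
        rcases h with h | h | h
        · rw [h] at hi'; dsimp only at hi'; omega
        · have := h3 _ h; omega
        · exact h
      · rw [h] at hi'; simp at hi'
    obtain ⟨hA, hC⟩ := valid_append.1 h1
    have hav := hC.avoid
    refine ⟨?_, ?_⟩
    · intro h
      have h : (D.ears.get i).walk.length = 1 := h
      omega
    · intro j _ hj
      have hjlen := ofEar_length (D.ears.get j)
      have hj0 : (ofEar (D.ears.get j)).l ≠ [] := by
        intro h
        rw [h] at hjlen
        exact hj hjlen
      have hZ : ((D.ears.get j).a = D0.root ∨ (D.ears.get j).a ∈ inn (⟨D0.root, l, D0.root⟩ :: A)) ∧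
          ((D.ears.get j).b = D0.root ∨ (D.ears.get j).b ∈ inn (⟨D0.root, l, D0.root⟩ :: A)) := by
        rcases hmem _ (List.get_mem _ j) with h | h
        · rcases List.mem_append.1 h with h | h
          · exact hA.ends _ h
          · have := h4 _ h
            simp only [mem_inn_cons]
            exact ⟨this.1, this.2.1⟩
        · exact absurd h hj0
      rw [mem_internal, mem_internal]
      exact ⟨fun h => hav _ ⟨_, hiC, h⟩ hZ.1, fun h => hav _ ⟨_, hiC, h⟩ hZ.2⟩
end
end PE

/-- Theorem 1. Every 2-vertex-connected simple graph of minimum degree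
at least `3` has an open ear-decomposition with exactly `φ(G)` even ears in which every
short ear is pendant. -/
theorem statement_1 {V : Type*} [Fintype V] [DecidableEq V] (G : SimpleGraph V)
    [DecidableRel G.Adj]
    (h2 : TwoVertexConnected G) (hdeg : ∀ v : V, 3 ≤ G.degree v) :
    ∃ D : EarDecomp G, D.IsOpen ∧ D.evenEars = phi G ∧
      ∀ i : Fin D.ears.length, (D.ears.get i).IsShort → D.IsPendant i := by
  classical
  have hd : ∀ u x v : V, ∃ z, G.Adj u z ∧ z ≠ x ∧ z ≠ v := by
    intro u x v
    by_contra hcon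
    push Not at hcon
    have hsub : G.neighborFinset u ⊆ {x, v} := by
      intro z hz
      rw [SimpleGraph.mem_neighborFinset] at hz
      have := hcon z hz
      simp only [Finset.mem_insert, Finset.mem_singleton]
      by_cases h : z = x
      · exact Or.inl h
      · exact Or.inr (this h)
    have h1 := Finset.card_le_card hsub
    have h3 := Finset.card_le_two (a := x) (b := v)
    have h4 := hdeg u
    rw [← SimpleGraph.card_neighborFinset_eq_degree] at h4
    omega
  have hne : Nonempty V := by
    have h := h2.1
    by_contra hcon
    rw [not_nonempty_iff] at hcon
    rw [Nat.card_of_isEmpty] at h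
    omega
  exact PE.final h2.2 hd hne.some
end

section
/- Every 2-vertex-connected simple graph G with minimum degree at least 3 has an open ear-decomposition with exactly φ(G) even ears whose first ear P1 (the unique closed ear) is long, i.e., has at least 4 edges. -/
open SimpleGraph

variable {V : Type*}

namespace EarPf

variable {G : SimpleGraph V}

def openEar {a b : V} (p : G.Walk a b) (hp : p.IsPath) (h : a ≠ b) : Ear G where
  a := a
  b := b
  walk := p
  length_pos := by
    cases p with
    | nil => exact absurd rfl h
    | cons _ _ => simp
  ear := Or.inl ⟨h, hp⟩

def cycEar {a : V} (p : G.Walk a a) (hp : p.IsCycle) : Ear G where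
  a := a
  b := a
  walk := p
  length_pos := by have := hp.three_le_length; omega
  ear := Or.inr ⟨rfl, by simpa using hp⟩

def rev (P : Ear G) : Ear G where
  a := P.b
  b := P.a
  walk := P.walk.reverse
  length_pos := by simpa using P.length_pos
  ear := by
    obtain ⟨a, b, w, hl, he⟩ := P
    rcases he with ⟨h1, h2⟩ | ⟨h, hc⟩
    · exact Or.inl ⟨h1.symm, h2.reverse⟩
    · dsimp only at *
      subst h
      exact Or.inr ⟨rfl, by simpa using hc.reverse⟩

def Fits (U : Set V) (P : Ear G) : Prop :=
  P.a ∈ U ∧ P.b ∈ U ∧ ∀ v ∈ P.walk.support, v ∈ U → v = P.a ∨ v = P.b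

def VS (P : Ear G) : Set V := {v | v ∈ P.walk.support}

def Valid : Set V → List (Ear G) → Prop
  | _, [] => True
  | U, P :: l => Fits U P ∧ Valid (U ∪ VS P) l

def AllE (l : List (Ear G)) : List (Sym2 V) := l.flatMap fun P => P.walk.edges

def evc (l : List (Ear G)) : ℕ := l.countP fun P => decide (Even P.walk.length)

lemma VS_rev (P : Ear G) : VS (rev P) = VS P := by
  ext v; simp [VS, rev]

lemma Fits_rev {U : Set V} {P : Ear G} (h : Fits U P) : Fits U (rev P) := by
  refine ⟨h.2.1, h.1, fun v hv hU => ?_⟩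
  have := h.2.2 v (by simpa [rev] using hv) hU
  exact this.symm

lemma a_mem (P : Ear G) : P.a ∈ P.walk.support := P.walk.start_mem_support
lemma b_mem (P : Ear G) : P.b ∈ P.walk.support := P.walk.end_mem_support

lemma split (P : Ear G) {u : V} (hu : u ∈ P.walk.support) (ha : u ≠ P.a) (hb : u ≠ P.b) :
    ∃ (L : G.Walk P.a u) (R : G.Walk u P.b), P.walk = L.append R ∧ L.IsPath ∧ R.IsPath ∧
      ∀ v ∈ L.support, v ∈ R.support → v = u ∨ (v = P.a ∧ v = P.b) := by
  classical
  obtain ⟨a, b, w, hl, he⟩ := P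
  dsimp only at *
  refine ⟨w.takeUntil u hu, w.dropUntil u hu, (w.take_spec hu).symm, ?_⟩
  have hspec := w.take_spec hu
  generalize w.takeUntil u hu = L at *
  generalize w.dropUntil u hu = R at *
  subst hspec
  have hLs : L.support = a :: L.support.tail := L.cons_tail_support.symm
  have hRs : R.support = u :: R.support.tail := R.cons_tail_support.symm
  have hu1 : u ∈ L.support.tail := by
    have := L.end_mem_support
    rw [hLs] at this
    rcases List.mem_cons.1 this with h | h
    · exact absurd h ha
    · exact h
  have hb1 : b ∈ R.support.tail := by
    have := R.end_mem_support
    rw [hRs] at this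
    rcases List.mem_cons.1 this with h | h
    · exact absurd h.symm hb
    · exact h
  have key : (L.support.tail ++ R.support.tail).Nodup ∧ a ∉ L.support.tail ∧
      (a ∈ R.support.tail → a = b) := by
    rcases he with ⟨hne, hp⟩ | ⟨h, hc⟩
    · have := hp.support_nodup
      rw [SimpleGraph.Walk.support_append, hLs, List.cons_append, List.nodup_cons] at this
      refine ⟨this.2, fun h => this.1 (List.mem_append_left _ h),
        fun h => absurd (List.mem_append_right _ h) this.1⟩
    · subst h
      have := hc.support_nodup
      rw [SimpleGraph.Walk.copy_rfl_rfl, SimpleGraph.Walk.support_append, hLs, List.cons_append,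
        List.tail_cons] at this
      refine ⟨this, fun h => ?_, fun _ => rfl⟩
      exact (List.disjoint_of_nodup_append this) h hb1
  obtain ⟨k1, k2, k3⟩ := key
  have hdis := List.disjoint_of_nodup_append k1
  have k4 := List.nodup_append'.1 k1
  refine ⟨?_, ?_, ?_⟩
  · rw [SimpleGraph.Walk.isPath_def, hLs, List.nodup_cons]
    exact ⟨k2, k4.1⟩
  · rw [SimpleGraph.Walk.isPath_def, hRs, List.nodup_cons]
    exact ⟨fun h => hdis hu1 h, k4.2.1⟩
  · intro v hv hv'
    rw [hLs] at hv
    rw [hRs] at hv'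
    rcases List.mem_cons.1 hv' with h | h
    · exact Or.inl h
    · rcases List.mem_cons.1 hv with h' | h'
      · subst h'
        exact Or.inr ⟨rfl, k3 h⟩
      · exact absurd h (hdis h')

lemma isPath_append {a u c : V} (L : G.Walk a u) (Q : G.Walk u c) (hL : L.IsPath)
    (hQ : Q.IsPath) (h : ∀ v ∈ L.support, v ∈ Q.support → v = u) : (L.append Q).IsPath := by
  rw [SimpleGraph.Walk.isPath_def, SimpleGraph.Walk.support_append]
  have hQs : Q.support = u :: Q.support.tail := Q.cons_tail_support.symm
  have h2 := hQ.support_nodup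
  rw [hQs, List.nodup_cons] at h2
  refine List.nodup_append'.2 ⟨hL.support_nodup, h2.2, ?_⟩
  intro v hv hv'
  have := h v hv (by rw [hQs]; exact List.mem_cons_of_mem _ hv')
  subst this
  exact h2.1 hv'

lemma parity {l r q : ℕ} (h : ¬ (¬ Even l ∧ Even r ∧ ¬ Even q)) :
    ((if Even (l + q) then 1 else 0) + (if Even r then 1 else 0) : ℕ) ≤
    (if Even (l + r) then 1 else 0) + (if Even q then 1 else 0) := by
  simp only [Nat.even_add]
  by_cases hl : Even l <;> by_cases hr : Even r <;> by_cases hq : Even q <;>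
    simp only [hl, hr, hq, not_true, not_false_iff, true_and, and_true, if_true, if_false,
      iff_true, iff_false, true_iff, false_iff] at h ⊢ <;> simp at h ⊢

lemma evc_pair (P Q : Ear G) : evc [P, Q] =
    (if Even P.walk.length then 1 else 0) + (if Even Q.walk.length then 1 else 0) := by
  simp [evc, List.countP_cons]; omega

lemma core {a b u c : V} (U : Set V) (L : G.Walk a u) (R : G.Walk u b) (Q : G.Walk u c)
    (hL : L.IsPath) (hR : R.IsPath) (hQ : Q.IsPath)
    (hLR : ∀ v ∈ L.support, v ∈ R.support → v = u ∨ (v = a ∧ v = b))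
    (hua : u ≠ a) (hub : u ≠ b) (huc : u ≠ c) (hac : a ≠ c) (hbc : b ≠ c)
    (ha : a ∈ U) (hb : b ∈ U) (hc : c ∈ U) (huU : u ∉ U)
    (hLU : ∀ v ∈ L.support, v ∈ U → v = a ∨ v = b)
    (hRU : ∀ v ∈ R.support, v ∈ U → v = a ∨ v = b)
    (hQU : ∀ v ∈ Q.support, v ∈ U → v = c)
    (hQL : ∀ v ∈ Q.support, v ∈ L.support → v = u ∨ v = c)
    (hQR : ∀ v ∈ Q.support, v ∈ R.support → v = u ∨ v = c)
    (hpar : ¬ (¬ Even L.length ∧ Even R.length ∧ ¬ Even Q.length)) :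
    ∃ A B : Ear G, Fits U A ∧ Fits (U ∪ VS A) B ∧ A.a = a ∧ A.b = c ∧
      (VS A ∪ VS B = {v | v ∈ L.support ∨ v ∈ R.support ∨ v ∈ Q.support}) ∧
      AllE [A, B] = (L.edges ++ Q.edges) ++ R.edges ∧
      evc [A, B] ≤ (if Even (L.length + R.length) then 1 else 0) +
        (if Even Q.length then 1 else 0) := by
  have hcL : c ∉ L.support := fun h => by
    rcases hLU c h hc with h | h
    · exact hac h.symm
    · exact hbc h.symm
  have hcR : c ∉ R.support := fun h => by
    rcases hRU c h hc with h | h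
    · exact hac h.symm
    · exact hbc h.symm
  have hp : (L.append Q).IsPath := isPath_append L Q hL hQ (fun v h1 h2 => by
    rcases hQL v h2 h1 with h | h
    · exact h
    · subst h; exact absurd h1 hcL)
  refine ⟨openEar _ hp hac, openEar R hR hub, ?_, ?_, rfl, rfl, ?_, ?_, ?_⟩
  · refine ⟨ha, hc, fun v hv hU => ?_⟩
    dsimp only [openEar] at *
    rw [SimpleGraph.Walk.mem_support_append_iff] at hv
    rcases hv with hv | hv
    · rcases hLU v hv hU with h | h
      · exact Or.inl h
      · subst h
        rcases hLR v hv R.end_mem_support with h | h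
        · exact absurd h.symm hub
        · exact Or.inl h.1
    · exact Or.inr (hQU v hv hU)
  · refine ⟨Or.inr ?_, Or.inl hb, fun v hv hU => ?_⟩
    · simp [openEar, VS]
    · dsimp only [openEar, VS] at *
      rcases hU with hU | hU
      · rcases hRU v hv hU with h | h
        · subst h
          rcases hLR v L.start_mem_support hv with h | h
          · exact Or.inl h
          · exact Or.inr h.2
        · exact Or.inr h
      · rw [Set.mem_ofPred_eq, SimpleGraph.Walk.mem_support_append_iff] at hU
        rcases hU with h | h
        · rcases hLR v h hv with h | h
          · exact Or.inl h
          · exact Or.inr h.2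
        · rcases hQR v h hv with h | h
          · exact Or.inl h
          · subst h; exact absurd hv hcR
  · ext v
    simp only [VS, openEar, Set.mem_union, Set.mem_ofPred_eq,
      SimpleGraph.Walk.mem_support_append_iff]
    tauto
  · simp [AllE, openEar, SimpleGraph.Walk.edges_append]
  · rw [evc_pair]
    simp only [openEar, SimpleGraph.Walk.length_append]
    exact parity hpar

open Classical in
noncomputable def upd (lab : V → V) (P : Ear G) : V → V := fun v =>
  if v ∈ P.walk.support ∧ v ≠ P.a ∧ v ≠ P.b then lab P.a else lab v

lemma step1 (U : Set V) (lab : V → V) (P Q : Ear G) (hP : Fits U P) (hQ : Fits (U ∪ VS P) Q)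
    (hlab : lab P.a = lab P.b) (hd : upd lab P Q.a ≠ upd lab P Q.b)
    (hi : Q.a ∈ P.walk.support ∧ Q.a ≠ P.a ∧ Q.a ≠ P.b) :
    ∃ A B : Ear G, Fits U A ∧ Fits (U ∪ VS A) B ∧ lab A.a ≠ lab A.b ∧
      VS A ∪ VS B = VS P ∪ VS Q ∧ (AllE [A, B]).Perm (AllE [P, Q]) ∧ evc [A, B] ≤ evc [P, Q] := by
  have h1 : upd lab P Q.a = lab P.a := by simp [upd, hi]
  rw [h1] at hd
  have hi2 : ¬ (Q.b ∈ P.walk.support ∧ Q.b ≠ P.a ∧ Q.b ≠ P.b) := fun h => hd (by simp [upd, h])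
  have h2 : upd lab P Q.b = lab Q.b := by simp only [upd, if_neg hi2]
  rw [h2] at hd
  have hac : P.a ≠ Q.b := fun h => hd (by rw [h])
  have hbc : P.b ≠ Q.b := fun h => hd (by rw [hlab, h])
  have hcP : Q.b ∉ P.walk.support := fun h => hi2 ⟨h, hac.symm, hbc.symm⟩
  have hcU : Q.b ∈ U := by
    rcases hQ.2.1 with h | h
    · exact h
    · exact absurd h hcP
  have huU : Q.a ∉ U := fun h => by
    rcases hP.2.2 _ hi.1 h with h | h
    · exact hi.2.1 h
    · exact hi.2.2 h
  have huc : Q.a ≠ Q.b := fun h => hcP (h ▸ hi.1)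
  have hQp : Q.walk.IsPath := by
    rcases Q.ear with h | ⟨h, -⟩
    · exact h.2
    · exact absurd h huc
  obtain ⟨L, R, hw, hL, hR, hLR⟩ := split P hi.1 hi.2.1 hi.2.2
  have hsL : ∀ v ∈ L.support, v ∈ P.walk.support := fun v hv => by
    rw [hw, SimpleGraph.Walk.mem_support_append_iff]; exact Or.inl hv
  have hsR : ∀ v ∈ R.support, v ∈ P.walk.support := fun v hv => by
    rw [hw, SimpleGraph.Walk.mem_support_append_iff]; exact Or.inr hv
  have hQU : ∀ v ∈ Q.walk.support, v ∈ U → v = Q.b := fun v hv hU => by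
    rcases hQ.2.2 v hv (Or.inl hU) with h | h
    · subst h; exact absurd hU huU
    · exact h
  have hQP : ∀ v ∈ Q.walk.support, v ∈ P.walk.support → v = Q.a ∨ v = Q.b :=
    fun v hv hU => hQ.2.2 v hv (Or.inr hU)
  have hVS : VS P ∪ VS Q = {v | v ∈ L.support ∨ v ∈ R.support ∨ v ∈ Q.walk.support} := by
    ext v
    simp only [VS, Set.mem_union, Set.mem_ofPred_eq, hw, SimpleGraph.Walk.mem_support_append_iff]
    tauto
  have hE : AllE [P, Q] = (L.edges ++ R.edges) ++ Q.walk.edges := by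
    simp [AllE, hw, SimpleGraph.Walk.edges_append]
  have hev : evc [P, Q] = (if Even (L.length + R.length) then 1 else 0) +
        (if Even Q.walk.length then 1 else 0) := by
    rw [evc_pair, hw, SimpleGraph.Walk.length_append]
  by_cases hpar : ¬ Even L.length ∧ Even R.length ∧ ¬ Even Q.walk.length
  · obtain ⟨A, B, c1, c2, c3, c4, c5, c6, c7⟩ := core U R.reverse L.reverse Q.walk hR.reverse
      hL.reverse hQp
      (fun v h1 h2 => by
        rcases hLR v (by simpa using h2) (by simpa using h1) with h | h
        · exact Or.inl h
        · exact Or.inr h.symm)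
      hi.2.2 hi.2.1 huc hbc hac hP.2.1 hP.1 hcU huU
      (fun v hv hU => (hP.2.2 v (hsR v (by simpa using hv)) hU).symm)
      (fun v hv hU => (hP.2.2 v (hsL v (by simpa using hv)) hU).symm)
      hQU (fun v hv h => hQP v hv (hsR v (by simpa using h)))
      (fun v hv h => hQP v hv (hsL v (by simpa using h)))
      (by simp [hpar])
    refine ⟨A, B, c1, c2, ?_, ?_, ?_, ?_⟩
    · rw [c3, c4, ← hlab]; exact hd
    · rw [c5, hVS]; ext v; simp; tauto
    · rw [c6, hE, SimpleGraph.Walk.edges_reverse, SimpleGraph.Walk.edges_reverse]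
      have e1 := List.reverse_perm R.edges
      have e2 := List.reverse_perm L.edges
      refine ((e1.append_right _).append e2).trans ?_
      refine List.perm_append_comm.trans ?_
      rw [List.append_assoc]
    · rw [hev]; refine c7.trans ?_
      simp [add_comm]
  · obtain ⟨A, B, c1, c2, c3, c4, c5, c6, c7⟩ := core U L R Q.walk hL
      hR hQp hLR hi.2.1 hi.2.2 huc hac hbc hP.1 hP.2.1 hcU huU
      (fun v hv hU => (hP.2.2 v (hsL v hv) hU))
      (fun v hv hU => (hP.2.2 v (hsR v hv) hU))
      hQU (fun v hv h => hQP v hv (hsL v h))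
      (fun v hv h => hQP v hv (hsR v h)) hpar
    refine ⟨A, B, c1, c2, ?_, ?_, ?_, ?_⟩
    · rw [c3, c4]; exact hd
    · rw [c5, hVS]
    · rw [c6, hE, List.append_assoc, List.append_assoc]
      exact List.perm_append_comm.append_left _
    · rw [hev]; exact c7

lemma step (U : Set V) (lab : V → V) (P Q : Ear G) (hP : Fits U P) (hQ : Fits (U ∪ VS P) Q)
    (hlab : lab P.a = lab P.b) (hd : upd lab P Q.a ≠ upd lab P Q.b) :
    ∃ A B : Ear G, Fits U A ∧ Fits (U ∪ VS A) B ∧ lab A.a ≠ lab A.b ∧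
      VS A ∪ VS B = VS P ∪ VS Q ∧ (AllE [A, B]).Perm (AllE [P, Q]) ∧ evc [A, B] ≤ evc [P, Q] := by
  by_cases hi : Q.a ∈ P.walk.support ∧ Q.a ≠ P.a ∧ Q.a ≠ P.b
  · exact step1 U lab P Q hP hQ hlab hd hi
  by_cases hi2 : Q.b ∈ P.walk.support ∧ Q.b ≠ P.a ∧ Q.b ≠ P.b
  · obtain ⟨A, B, c1, c2, c3, c4, c5, c6⟩ :=
      step1 U lab P (rev Q) hP (Fits_rev hQ) hlab hd.symm hi2
    refine ⟨A, B, c1, c2, c3, by rw [c4, VS_rev], c5.trans ?_, c6.trans ?_⟩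
    · simp only [AllE, rev, List.flatMap_cons, List.flatMap_nil, List.append_nil,
        SimpleGraph.Walk.edges_reverse]
      exact (List.reverse_perm _).append_left _
    · rw [evc_pair, evc_pair]; simp [rev]
  · have h1 : upd lab P Q.a = lab Q.a := by simp only [upd, if_neg hi]
    have h2 : upd lab P Q.b = lab Q.b := by simp only [upd, if_neg hi2]
    have key : ∀ v, v ∈ U ∪ VS P → ¬ (v ∈ P.walk.support ∧ v ≠ P.a ∧ v ≠ P.b) → v ∈ U := by
      intro v hv hn
      rcases hv with hv | hv
      · exact hv
      · by_cases e1 : v = P.a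
        · rw [e1]; exact hP.1
        by_cases e2 : v = P.b
        · rw [e2]; exact hP.2.1
        exact absurd ⟨hv, e1, e2⟩ hn
    refine ⟨Q, P, ⟨key _ hQ.1 hi, key _ hQ.2.1 hi2, fun v hv hU => hQ.2.2 v hv (Or.inl hU)⟩,
      ⟨Or.inl hP.1, Or.inl hP.2.1, fun v hv hU => ?_⟩, by rwa [h1, h2] at hd, Set.union_comm _ _,
      ?_, ?_⟩
    · by_contra hcon
      push Not at hcon
      rcases hU with hU | hU
      · rcases hP.2.2 v hv hU with h | h
        · exact hcon.1 h
        · exact hcon.2 h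
      · rcases hQ.2.2 v hU (Or.inr hv) with h | h
        · subst h; exact hi ⟨hv, hcon⟩
        · subst h; exact hi2 ⟨hv, hcon⟩
    · simp only [AllE, List.flatMap_cons, List.flatMap_nil, List.append_nil]
      exact List.perm_append_comm
    · rw [evc_pair, evc_pair, add_comm]

def AllSame : (V → V) → List (Ear G) → Prop
  | _, [] => True
  | lab, P :: l => lab P.a = lab P.b ∧ AllSame (upd lab P) l

lemma AllE_cons (P : Ear G) (l) : AllE (P :: l) = P.walk.edges ++ AllE l := rfl
lemma evc_cons (P : Ear G) (l) : evc (P :: l) = evc l + (if Even P.walk.length then 1 else 0) := by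
  simp [evc, List.countP_cons]

lemma bubble (l : List (Ear G)) : ∀ (U : Set V) (lab : V → V), Valid U l → ¬ AllSame lab l →
    ∃ (A : Ear G) (l' : List (Ear G)), Valid U (A :: l') ∧ lab A.a ≠ lab A.b ∧
      l'.length + 1 = l.length ∧
      (AllE (A :: l')).Perm (AllE l) ∧ evc (A :: l') ≤ evc l := by
  induction l with
  | nil => intro U lab _ h; exact absurd trivial h
  | cons P l ih =>
    intro U lab hv hs
    by_cases hlab : lab P.a = lab P.b
    · obtain ⟨Q, l', c1, c2, c3, c4, c5⟩ := ih _ (upd lab P) hv.2 (fun h => hs ⟨hlab, h⟩)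
      obtain ⟨A, B, d1, d2, d3, d4, d5, d6⟩ := step U lab P Q hv.1 c1.1 hlab c2
      refine ⟨A, B :: l', ⟨d1, d2, ?_⟩, d3, by simpa using c3, ?_, ?_⟩
      · have := c1.2
        rwa [Set.union_assoc, ← d4, ← Set.union_assoc] at this
      · have e1 : AllE (A :: B :: l') = AllE [A, B] ++ AllE l' := by simp [AllE]
        have e2 : AllE (P :: Q :: l') = AllE [P, Q] ++ AllE l' := by simp [AllE]
        rw [e1]
        refine (d5.append_right _).trans ?_
        rw [← e2, AllE_cons, AllE_cons P l]
        exact c4.append_left _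
      · simp only [evc_cons] at *
        omega
    · exact ⟨P, l, hv, hlab, rfl, List.Perm.refl _, le_rfl⟩

lemma final_lab (l : List (Ear G)) : ∀ (U : Set V) (lab : V → V), Valid U l → AllSame lab l →
    ∃ lab' : V → V, (∀ v ∈ U, lab' v = lab v) ∧
      ∀ u v, s(u, v) ∈ AllE l → lab' u = lab' v := by
  induction l with
  | nil => intro U lab _ _; exact ⟨lab, fun _ _ => rfl, fun u v h => by simp [AllE] at h⟩
  | cons P l ih =>
    intro U lab hv hs
    obtain ⟨lab', h1, h2⟩ := ih _ _ hv.2 hs.2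
    refine ⟨lab', fun v hU => ?_, fun u v huv => ?_⟩
    · rw [h1 v (Or.inl hU)]
      simp only [upd]
      rw [if_neg]
      rintro ⟨g1, g2, g3⟩
      rcases hv.1.2.2 v g1 hU with h | h
      · exact g2 h
      · exact g3 h
    · rw [AllE_cons, List.mem_append] at huv
      rcases huv with h | h
      · have key : ∀ w ∈ P.walk.support, lab' w = lab P.a := by
          intro w hw
          rw [h1 w (Or.inr hw)]
          simp only [upd]
          split_ifs with h
          · rfl
          · by_cases e1 : w = P.a
            · rw [e1]
            by_cases e2 : w = P.b
            · rw [e2, hs.1]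
            exact absurd ⟨hw, e1, e2⟩ h
        rw [key u (P.walk.fst_mem_support_of_mem_edges h),
          key v (P.walk.snd_mem_support_of_mem_edges h)]
      · exact h2 u v h

lemma not_allSame (h2 : TwoVertexConnected G) (U : Set V) (l : List (Ear G)) (hl : l ≠ [])
    (hv : Valid U l) (hU : ∀ x : V, ∃ z ∈ U, z ≠ x)
    (hcov : ∀ u v, G.Adj u v → s(u, v) ∈ AllE l ∨ (u ∈ U ∧ v ∈ U)) : ¬ AllSame id l := by
  intro hs
  obtain ⟨lab, k1, k2⟩ := final_lab l U id hv hs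
  cases l with
  | nil => exact hl rfl
  | cons P l =>
    have hab : P.a = P.b := hs.1
    have hfit := hv.1
    obtain ⟨y, hxy, hyE, hyU⟩ : ∃ y, G.Adj P.a y ∧ s(P.a, y) ∈ P.walk.edges ∧ y ∉ U := by
      rcases P with ⟨a, b, w, hlen, he⟩
      dsimp only at *
      subst hab
      cases w with
      | nil => exact absurd hlen (by simp)
      | cons h p =>
        refine ⟨_, h, by simp, fun hc => ?_⟩
        have := hfit.2.2 _ (by simp) hc
        simp at this
        exact h.ne this.symm
    obtain ⟨z, hz, hzx⟩ := hU P.a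
    have hx : lab P.a = P.a := k1 _ hfit.1
    have hy : lab y = P.a := by
      rw [← k2 P.a y (by rw [AllE_cons]; exact List.mem_append_left _ hyE), hx]
    have hreach := (h2.2 P.a).preconnected ⟨y, hxy.ne'⟩ ⟨z, hzx⟩
    obtain ⟨p⟩ := hreach
    have main : ∀ (s t : ({P.a}ᶜ : Set V)) (p : (G.induce ({P.a}ᶜ : Set V)).Walk s t),
        (s : V) ∉ U → lab s = P.a → (t : V) ∉ U := by
      intro s t p
      induction p with
      | nil => intro h _; exact h
      | @cons s m t h p ih =>
        intro g1 g2
        have hadj : G.Adj (s : V) (m : V) := h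
        have hm : lab m = P.a := by
          rcases hcov _ _ hadj with h | h
          · rw [← k2 _ _ h, g2]
          · exact absurd h.1 g1
        refine ih (fun hc => ?_) hm
        have := k1 _ hc
        rw [hm] at this
        exact m.2 this.symm
    exact main _ _ p hyU hy hz

lemma main_open (h2 : TwoVertexConnected G) (n : ℕ) : ∀ (U : Set V) (l : List (Ear G)),
    l.length = n → Valid U l → (∀ x : V, ∃ z ∈ U, z ≠ x) →
    (∀ u v, G.Adj u v → s(u, v) ∈ AllE l ∨ (u ∈ U ∧ v ∈ U)) →
    ∃ l' : List (Ear G), Valid U l' ∧ (∀ P ∈ l', P.a ≠ P.b) ∧ (AllE l').Perm (AllE l) ∧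
      evc l' ≤ evc l := by
  induction n with
  | zero =>
    intro U l hl _ _ _
    have : l = [] := List.length_eq_zero_iff.1 hl
    subst this
    exact ⟨[], trivial, by simp, List.Perm.refl _, le_rfl⟩
  | succ n ih =>
    intro U l hl hv hU hcov
    have hne : l ≠ [] := by rintro rfl; simp at hl
    obtain ⟨A, l1, c1, c2, c3, c4, c5⟩ :=
      bubble l U id hv (not_allSame h2 U l hne hv hU hcov)
    obtain ⟨l2, d1, d2, d3, d4⟩ := ih (U ∪ VS A) l1 (by omega) c1.2
      (fun x => by
        obtain ⟨z, hz, h⟩ := hU x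
        exact ⟨z, Or.inl hz, h⟩)
      (fun u v huv => by
        rcases hcov u v huv with h | h
        · rw [← c4.mem_iff, AllE_cons, List.mem_append] at h
          rcases h with h | h
          · exact Or.inr ⟨Or.inr (A.walk.fst_mem_support_of_mem_edges h),
              Or.inr (A.walk.snd_mem_support_of_mem_edges h)⟩
          · exact Or.inl h
        · exact Or.inr ⟨Or.inl h.1, Or.inl h.2⟩)
    refine ⟨A :: l2, ⟨c1.1, d1⟩, ?_, ?_, ?_⟩
    · intro P hP
      rcases List.mem_cons.1 hP with h | h
      · rw [h]; exact c2
      · exact d2 P h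
    · refine List.Perm.trans ?_ c4
      rw [AllE_cons, AllE_cons]
      exact d3.append_left _
    · refine le_trans ?_ c5
      rw [evc_cons, evc_cons]
      omega

lemma Fits_iff (U : Set V) (P : Ear G) :
    Fits U P ↔ P.endpoints ⊆ U ∧ P.internal ∩ U = ∅ := by
  constructor
  · rintro ⟨h1, h2, h3⟩
    refine ⟨?_, ?_⟩
    · rintro v (h | h)
      · rw [h]; exact h1
      · rw [Set.mem_singleton_iff.1 h]; exact h2
    · rw [Set.eq_empty_iff_forall_notMem]
      rintro v ⟨⟨g1, g2⟩, g3⟩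
      exact g2 (h3 v g1 g3)
  · rintro ⟨h1, h2⟩
    refine ⟨h1 (Or.inl rfl), h1 (Or.inr rfl), fun v hv hU => ?_⟩
    by_contra hc
    have : v ∈ P.internal ∩ U := ⟨⟨hv, hc⟩, hU⟩
    rw [h2] at this
    exact this

def pv (U : Set V) (l : List (Ear G)) (i : ℕ) : Set V :=
  U ∪ {v | ∃ j : Fin l.length, (j : ℕ) < i ∧ v ∈ (l.get j).vertices}

lemma pv_succ (U : Set V) (P : Ear G) (l : List (Ear G)) (i : ℕ) :
    pv U (P :: l) (i + 1) = pv (U ∪ VS P) l i := by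
  ext v
  constructor
  · rintro (h | ⟨⟨j, hj⟩, h1, h2⟩)
    · exact Or.inl (Or.inl h)
    · cases j with
      | zero => exact Or.inl (Or.inr h2)
      | succ j =>
        exact Or.inr ⟨⟨j, by simpa using hj⟩, by simpa using h1, h2⟩
  · rintro ((h | h) | ⟨⟨j, hj⟩, h1, h2⟩)
    · exact Or.inl h
    · exact Or.inr ⟨⟨0, by simp⟩, by simp, h⟩
    · exact Or.inr ⟨⟨j + 1, by simpa using hj⟩, by simpa using h1, h2⟩

lemma pv_zero (U : Set V) (l : List (Ear G)) : pv U l 0 = U := by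
  ext v; simp [pv]

lemma Valid_iff (l : List (Ear G)) : ∀ U : Set V,
    Valid U l ↔ ∀ i : Fin l.length, Fits (pv U l i) (l.get i) := by
  induction l with
  | nil => intro U; simp [Valid]
  | cons P l ih =>
    intro U
    constructor
    · rintro ⟨h1, h2⟩ ⟨i, hi⟩
      cases i with
      | zero => rw [pv_zero]; exact h1
      | succ i =>
        have := (ih _).1 h2 ⟨i, by simpa using hi⟩
        rw [pv_succ]; exact this
    · intro h
      refine ⟨?_, (ih _).2 ?_⟩
      · have := h ⟨0, by simp⟩
        rw [pv_zero] at this; exact this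
      · rintro ⟨i, hi⟩
        have := h ⟨i + 1, by simpa using hi⟩
        rw [pv_succ] at this; exact this

lemma priorVerts_eq (r : V) (l : List (Ear G)) (i : ℕ) : priorVerts r l i = pv {r} l i := rfl

lemma edges_nodup (P : Ear G) : P.walk.edges.Nodup := by
  obtain ⟨a, b, w, hl, he⟩ := P
  dsimp only at *
  rcases he with h | ⟨h, hc⟩
  · exact h.2.isTrail.edges_nodup
  · subst h
    exact hc.isTrail.edges_nodup

lemma ofD (D : EarDecomp G) : Valid {D.root} D.ears ∧ (AllE D.ears).Nodup ∧
    ∀ e ∈ G.edgeSet, e ∈ AllE D.ears := by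
  refine ⟨?_, ?_, ?_⟩
  · rw [Valid_iff]
    intro i
    rw [Fits_iff]
    exact ⟨D.endpoints_sub i, D.internal_new i⟩
  · unfold AllE
    rw [List.nodup_flatMap]
    refine ⟨fun P _ => edges_nodup P, ?_⟩
    rw [List.pairwise_iff_get]
    intro i j hij e h1 h2
    have he : e ∈ G.edgeSet := SimpleGraph.Walk.edges_subset_edgeSet _ h1
    obtain ⟨k, -, hk⟩ := D.edge_cover e he
    exact hij.ne ((hk i h1).trans (hk j h2).symm)
  · intro e he
    obtain ⟨k, hk, -⟩ := D.edge_cover e he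
    exact List.mem_flatMap.2 ⟨_, List.get_mem _ k, hk⟩

def toD (r : V) (l : List (Ear G)) (h1 : Valid {r} l) (h2 : (AllE l).Nodup)
    (h3 : ∀ e ∈ G.edgeSet, e ∈ AllE l) : EarDecomp G where
  root := r
  ears := l
  endpoints_sub := fun i => ((Fits_iff _ _).1 ((Valid_iff l {r}).1 h1 i)).1
  internal_new := fun i => ((Fits_iff _ _).1 ((Valid_iff l {r}).1 h1 i)).2
  edge_cover := by
    intro e he
    obtain ⟨P, hP, hk⟩ := List.mem_flatMap.1 (h3 e he)
    obtain ⟨i, rfl⟩ := List.get_of_mem hP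
    refine ⟨i, hk, fun j hj => ?_⟩
    unfold AllE at h2
    rw [List.nodup_flatMap] at h2
    have h4 := List.pairwise_iff_get.1 h2.2
    rcases lt_trichotomy i j with h | h | h
    · exact absurd hj (h4 i j h hk)
    · exact h.symm
    · exact absurd hk (h4 j i h hj)

lemma first_hit (U : Set V) {w u : V} (p : G.Walk w u) (hp : p.IsPath) (hu : u ∈ U) :
    ∃ (t : V) (q : G.Walk w t), t ∈ U ∧ q.IsPath ∧ q.edges ⊆ p.edges ∧ q.support ⊆ p.support ∧
      ∀ v ∈ q.support, v ∈ U → v = t := by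
  induction p with
  | nil => exact ⟨_, SimpleGraph.Walk.nil, hu, by simp, by simp, by simp, by simp⟩
  | @cons a b c h p ih =>
    by_cases ha : a ∈ U
    · exact ⟨a, SimpleGraph.Walk.nil, ha, by simp, by simp, by simp, by simp⟩
    · rw [SimpleGraph.Walk.cons_isPath_iff] at hp
      obtain ⟨t, q, c1, c2, c3, c4, c5⟩ := ih hp.1 hu
      refine ⟨t, SimpleGraph.Walk.cons h q, c1, ?_, ?_, ?_, ?_⟩
      · rw [SimpleGraph.Walk.cons_isPath_iff]
        exact ⟨c2, fun hh => hp.2 (c4 hh)⟩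
      · simp only [SimpleGraph.Walk.edges_cons]
        exact List.cons_subset_cons _ c3
      · simp only [SimpleGraph.Walk.support_cons]
        exact List.cons_subset_cons _ c4
      · intro v hv hU
        rw [SimpleGraph.Walk.support_cons] at hv
        rcases List.mem_cons.1 hv with h | h
        · subst h; exact absurd hU ha
        · exact c5 v h hU

lemma walk_out (u : V) (s t : ({u}ᶜ : Set V)) (q : (G.induce ({u}ᶜ : Set V)).Walk s t) :
    ∃ p : G.Walk (s : V) (t : V), u ∉ p.support := by
  induction q with
  | @nil s => exact ⟨SimpleGraph.Walk.nil, by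
      rw [SimpleGraph.Walk.support_nil, List.mem_singleton]
      exact fun h => s.2 h.symm⟩
  | @cons s m t h q ih =>
    obtain ⟨p, hp⟩ := ih
    have hadj : G.Adj (s : V) (m : V) := h
    refine ⟨SimpleGraph.Walk.cons hadj p, ?_⟩
    rw [SimpleGraph.Walk.support_cons, List.mem_cons, not_or]
    exact ⟨fun h => s.2 h.symm, hp⟩

lemma back_path [Fintype V] [DecidableEq V] [DecidableRel G.Adj]
    (h2 : TwoVertexConnected G) (hdeg : ∀ v : V, 3 ≤ G.degree v) {u w : V} (h : G.Adj u w) :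
    ∃ p : G.Walk w u, p.IsPath ∧ s(u, w) ∉ p.edges := by
  obtain ⟨w', hw', hne⟩ : ∃ w', G.Adj u w' ∧ w' ≠ w := by
    have h1 : 1 < (G.neighborFinset u).card := by
      rw [SimpleGraph.card_neighborFinset_eq_degree]; have := hdeg u; omega
    obtain ⟨w', k1, k2⟩ := Finset.exists_mem_ne h1 w
    exact ⟨w', by simpa using k1, k2⟩
  obtain ⟨q⟩ := (h2.2 u).preconnected ⟨w, h.ne'⟩ ⟨w', hw'.ne'⟩
  obtain ⟨q1, hq1⟩ := walk_out u _ _ q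
  have hq2 : s(u, w) ∉ (q1.concat hw'.symm).edges := by
    rw [SimpleGraph.Walk.edges_concat]
    intro hh
    rw [List.concat_eq_append, List.mem_append] at hh
    rcases hh with hh | hh
    · exact hq1 (q1.fst_mem_support_of_mem_edges hh)
    · simp only [List.mem_singleton, Sym2.eq_iff] at hh
      rcases hh with hh | hh
      · exact h.ne hh.2.symm
      · exact hne hh.2.symm
  exact ⟨(q1.concat hw'.symm).bypass, SimpleGraph.Walk.bypass_isPath _,
    fun hh => hq2 (SimpleGraph.Walk.edges_bypass_subset_edges _ hh)⟩

lemma preconn (h2 : TwoVertexConnected G) (x y : V) : G.Reachable x y := by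
  have : ∃ z : V, z ≠ x ∧ z ≠ y := by
    by_contra hc
    push Not at hc
    have h3 := h2.1
    have hsub : (Set.univ : Set V) ⊆ {x, y} := by
      intro z _
      by_cases h : z = x
      · exact Or.inl h
      · exact Or.inr (hc z h)
    have h4 := Set.ncard_le_ncard hsub (Set.toFinite _)
    rw [Set.ncard_univ] at h4
    have := Set.ncard_insert_le x {y}
    rw [Set.ncard_singleton] at this
    omega
  obtain ⟨z, h1, h3⟩ := this
  have := (h2.2 z).preconnected ⟨x, h1.symm⟩ ⟨y, h3.symm⟩
  exact this.map (SimpleGraph.Embedding.induce ({z}ᶜ : Set V)).toHom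

lemma next_ear [Fintype V] [DecidableEq V] [DecidableRel G.Adj]
    (h2 : TwoVertexConnected G) (hdeg : ∀ v : V, 3 ≤ G.degree v) (U : Set V) (F : Finset (Sym2 V))
    (hU : U.Nonempty) (hF : ∀ u v, s(u, v) ∈ F → u ∈ U ∧ v ∈ U)
    (e : Sym2 V) (he : e ∈ G.edgeSet) (heF : e ∉ F) :
    ∃ P : Ear G, Fits U P ∧ ∀ e ∈ P.walk.edges, e ∉ F := by
  obtain ⟨u, w, hu, huw, hF'⟩ : ∃ u w, u ∈ U ∧ G.Adj u w ∧ s(u, w) ∉ F := by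
    induction e with
    | h p q =>
      by_cases hp : p ∈ U
      · exact ⟨p, q, hp, he, heF⟩
      · obtain ⟨r, hr⟩ := hU
        obtain ⟨W⟩ := preconn h2 r p
        obtain ⟨d, -, hd1, hd2⟩ := W.exists_boundary_dart U hr hp
        exact ⟨d.fst, d.snd, hd1, d.adj, fun hh => hd2 (hF _ _ hh).2⟩
  by_cases hw : w ∈ U
  · refine ⟨trivialEar G huw, ⟨hu, hw, fun v hv _ => ?_⟩, fun e he => ?_⟩
    · simpa [trivialEar] using hv
    · have : e = s(u, w) := by simpa [trivialEar] using he
      rw [this]; exact hF'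
  · obtain ⟨p, hp, hpe⟩ := back_path h2 hdeg huw
    obtain ⟨t, q, c1, c2, c3, c4, c5⟩ := first_hit U p hp hu
    have hq : ∀ e ∈ (SimpleGraph.Walk.cons huw q).edges, e ∉ F := by
      intro e he
      rw [SimpleGraph.Walk.edges_cons] at he
      rcases List.mem_cons.1 he with h | h
      · rw [h]; exact hF'
      · intro hf
        induction e with
        | h x y =>
          have k := hF x y hf
          have kx := c5 x (q.fst_mem_support_of_mem_edges h) k.1
          have ky := c5 y (q.snd_mem_support_of_mem_edges h) k.2
          exact (q.adj_of_mem_edges h).ne (kx.trans ky.symm)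
    have hs : ∀ v ∈ (SimpleGraph.Walk.cons huw q).support, v ∈ U → v = u ∨ v = t := by
      intro v hv hvU
      rw [SimpleGraph.Walk.support_cons] at hv
      rcases List.mem_cons.1 hv with h | h
      · exact Or.inl h
      · exact Or.inr (c5 v h hvU)
    by_cases htu : u = t
    · subst htu
      refine ⟨cycEar (SimpleGraph.Walk.cons huw q) ?_, ⟨hu, hu, hs⟩, hq⟩
      rw [SimpleGraph.Walk.cons_isCycle_iff]
      exact ⟨c2, fun hh => hpe (c3 hh)⟩
    · refine ⟨openEar (SimpleGraph.Walk.cons huw q) ?_ htu, ⟨hu, c1, hs⟩, hq⟩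
      rw [SimpleGraph.Walk.cons_isPath_iff]
      exact ⟨c2, fun hh => htu (c5 u hh hu)⟩

lemma exists_list [Fintype V] [DecidableEq V] [DecidableRel G.Adj]
    (h2 : TwoVertexConnected G) (hdeg : ∀ v : V, 3 ≤ G.degree v) (n : ℕ) :
    ∀ (U : Set V) (F : Finset (Sym2 V)), (G.edgeFinset \ F).card = n →
    U.Nonempty → (∀ u v, s(u, v) ∈ F → u ∈ U ∧ v ∈ U) →
    ∃ l : List (Ear G), Valid U l ∧ (AllE l).Nodup ∧ (∀ e ∈ AllE l, e ∉ F) ∧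
      ∀ e ∈ G.edgeSet, e ∈ F ∨ e ∈ AllE l := by
  induction n using Nat.strong_induction_on with
  | _ n ih =>
    intro U F hn hU hF
    by_cases hall : ∀ e ∈ G.edgeSet, e ∈ F
    · exact ⟨[], trivial, by simp [AllE], by simp [AllE], fun e he => Or.inl (hall e he)⟩
    · push Not at hall
      obtain ⟨e, he, heF⟩ := hall
      obtain ⟨P, hP, hPF⟩ := next_ear h2 hdeg U F hU hF e he heF
      obtain ⟨f, hf⟩ : ∃ f, f ∈ P.walk.edges := by
        apply List.exists_mem_of_length_pos
        rw [SimpleGraph.Walk.length_edges]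
        exact P.length_pos
      have hlt : (G.edgeFinset \ (F ∪ P.walk.edges.toFinset)).card < n := by
        rw [← hn]
        apply Finset.card_lt_card
        refine ⟨fun x hx => ?_, fun hh => ?_⟩
        · simp only [Finset.mem_sdiff, Finset.mem_union, not_or] at hx ⊢
          exact ⟨hx.1, hx.2.1⟩
        · have : f ∈ G.edgeFinset \ F := by
            rw [Finset.mem_sdiff, SimpleGraph.mem_edgeFinset]
            exact ⟨P.walk.edges_subset_edgeSet hf, hPF f hf⟩
          have := hh this
          simp [hf] at this
      obtain ⟨l, c1, c2, c3, c4⟩ := ih _ hlt (U ∪ VS P) (F ∪ P.walk.edges.toFinset) rfl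
        (hU.mono Set.subset_union_left) (fun u v h => by
          rw [Finset.mem_union] at h
          rcases h with h | h
          · exact ⟨Or.inl (hF u v h).1, Or.inl (hF u v h).2⟩
          · rw [List.mem_toFinset] at h
            exact ⟨Or.inr (P.walk.fst_mem_support_of_mem_edges h),
              Or.inr (P.walk.snd_mem_support_of_mem_edges h)⟩)
      refine ⟨P :: l, ⟨hP, c1⟩, ?_, ?_, ?_⟩
      · rw [AllE_cons]
        refine List.nodup_append'.2 ⟨edges_nodup P, c2, fun x h1 h3 => ?_⟩
        exact c3 x h3 (by simp [h1])
      · intro x hx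
        rw [AllE_cons, List.mem_append] at hx
        rcases hx with hx | hx
        · exact hPF x hx
        · exact fun h => c3 x hx (by simp [h])
      · intro x hx
        rw [AllE_cons, List.mem_append]
        rcases c4 x hx with h | h
        · rw [Finset.mem_union, List.mem_toFinset] at h
          tauto
        · tauto

lemma exists_decomp [Fintype V] [DecidableEq V] [DecidableRel G.Adj]
    (h2 : TwoVertexConnected G) (hdeg : ∀ v : V, 3 ≤ G.degree v) : Nonempty (EarDecomp G) := by
  have : Nonempty V := by
    by_contra hc
    rw [not_nonempty_iff] at hc
    have := h2.1
    simp at this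
  obtain ⟨r⟩ := this
  obtain ⟨l, c1, c2, -, c4⟩ := exists_list h2 hdeg _ {r} ∅ rfl ⟨r, rfl⟩ (by simp)
  exact ⟨toD r l c1 c2 (fun e he => by simpa using c4 e he)⟩

/-- final surgery with the triangle already split: `L` of length 1, `R` of length 2. -/
lemma tri_core {x y : V} (L : G.Walk x y) (R : G.Walk y x) (Q : G.Walk x y)
    (hL : L.IsPath) (hR : R.IsPath) (hQ : Q.IsPath) (hxy : x ≠ y)
    (hLl : L.length = 1) (hRl : R.length = 2)
    (hdis : ∀ v ∈ Q.support, v ∈ R.support → v = x ∨ v = y)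
    (hLR : ∀ v ∈ L.support, v = x ∨ v = y)
    (hE : (L.edges ++ R.edges ++ Q.edges).Nodup) :
    ∃ A B : Ear G, A.a = A.b ∧ Valid {A.a} [A, B] ∧ B.a ≠ B.b ∧ 4 ≤ A.walk.length ∧
      VS A ∪ VS B = {v | v ∈ L.support ∨ v ∈ R.support ∨ v ∈ Q.support} ∧
      (AllE [A, B]).Perm (L.edges ++ R.edges ++ Q.edges) ∧
      evc [A, B] = if Even Q.length then 1 else 0 := by
  have hQl : 2 ≤ Q.length := by
    by_contra hc
    have h1 : Q.length ≠ 0 := fun h => hxy (SimpleGraph.Walk.eq_of_length_eq_zero h)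
    have h1 : Q.length = 1 := by omega
    have e1 : s(x, y) ∈ L.edges := by
      cases L with
      | nil => simp at hLl
      | cons h p =>
        cases p with
        | nil => simp
        | cons _ _ => simp at hLl
    have e2 : s(x, y) ∈ Q.edges := by
      cases Q with
      | nil => simp at h1
      | cons h p =>
        cases p with
        | nil => simp
        | cons _ _ => simp at h1
    exact List.disjoint_of_nodup_append hE (List.mem_append_left _ e1) e2
  have hC : (R.append Q).IsCycle := by
    rw [SimpleGraph.Walk.isCycle_def]
    refine ⟨⟨?_⟩, ?_, ?_⟩
    · rw [SimpleGraph.Walk.edges_append]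
      rw [List.append_assoc] at hE
      exact (List.nodup_append'.1 hE).2.1
    · intro h
      have := congrArg SimpleGraph.Walk.length h
      rw [SimpleGraph.Walk.length_append, SimpleGraph.Walk.length_nil] at this
      omega
    · have hRs : R.support = y :: R.support.tail := R.cons_tail_support.symm
      have hQs : Q.support = x :: Q.support.tail := Q.cons_tail_support.symm
      rw [SimpleGraph.Walk.support_append, hRs, List.cons_append, List.tail_cons]
      have n1 := hR.support_nodup
      have n2 := hQ.support_nodup
      rw [hRs, List.nodup_cons] at n1
      rw [hQs, List.nodup_cons] at n2
      refine List.nodup_append'.2 ⟨n1.2, n2.2, fun v g1 g2 => ?_⟩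
      rcases hdis v (by rw [hQs]; exact List.mem_cons_of_mem _ g2)
        (by rw [hRs]; exact List.mem_cons_of_mem _ g1) with h | h
      · subst h; exact n2.1 g2
      · subst h; exact n1.1 g1
  refine ⟨cycEar _ hC, openEar L hL hxy, rfl, ⟨⟨rfl, rfl, ?_⟩, ⟨?_, ?_, ?_⟩, trivial⟩, hxy, ?_,
    ?_, ?_, ?_⟩
  · intro v _ h; exact Or.inl h
  · right; simp [VS, cycEar, openEar]
  · right; simp [VS, cycEar, openEar]
  · intro v hv _; exact hLR v hv
  · simp [cycEar]; omega
  · ext v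
    simp only [VS, openEar, cycEar, Set.mem_union, Set.mem_ofPred_eq,
      SimpleGraph.Walk.mem_support_append_iff]
    tauto
  · simp only [AllE, openEar, cycEar, SimpleGraph.Walk.edges_append, List.flatMap_cons,
      List.flatMap_nil, List.append_nil]
    refine List.perm_append_comm.trans ?_
    rw [List.append_assoc]
  · rw [evc_pair]
    simp [openEar, cycEar, hLl, hRl, Nat.even_add]

lemma tri (P Q : Ear G) (hP : P.a = P.b) (hPl : P.walk.length = 3) (hQ : Fits (VS P) Q)
    (hQo : Q.a ≠ Q.b) (hE : (AllE [P, Q]).Nodup) :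
    ∃ A B : Ear G, A.a = A.b ∧ Valid {A.a} [A, B] ∧ B.a ≠ B.b ∧ 4 ≤ A.walk.length ∧
      VS A ∪ VS B = VS P ∪ VS Q ∧
      (AllE [A, B]).Perm (AllE [P, Q]) ∧ evc [A, B] = evc [P, Q] := by
  classical
  have hQp : Q.walk.IsPath := by
    rcases Q.ear with h | ⟨h, -⟩
    · exact h.2
    · exact absurd h hQo
  rcases P with ⟨a, b, w, hlen, he⟩
  dsimp only at *
  subst hP
  have hc : w.IsCycle := by
    rcases he with h | ⟨h, hc⟩
    · exact absurd rfl h.1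
    · simpa using hc
  have hx : Q.a ∈ w.support := hQ.1
  have hy : Q.b ∈ w.support := hQ.2.1
  have hc' : (w.rotate Q.a hx).IsCycle := hc.rotate hx
  have hrl : (w.rotate Q.a hx).length = 3 := by
    rw [SimpleGraph.Walk.length_rotate, hPl]
  have hre : (w.rotate Q.a hx).edges.Perm w.edges := (w.rotate_edges Q.a hx).perm
  have hrs : ∀ v, v ∈ (w.rotate Q.a hx).support ↔ v ∈ w.support := fun v => by
    simp
  generalize w.rotate Q.a hx = c at *
  have hsp : ∃ (L : G.Walk Q.a Q.b) (R : G.Walk Q.b Q.a), c = L.append R ∧ L.IsPath ∧ R.IsPath ∧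
      ∀ v ∈ L.support, v ∈ R.support → v = Q.b ∨ (v = Q.a ∧ v = Q.a) :=
    split (cycEar c hc') (u := Q.b) ((hrs _).2 hy) hQo.symm hQo.symm
  obtain ⟨L, R, k1, k2, k3, k4⟩ := hsp
  have hlr : L.length + R.length = 3 := by
    rw [← hrl, k1, SimpleGraph.Walk.length_append]
  have hL0 : L.length ≠ 0 := fun h => hQo (SimpleGraph.Walk.eq_of_length_eq_zero h)
  have hR0 : R.length ≠ 0 := fun h => hQo.symm (SimpleGraph.Walk.eq_of_length_eq_zero h)
  have hsupp : ∀ v, v ∈ w.support ↔ v ∈ L.support ∨ v ∈ R.support := fun v => by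
    rw [← hrs, k1, SimpleGraph.Walk.mem_support_append_iff]
  have hperm : (L.edges ++ R.edges ++ Q.walk.edges).Perm (w.edges ++ Q.walk.edges) := by
    refine List.Perm.append_right _ ?_
    rw [← SimpleGraph.Walk.edges_append, ← k1]
    exact hre
  have hAE : AllE [(⟨a, a, w, hlen, he⟩ : Ear G), Q] = w.edges ++ Q.walk.edges := by
    simp [AllE]
  have hev : evc [(⟨a, a, w, hlen, he⟩ : Ear G), Q] = if Even Q.walk.length then 1 else 0 := by
    rw [evc_pair]
    have : ¬ Even 3 := by decide
    simp [hPl, this]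
  have len1 : ∀ {p q : V} (W : G.Walk p q), W.length = 1 → ∀ v ∈ W.support, v = p ∨ v = q := by
    intro p q W hW v hv
    cases W with
    | nil => simp at hW
    | cons h p =>
      cases p with
      | nil => simpa using hv
      | cons _ _ => simp at hW
  rw [hAE, hev]
  rw [hAE] at hE
  have hVS : ∀ v, v ∈ VS (⟨a, a, w, hlen, he⟩ : Ear G) ∪ VS Q ↔
      (v ∈ L.support ∨ v ∈ R.support) ∨ v ∈ Q.walk.support := fun v => by
    simp only [VS, Set.mem_union, Set.mem_ofPred_eq, hsupp]
  have hQd : ∀ v ∈ Q.walk.support, v ∈ w.support → v = Q.a ∨ v = Q.b :=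
    fun v h1 h2 => hQ.2.2 v h1 h2
  by_cases h1 : L.length = 1
  · obtain ⟨A, B, c1, c2, c3, c4, c5, c6, c7⟩ := tri_core L R Q.walk k2 k3 hQp hQo h1 (by omega)
      (fun v g1 g2 => hQd v g1 ((hsupp v).2 (Or.inr g2))) (len1 L h1)
      (hperm.nodup_iff.2 hE)
    refine ⟨A, B, c1, c2, c3, c4, ?_, c6.trans hperm, c7⟩
    rw [c5]; ext v; rw [hVS]; simp only [Set.mem_ofPred_eq]; tauto
  · have hRL : R.length = 1 := by omega
    have hpp : (R.reverse.edges ++ L.reverse.edges ++ Q.walk.edges).Perm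
        (L.edges ++ R.edges ++ Q.walk.edges) := by
      refine List.Perm.append_right _ ?_
      rw [SimpleGraph.Walk.edges_reverse, SimpleGraph.Walk.edges_reverse]
      exact ((List.reverse_perm _).append (List.reverse_perm _)).trans List.perm_append_comm
    obtain ⟨A, B, c1, c2, c3, c4, c5, c6, c7⟩ := tri_core R.reverse L.reverse Q.walk k3.reverse
      k2.reverse hQp hQo (by simpa using hRL) (by simp; omega)
      (fun v g1 g2 => hQd v g1 ((hsupp v).2 (Or.inl (by simpa using g2))))
      (len1 R.reverse (by simpa using hRL))
      ((hpp.trans hperm).nodup_iff.2 hE)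
    refine ⟨A, B, c1, c2, c3, c4, ?_, c6.trans (hpp.trans hperm), c7⟩
    rw [c5]; ext v; rw [hVS]
    simp only [Set.mem_ofPred_eq, SimpleGraph.Walk.support_reverse, List.mem_reverse]; tauto

lemma assemble [Fintype V] [DecidableEq V] [DecidableRel G.Adj]
    (h2 : TwoVertexConnected G) (hdeg : ∀ v : V, 3 ≤ G.degree v) (D : EarDecomp G) :
    ∃ D' : EarDecomp G, D'.IsOpen ∧ D'.evenEars ≤ D.evenEars ∧
      ∃ h : 0 < D'.ears.length, (D'.ears.get ⟨0, h⟩).IsLong := by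
  obtain ⟨v1, v2, v3⟩ := ofD D
  have hDe : D.evenEars = evc D.ears := rfl
  rw [hDe]
  generalize D.ears = l at *
  generalize D.root = r at *
  clear hDe
  -- generic finishing
  have fin : ∀ (r : V) (A : Ear G) (l' : List (Ear G)), Valid {r} (A :: l') →
      (∀ P ∈ l', P.a ≠ P.b) → (AllE (A :: l')).Perm (AllE l) → evc (A :: l') ≤ evc l →
      4 ≤ A.walk.length → ∃ D' : EarDecomp G, D'.IsOpen ∧ D'.evenEars ≤ evc l ∧
      ∃ h : 0 < D'.ears.length, (D'.ears.get ⟨0, h⟩).IsLong := by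
    intro r A l' g1 g2 g3 g4 g5
    refine ⟨toD r (A :: l') g1 (g3.nodup_iff.2 v2) (fun e he => g3.mem_iff.2 (v3 e he)), ?_, g4,
      by simp [toD], g5⟩
    rintro ⟨i, hi⟩ h1
    cases i with
    | zero => simp at h1
    | succ i => exact g2 _ (List.get_mem l' ⟨i, by simpa [toD] using hi⟩)
  cases l with
  | nil =>
    exfalso
    have h3 : 0 < (G.neighborFinset r).card := by
      rw [SimpleGraph.card_neighborFinset_eq_degree]; have := hdeg r; omega
    obtain ⟨w, hw⟩ := Finset.card_pos.1 h3
    have := v3 s(r, w) (by simpa using hw)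
    simp [AllE] at this
  | cons P l =>
    have ha : P.a = r := v1.1.1
    have hb : P.b = r := v1.1.2.1
    have hab : P.a = P.b := ha.trans hb.symm
    have hU : ({r} : Set V) ∪ VS P = VS P := by
      apply Set.union_eq_self_of_subset_left
      rintro v rfl
      exact ha ▸ a_mem P
    have hc3 : 3 ≤ P.walk.length ∧ (P.walk.length = 3 → ∃ s : Finset V, s.card ≤ 2 ∧
        ∀ v ∈ P.walk.support, v ≠ r → v ∈ s) := by
      rcases P with ⟨a, b, w, hlen, he⟩
      dsimp only at *
      subst hab
      have hc : w.IsCycle := by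
        rcases he with h | ⟨h, hc⟩
        · exact absurd rfl h.1
        · simpa using hc
      refine ⟨hc.three_le_length, fun h3 => ⟨w.support.tail.toFinset.erase r, ?_, ?_⟩⟩
      · have m1 : a ∈ w.support.tail := by
          have hnil : ¬ w.Nil := hc.not_nil
          exact SimpleGraph.Walk.end_mem_tail_support hnil
        rw [Finset.card_erase_of_mem (by simpa [← ha] using m1)]
        have := List.toFinset_card_le w.support.tail
        have h4 : w.support.tail.length = 3 := by simp [h3]
        omega
      · intro v hv hvr
        rw [Finset.mem_erase, List.mem_toFinset]
        refine ⟨hvr, ?_⟩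
        rw [← w.cons_tail_support] at hv
        rcases List.mem_cons.1 hv with h | h
        · exact absurd (h.trans ha) hvr
        · exact h
    obtain ⟨hc3, hcs⟩ := hc3
    have htwo : ∀ x : V, ∃ z ∈ VS P, z ≠ x := by
      intro x
      by_cases hx : P.a = x
      · have : ∃ y ∈ P.walk.support, y ≠ P.a := by
          rcases P with ⟨a, b, w, hlen, he⟩
          dsimp only at *
          cases w with
          | nil => exact absurd hlen (by simp)
          | cons h p => exact ⟨_, by simp, h.ne'⟩
        obtain ⟨y, hy, hne⟩ := this
        exact ⟨y, hy, hx ▸ hne⟩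
      · exact ⟨P.a, a_mem P, hx⟩
    have hv' := v1.2
    rw [hU] at hv'
    obtain ⟨l', c1, c2, c3, c4⟩ := main_open h2 _ (VS P) l rfl hv' htwo (fun u v huv => by
      have := v3 s(u, v) huv
      rw [AllE_cons, List.mem_append] at this
      rcases this with h | h
      · exact Or.inr ⟨P.walk.fst_mem_support_of_mem_edges h,
          P.walk.snd_mem_support_of_mem_edges h⟩
      · exact Or.inl h)
    have hperm : (AllE (P :: l')).Perm (AllE (P :: l)) := by
      rw [AllE_cons, AllE_cons]; exact c3.append_left _
    have hevc : evc (P :: l') ≤ evc (P :: l) := by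
      rw [evc_cons, evc_cons]; omega
    by_cases h4 : 4 ≤ P.walk.length
    · exact fin r P l' ⟨v1.1, by rw [hU]; exact c1⟩ c2 hperm hevc h4
    have h3 : P.walk.length = 3 := by omega
    cases l' with
    | nil =>
      exfalso
      obtain ⟨s, hs1, hs2⟩ := hcs h3
      have : G.neighborFinset r ⊆ s := by
        intro w hw
        have hadj : G.Adj r w := by simpa using hw
        have := hperm.mem_iff.2 (v3 s(r, w) hadj)
        have h5 : s(r, w) ∈ P.walk.edges := by simpa [AllE] using this
        exact hs2 w (P.walk.snd_mem_support_of_mem_edges h5) hadj.ne'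
      have := Finset.card_le_card this
      rw [SimpleGraph.card_neighborFinset_eq_degree] at this
      have := hdeg r
      omega
    | cons Q l'' =>
      have e1 : AllE (P :: Q :: l'') = AllE [P, Q] ++ AllE l'' := by simp [AllE]
      have hnd := hperm.nodup_iff.2 v2
      rw [e1] at hnd
      obtain ⟨A, B, d1, d2, d3, d4, d5, d6, d7⟩ := tri P Q hab h3 c1.1 (c2 Q (by simp))
        (List.nodup_append'.1 hnd).1
      have hAU : ({A.a} : Set V) ∪ VS A = VS A := by
        apply Set.union_eq_self_of_subset_left
        rintro v rfl
        exact a_mem A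
      refine fin A.a A (B :: l'') ⟨d2.1, d2.2.1, ?_⟩ ?_ ?_ ?_ d4
      · rw [hAU, d5]; exact c1.2
      · intro X hX
        rcases List.mem_cons.1 hX with h | h
        · rw [h]; exact d3
        · exact c2 X (by simp [h])
      · refine List.Perm.trans ?_ hperm
        have e2 : AllE (A :: B :: l'') = AllE [A, B] ++ AllE l'' := by simp [AllE]
        rw [e1, e2]
        exact d6.append_right _
      · refine le_trans ?_ hevc
        rw [evc_pair, evc_pair] at d7
        simp only [evc_cons]
        omega

end EarPf

/-- Every 2-vertex-connected simple graph of minimum degree at least `3`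
has an open ear-decomposition with exactly `φ(G)` even ears whose first ear is long. -/
theorem statement_2 {V : Type*} [Fintype V] [DecidableEq V] (G : SimpleGraph V)
    [DecidableRel G.Adj]
    (h2 : TwoVertexConnected G) (hdeg : ∀ v : V, 3 ≤ G.degree v) :
    ∃ D : EarDecomp G, D.IsOpen ∧ D.evenEars = phi G ∧
      ∃ h : 0 < D.ears.length, (D.ears.get ⟨0, h⟩).IsLong := by
  have hne : {n | ∃ D : EarDecomp G, D.evenEars = n}.Nonempty := by
    obtain ⟨D⟩ := EarPf.exists_decomp h2 hdeg
    exact ⟨_, D, rfl⟩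
  obtain ⟨D, hD⟩ := Nat.sInf_mem hne
  obtain ⟨D', h1, h3, h4⟩ := EarPf.assemble h2 hdeg D
  refine ⟨D', h1, le_antisymm ?_ ?_, h4⟩
  · rw [hD] at h3; exact h3
  · exact Nat.sInf_le ⟨D', rfl⟩
end
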